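/- arXiv:1106.6041 — 2 statements merged into one kernel-verified Lean document; each statement's English description precedes it below -/
import Mathlib

section
/- Let n ≥ 1 and let a_1, …, a_n : ℝ → ℝ be functions of class C^n. Suppose that for every t ∈ ℝ the monic polynomial P(t)(x) = x^n + Σ_{j=1}^n (-1)^j a_j(t) x^{n-j} is hyperbolic, i.e. all its complex roots are real. Then there exist differentiable functions λ_1, …, λ_n : ℝ → ℝ whose derivatives are locally bounded, such that for every t ∈ ℝ one has P(t)(x) = ∏_{j=1}^n (x - λ_j(t)) for all x (Bronshtein's theorem). -/
open Polynomial Filter Topology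

/-- polynomial with given coefficients up to degree n -/
noncomputable def hp (n : ℕ) (e : ℕ → ℝ) : ℝ[X] := ∑ k ∈ Finset.range (n+1), C (e k) * X ^ k

lemma hp_coeff (n : ℕ) (e : ℕ → ℝ) (k : ℕ) : (hp n e).coeff k = if k ≤ n then e k else 0 := by
  simp [hp, Polynomial.coeff_C_mul, Polynomial.coeff_X_pow]

lemma hp_congr {n : ℕ} {e f : ℕ → ℝ} (h : ∀ k ≤ n, e k = f k) : hp n e = hp n f := by
  ext k; rw [hp_coeff, hp_coeff]; split_ifs with hk
  · exact h k hk
  · rfl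

lemma hp_natDegree_le (n : ℕ) (e : ℕ → ℝ) : (hp n e).natDegree ≤ n := by
  rw [Polynomial.natDegree_le_iff_coeff_eq_zero]
  intro k hk
  rw [hp_coeff, if_neg (by omega)]

lemma hp_eval (n : ℕ) (e : ℕ → ℝ) (x : ℝ) :
    (hp n e).eval x = ∑ k ∈ Finset.range (n+1), e k * x ^ k := by
  simp [hp, Polynomial.eval_finsetSum]

lemma eq_hp (n : ℕ) (p : ℝ[X]) (h : p.natDegree ≤ n) : p = hp n p.coeff := by
  ext k; rw [hp_coeff]; split_ifs with hk
  · rfl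
  · exact Polynomial.coeff_eq_zero_of_natDegree_lt (by omega)

lemma splits_reflect_prod (s : Multiset ℝ) : ∀ N, s.card ≤ N →
    Splits (reflect N (s.map (fun a => X - C a)).prod) := by
  induction s using Multiset.induction with
  | empty =>
    intro N _
    simp only [Multiset.map_zero, Multiset.prod_zero]
    rw [reflect_one]
    exact Splits.X_pow N
  | cons a s ih =>
    intro N hN
    obtain ⟨M, rfl⟩ : ∃ M, N = 1 + M := ⟨N - 1, by simp at hN; omega⟩
    rw [Multiset.map_cons, Multiset.prod_cons, reflect_mul]
    · refine Splits.mul (Splits.of_natDegree_le_one ?_) (ih M (by simp at hN; omega))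
      refine (natDegree_reflect_le).trans ?_
      simp
    · simp
    · rw [natDegree_multiset_prod_X_sub_C_eq_card]; simp at hN; omega

lemma splits_reflect {p : ℝ[X]} (hp : Splits p) (N : ℕ) (hN : p.natDegree ≤ N) :
    Splits (reflect N p) := by
  obtain ⟨s, hs⟩ := splits_iff_exists_multiset.1 hp
  rw [hs, reflect_C_mul]
  by_cases h0 : p = 0
  · simp [h0]
  refine Splits.C_mul (splits_reflect_prod s N ?_) _
  rw [hs, natDegree_C_mul (by simpa using h0), natDegree_multiset_prod_X_sub_C_eq_card] at hN
  exact hN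

lemma splits_hp_rev {n : ℕ} {e : ℕ → ℝ} (h : Splits (hp n e)) : Splits (hp n (fun k => e (n - k))) := by
  have := splits_reflect h n (hp_natDegree_le n e)
  convert this using 1
  ext k
  rw [coeff_reflect, hp_coeff, hp_coeff]
  by_cases hk : k ≤ n
  · rw [if_pos hk, revAt_le hk, if_pos (by omega)]
  · rw [if_neg hk, revAt_eq_self_of_lt (by omega), if_neg hk]

lemma splits_derivative {p : ℝ[X]} (h : Splits p) : Splits (derivative p) := by
  by_cases hd : p.natDegree ≤ 0
  · rw [natDegree_eq_zero.1 (Nat.le_zero.1 hd) |>.choose_spec.symm]; simp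
  rw [splits_iff_card_roots]
  have h1 := card_roots_le_derivative p
  have h2 := card_roots' (derivative p)
  have h3 := natDegree_derivative_lt (p := p) (by omega)
  have h4 := splits_iff_card_roots.1 h
  omega

lemma splits_hp_trunc {m : ℕ} {e : ℕ → ℝ} (h : Splits (hp (m+1) e)) :
    Splits (hp m (fun k => ((m:ℝ) + 1 - k) * e k)) := by
  have h1 := splits_hp_rev h
  have h2 := splits_derivative h1
  rw [eq_hp m (derivative _) (by
    have := natDegree_derivative_le (hp (m+1) (fun k => e (m + 1 - k)))
    have h' := hp_natDegree_le (m+1) (fun k => e (m + 1 - k))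
    omega)] at h2
  have h3 := splits_hp_rev h2
  convert h3 using 1
  refine hp_congr fun k hk => ?_
  rw [coeff_derivative, hp_coeff, if_pos (by omega)]
  have : m + 1 - (m - k + 1) = k := by omega
  rw [this]
  push_cast [hk]
  ring

lemma splits_hp_scale {n : ℕ} {e : ℕ → ℝ} (h : Splits (hp n e)) (c r : ℝ) :
    Splits (hp n (fun k => c * r ^ k * e k)) := by
  have h1 := (h.comp_of_natDegree_le_one (g := C r * X) (by
    refine (natDegree_C_mul_le _ _).trans ?_; simp)).C_mul c
  have e1 : hp n (fun k => c * r ^ k * e k) = C c * (hp n e).comp (C r * X) := ?_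
  · rw [e1]; exact h1
  ext k
  rw [coeff_C_mul, comp_C_mul_X_coeff, hp_coeff, hp_coeff]
  split_ifs <;> ring

lemma sumsq_aux (s : Multiset ℝ) : (s.map (fun x => x^2)).sum = s.esymm 1 ^2 - 2 * s.esymm 2 := by
  induction s using Multiset.induction with
  | empty => simp [Multiset.esymm, Multiset.powersetCard_zero_right]
  | cons a s ih =>
    have h2 : (a ::ₘ s).esymm 2 = s.esymm 2 + a * s.esymm 1 := by
      simp [Multiset.esymm, Multiset.powersetCard_cons, Multiset.powersetCard_one]
      have := Multiset.sum_map_mul_left (s := s) (a := a) (f := fun x => x)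
      simpa using this
    have h1 : (a ::ₘ s).esymm 1 = a + s.esymm 1 := by
      simp [Multiset.esymm, Multiset.powersetCard_one, add_comm]
    rw [Multiset.map_cons, Multiset.sum_cons, ih, h1, h2]
    ring

/-- each root z satisfies e_n^2 z^2 ≤ h -/
lemma hp_roots {n : ℕ} {e : ℕ → ℝ} (h : Splits (hp (n+2) e)) (hn : e (n+2) ≠ 0) :
    0 ≤ e (n+1)^2 - 2 * e (n+2) * e n ∧
    ∀ z ∈ (hp (n+2) e).roots, e (n+2)^2 * z^2 ≤ e (n+1)^2 - 2 * e (n+2) * e n := by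
  set p := hp (n+2) e with hpdef
  have hdeg : p.natDegree = n+2 := by
    refine le_antisymm (hp_natDegree_le _ _) (le_natDegree_of_ne_zero ?_)
    rw [hpdef, hp_coeff]; simpa using hn
  have hcard : p.roots.card = p.natDegree := splits_iff_card_roots.1 h
  have hl : p.leadingCoeff = e (n+2) := by
    rw [leadingCoeff, hdeg, hpdef, hp_coeff]; simp
  have c1 := coeff_eq_esymm_roots_of_card hcard (k := n+1) (by omega)
  have c0 := coeff_eq_esymm_roots_of_card hcard (k := n) (by omega)
  rw [hl, hdeg, hpdef, hp_coeff, ← hpdef, if_pos (by omega)] at c1 c0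
  have e1 : n + 2 - (n+1) = 1 := by omega
  have e0 : n + 2 - n = 2 := by omega
  rw [e1] at c1
  rw [e0] at c0
  have hs := sumsq_aux p.roots
  have key : e (n+1)^2 - 2 * e (n+2) * e n = e (n+2)^2 * (p.roots.map (fun x => x^2)).sum := by
    rw [hs, c1, c0]; ring
  have hpos : ∀ s : Multiset ℝ, 0 ≤ (s.map (fun x => x^2)).sum := fun s =>
    Multiset.sum_nonneg (by simp only [Multiset.mem_map]; rintro _ ⟨x, _, rfl⟩; positivity)
  rw [key]
  refine ⟨mul_nonneg (sq_nonneg _) (hpos _), fun z hz => ?_⟩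
  refine mul_le_mul_of_nonneg_left ?_ (sq_nonneg _)
  obtain ⟨s, hs⟩ := Multiset.exists_cons_of_mem hz
  rw [hs]
  simp only [Multiset.map_cons, Multiset.sum_cons]
  linarith [hpos s]

lemma hp_coeff_bound {n : ℕ} {e : ℕ → ℝ} (h : Splits (hp n e)) (hn : e n ≠ 0) (B : ℝ)
    (hB : ∀ z ∈ (hp n e).roots, |z| ≤ B) (k : ℕ) (hk : k ≤ n) :
    |e k| ≤ |e n| * (B ^ (n - k) * n.choose k) := by
  set p := hp n e with hpdef
  have hdeg : p.natDegree = n := by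
    refine le_antisymm (hp_natDegree_le _ _) (le_natDegree_of_ne_zero ?_)
    rw [hpdef, hp_coeff]; simpa using hn
  have hl : p.leadingCoeff = e n := by
    rw [leadingCoeff, hdeg, hpdef, hp_coeff]; simp
  have hq : (C (e n)⁻¹ * p).Monic := by
    rw [← hl]; exact Polynomial.monic_C_mul_of_mul_leadingCoeff_eq_one (by rw [hl]; field_simp)
  have hdq : (C (e n)⁻¹ * p).natDegree = n := by
    rw [natDegree_C_mul (inv_ne_zero hn), hdeg]
  have := coeff_le_of_roots_le (p := C (e n)⁻¹ * p) (f := RingHom.id ℝ) (B := B) k hq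
    (by simpa using h.C_mul _) (by
      rw [Polynomial.map_id, roots_C_mul _ (inv_ne_zero hn)]; exact hB)
  rw [Polynomial.map_id, hdq, coeff_C_mul, hpdef, hp_coeff, if_pos hk, Real.norm_eq_abs, abs_mul, abs_inv] at this
  rw [inv_mul_le_iff₀ (abs_pos.2 hn)] at this
  exact this


lemma mvt_abs {f : ℝ → ℝ} (hf : Differentiable ℝ f) {a b B : ℝ} (hB : ∀ t ∈ Set.Icc a b, |deriv f t| ≤ B)
    {x y : ℝ} (hx : x ∈ Set.Icc a b) (hy : y ∈ Set.Icc a b) : |f y - f x| ≤ B * |y - x| :=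
  Convex.norm_image_sub_le_of_norm_deriv_le (f := f) (s := Set.Icc a b)
    (fun t _ => hf t) hB (convex_Icc a b) hx hy

lemma differentiable_iteratedDeriv' {f : ℝ → ℝ} {n j : ℕ} (hf : ContDiff ℝ n f) (hj : j < n) :
    Differentiable ℝ (iteratedDeriv j f) :=
  hf.differentiable_iteratedDeriv j (by exact_mod_cast hj)

lemma interp1 (j : ℕ) : ∃ K : ℝ, 0 ≤ K ∧ ∀ f : ℝ → ℝ, ContDiff ℝ j f → ∀ a b A : ℝ, a < b →
    (∀ t ∈ Set.Icc a b, |f t| ≤ A) → ∃ ξ ∈ Set.Icc a b, |iteratedDeriv j f ξ| ≤ K * A / (b - a) ^ j := by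
  induction j with
  | zero =>
    refine ⟨1, zero_le_one, fun f _ a b A hab h => ⟨a, ⟨le_rfl, hab.le⟩, ?_⟩⟩
    simpa using h a ⟨le_rfl, hab.le⟩
  | succ j ih =>
    obtain ⟨K, hK, ih⟩ := ih
    refine ⟨6 * 3 ^ j * K, by positivity, fun f hf a b A hab h => ?_⟩
    have hfj : ContDiff ℝ j f := hf.of_le (by exact_mod_cast Nat.le_succ j)
    set L := b - a with hL
    have hLpos : 0 < L := by linarith
    obtain ⟨x, hx, hx'⟩ := ih f hfj a (a + L/3) A (by linarith)
      (fun t ht => h t ⟨ht.1, by linarith [ht.2]⟩)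
    obtain ⟨y, hy, hy'⟩ := ih f hfj (b - L/3) b A (by linarith)
      (fun t ht => h t ⟨by linarith [ht.1], ht.2⟩)
    have hxy : L/3 ≤ y - x := by linarith [hx.2, hy.1]
    have hdiff := differentiable_iteratedDeriv' hf (Nat.lt_succ_self j)
    obtain ⟨ξ, hξ, hξ'⟩ := exists_deriv_eq_slope (iteratedDeriv j f) (show x < y by linarith)
      hdiff.continuous.continuousOn hdiff.differentiableOn
    refine ⟨ξ, ⟨by linarith [hx.1, hξ.1], by linarith [hy.2, hξ.2]⟩, ?_⟩
    rw [iteratedDeriv_succ, hξ', abs_div, abs_of_pos (show 0 < y - x by linarith)]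
    have e1 : a + L/3 - a = L/3 := by ring
    have e2 : b - (b - L/3) = L/3 := by ring
    rw [e1] at hx'
    rw [e2] at hy'
    have hnum : |iteratedDeriv j f y - iteratedDeriv j f x| ≤ 2 * (K * A / (L/3)^j) := by
      calc _ ≤ |iteratedDeriv j f y| + |iteratedDeriv j f x| := abs_sub _ _
        _ ≤ _ := by linarith
    calc _ ≤ 2 * (K * A / (L/3)^j) / (L/3) := by
            apply div_le_div₀ _ hnum (by positivity) hxy
            exact (abs_nonneg _).trans hnum
      _ = _ := by
        rw [div_pow]; field_simp; ring

lemma interp2 (n i : ℕ) (hi : i ≤ n) : ∃ K : ℝ, 0 ≤ K ∧ ∀ f : ℝ → ℝ, ContDiff ℝ n f → ∀ A : ℝ,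
    (∀ t ∈ Set.Icc (-1:ℝ) 1, |f t| ≤ A) → (∀ t ∈ Set.Icc (-1:ℝ) 1, |iteratedDeriv n f t| ≤ A) →
    ∀ t ∈ Set.Icc (-1:ℝ) 1, |iteratedDeriv (n - i) f t| ≤ K * A := by
  induction i with
  | zero => exact ⟨1, zero_le_one, fun f _ A _ h t ht => by simpa using h t ht⟩
  | succ i ih =>
    obtain ⟨K, hK, ih⟩ := ih (by omega)
    obtain ⟨j, hj⟩ : ∃ j, n - i = j + 1 := ⟨n - i - 1, by omega⟩
    have hj' : n - (i+1) = j := by omega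
    rw [hj']
    obtain ⟨K', hK', h1⟩ := interp1 j
    refine ⟨K' / 2 ^ j + 2 * K, by positivity, fun f hf A h0 hn t ht => ?_⟩
    have ih := ih f hf A h0 hn
    rw [hj] at ih
    obtain ⟨ξ, hξ, hξ'⟩ := h1 f (hf.of_le (by exact_mod_cast (by omega : j ≤ n))) (-1) 1 A (by norm_num) h0
    have hm := mvt_abs (differentiable_iteratedDeriv' hf (show j < n by omega))
      (by simpa only [iteratedDeriv_succ] using ih) hξ ht
    have hA : 0 ≤ K * A := (abs_nonneg _).trans (ih t ht)
    have hd : |t - ξ| ≤ 2 := by rw [abs_le]; constructor <;> linarith [ht.1, ht.2, hξ.1, hξ.2]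
    have e : (1:ℝ) - -1 = 2 := by norm_num
    rw [e] at hξ'
    have := abs_sub_abs_le_abs_sub (iteratedDeriv j f t) (iteratedDeriv j f ξ)
    have h3 : K * A * |t - ξ| ≤ K * A * 2 := mul_le_mul_of_nonneg_left hd hA
    calc _ ≤ K' * A / 2 ^ j + K * A * 2 := by linarith
      _ = _ := by ring

lemma interp (n : ℕ) : ∃ K : ℝ, 0 ≤ K ∧ ∀ f : ℝ → ℝ, ContDiff ℝ n f → ∀ A : ℝ,
    (∀ t ∈ Set.Icc (-1:ℝ) 1, |f t| ≤ A) → (∀ t ∈ Set.Icc (-1:ℝ) 1, |iteratedDeriv n f t| ≤ A) →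
    ∀ j ≤ n, ∀ t ∈ Set.Icc (-1:ℝ) 1, |iteratedDeriv j f t| ≤ K * A := by
  choose! K hK h using interp2 n
  refine ⟨∑ i ∈ Finset.range (n+1), K i, Finset.sum_nonneg fun i hi => hK i (by simpa [Nat.lt_succ_iff] using hi),
    fun f hf A h0 hn j hj t ht => ?_⟩
  have := h (n - j) (by omega) f hf A h0 hn t ht
  rw [show n - (n - j) = j by omega] at this
  refine this.trans (mul_le_mul_of_nonneg_right ?_ ((abs_nonneg _).trans (h0 t ht)))
  exact Finset.single_le_sum (f := K) (fun i hi => hK i (by simpa [Nat.lt_succ_iff] using hi))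
    (by simp)

lemma iteratedDeriv_scale {f : ℝ → ℝ} {j : ℕ} (hf : ContDiff ℝ j f) (c r t : ℝ) :
    iteratedDeriv j (fun t => c * f (r * t)) t = c * r ^ j * iteratedDeriv j f (r * t) := by
  rw [iteratedDeriv_const_mul_field, iteratedDeriv_comp_const_mul hf]
  ring

lemma landau {h : ℝ → ℝ} (hh : ContDiff ℝ 2 h) {B κ ρ : ℝ} 
    (hB : ∀ t ∈ Set.Icc (-1:ℝ) 1, |iteratedDeriv 2 h t| ≤ B) (h0 : ∀ t ∈ Set.Icc (-1:ℝ) 1, 0 ≤ h t)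
    (hρ : 0 < ρ) (hρ1 : ρ ≤ 1) (hκ : h 0 ≤ κ * ρ^2) : ∀ t ∈ Set.Icc (-ρ) ρ, h t ≤ (2 * κ + 2 * B) * ρ^2 := by
  have hB0 : 0 ≤ B := (abs_nonneg _).trans (hB 0 (by simp))
  have hd : Differentiable ℝ h := hh.differentiable (by norm_num)
  have hd1 : Differentiable ℝ (deriv h) := by
    simpa using differentiable_iteratedDeriv' (n := 2) (j := 1) hh (by norm_num)
  have e2 : iteratedDeriv 2 h = deriv (deriv h) := by
    rw [iteratedDeriv_succ, iteratedDeriv_one]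
  have key : ∀ t ∈ Set.Icc (-ρ) ρ, |h t - h 0 - deriv h 0 * t| ≤ B * ρ ^ 2 := by
    intro t ht
    have hd' : Differentiable ℝ (fun t => h t - deriv h 0 * t) := by fun_prop
    have := mvt_abs (f := fun t => h t - deriv h 0 * t) hd' (a := -ρ) (b := ρ) (B := B * ρ) (fun s hs => by
      have : deriv (fun t => h t - deriv h 0 * t) s = deriv h s - deriv h 0 := by
        rw [deriv_fun_sub (hd s) (by fun_prop)]
        simp
      rw [this]
      have := mvt_abs hd1 (a := -1) (b := 1) (B := B) (by rw [← e2]; exact hB) (x := 0) (y := s) (by simp)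
        ⟨by linarith [hs.1], by linarith [hs.2]⟩
      refine this.trans (mul_le_mul_of_nonneg_left ?_ hB0)
      rw [sub_zero, abs_le]; exact hs) (x := 0) (y := t) ⟨by linarith, by linarith⟩ ht
    have e : h t - h 0 - deriv h 0 * t = (h t - deriv h 0 * t) - (h 0 - deriv h 0 * 0) := by ring
    rw [e]
    refine this.trans ?_
    rw [sub_zero]
    calc B * ρ * |t| ≤ B * ρ * ρ := mul_le_mul_of_nonneg_left (abs_le.2 ht) (by positivity)
      _ = _ := by ring
  intro t ht
  have k1 := abs_le.1 (key ρ ⟨by linarith, le_rfl⟩)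
  have k2 := abs_le.1 (key (-ρ) ⟨le_rfl, by linarith⟩)
  have k3 := abs_le.1 (key t ht)
  have p1 := h0 ρ ⟨by linarith, hρ1⟩
  have p2 := h0 (-ρ) ⟨by linarith, by linarith⟩
  have hder : |deriv h 0 * t| ≤ κ * ρ^2 + B * ρ^2 := by
    rw [abs_mul]
    calc |deriv h 0| * |t| ≤ |deriv h 0| * ρ := mul_le_mul_of_nonneg_left (abs_le.2 ht) (abs_nonneg _)
      _ = |deriv h 0 * ρ| := by rw [abs_mul, abs_of_pos hρ]
      _ ≤ _ := by
        rw [abs_le]; constructor <;> linarith [k1.1, k1.2, k2.1, k2.2]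
  linarith [(abs_le.1 hder).2, k3.2]

lemma peano {f : ℝ → ℝ} {m : ℕ} (hf : ContDiff ℝ m f) (h0 : ∀ j < m, iteratedDeriv j f 0 = 0) :
    Tendsto (fun t => f t / t ^ m) (𝓝[≠] 0) (𝓝 (iteratedDeriv m f 0 / m.factorial)) := by
  have h := Real.taylor_tendsto convex_univ (Set.mem_univ (0:ℝ)) hf.contDiffOn
  rw [nhdsWithin_univ] at h
  have h2 : ∀ t : ℝ, taylorWithinEval f m Set.univ 0 t = iteratedDeriv m f 0 / m.factorial * t ^ m := by
    intro t
    rw [taylor_within_apply, Finset.sum_range_succ, Finset.sum_eq_zero]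
    · simp [iteratedDerivWithin_univ]; ring
    · intro j hj
      rw [iteratedDerivWithin_univ, h0 j (by simpa using hj)]; simp
  have h3 := (h.mono_left (nhdsWithin_le_nhds (s := {0}ᶜ))).add_const (iteratedDeriv m f 0 / m.factorial)
  rw [zero_add] at h3
  refine h3.congr' ?_
  filter_upwards [self_mem_nhdsWithin] with t ht
  have ht : t ≠ 0 := ht
  rw [h2, sub_zero]
  field_simp
  ring

lemma hbound {f g k : ℝ → ℝ} (hf : ContDiff ℝ 2 f) (hg : ContDiff ℝ 2 g) (hk : ContDiff ℝ 2 k) {M t : ℝ}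
    (bf : ∀ j ≤ 2, |iteratedDeriv j f t| ≤ M) (bg : ∀ j ≤ 2, |iteratedDeriv j g t| ≤ M)
    (bk : ∀ j ≤ 2, |iteratedDeriv j k t| ≤ M) :
    ContDiff ℝ 2 (fun t => f t ^ 2 - 2 * g t * k t) ∧
    |iteratedDeriv 2 (fun t => f t ^ 2 - 2 * g t * k t) t| ≤ 12 * M ^ 2 := by
  have hmul : ∀ {u v : ℝ → ℝ}, ContDiff ℝ 2 u → ContDiff ℝ 2 v → (∀ j ≤ 2, |iteratedDeriv j u t| ≤ M) →
      (∀ j ≤ 2, |iteratedDeriv j v t| ≤ M) → |iteratedDeriv 2 (u * v) t| ≤ 4 * M ^ 2 := by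
    intro u v hu hv bu bv
    rw [iteratedDeriv_mul hu.contDiffAt hv.contDiffAt]
    simp only [Finset.sum_range_succ, Finset.sum_range_zero]
    have hM : 0 ≤ M := (abs_nonneg _).trans (bu 0 (by norm_num))
    have e : ∀ i j, i ≤ 2 → j ≤ 2 → |iteratedDeriv i u t * iteratedDeriv j v t| ≤ M * M := fun i j hi hj => by
      rw [abs_mul]; exact mul_le_mul (bu i hi) (bv j hj) (abs_nonneg _) hM
    have a0 := abs_le.1 (e 0 2 (by norm_num) (by norm_num))
    have a1 := abs_le.1 (e 1 1 (by norm_num) (by norm_num))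
    have a2 := abs_le.1 (e 2 0 (by norm_num) (by norm_num))
    norm_num [Nat.choose] at a0 a1 a2 ⊢
    rw [abs_le]
    constructor <;> nlinarith
  refine ⟨by fun_prop, ?_⟩
  have e : (fun t => f t ^ 2 - 2 * g t * k t) = f * f - fun t => 2 * (g * k) t := by
    ext t; simp; ring
  have c1 : ContDiff ℝ 2 (f * f) := hf.mul hf
  have c2 : ContDiff ℝ 2 (fun t => 2 * (g * k) t) := contDiff_const.mul (hg.mul hk)
  rw [e, iteratedDeriv_sub c1.contDiffAt c2.contDiffAt, iteratedDeriv_const_mul_field]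
  have a := abs_le.1 (hmul hf hf bf bf)
  have b := abs_le.1 (hmul hg hk bg bk)
  rw [abs_le]
  constructor <;> linarith


structure Cls (n : ℕ) (M c : ℝ) (E : ℕ → ℝ → ℝ) : Prop where
  smooth : ∀ k ≤ n, ContDiff ℝ n (E k)
  bd : ∀ k ≤ n, ∀ j ≤ n, ∀ t ∈ Set.Icc (-1:ℝ) 1, |iteratedDeriv j (E k) t| ≤ M
  spl : ∀ t, Splits (hp n (fun k => E k t))
  lead : ∀ t ∈ Set.Icc (-1:ℝ) 1, c ≤ |E n t|

def Concl (μ : ℕ) (K : ℝ) (E : ℕ → ℝ → ℝ) : Prop :=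
  ∀ k ≤ μ, (∀ j, j + k < μ → iteratedDeriv j (E k) 0 = 0) ∧
    |iteratedDeriv (μ - k) (E k) 0| ≤ K * |E μ 0|

lemma Concl.mono {μ : ℕ} {K K' : ℝ} {E : ℕ → ℝ → ℝ} (h : Concl μ K E) (hK : K ≤ K') : Concl μ K' E :=
  fun k hk => ⟨(h k hk).1, (h k hk).2.trans (mul_le_mul_of_nonneg_right hK (abs_nonneg _))⟩

lemma Cls.ne {n : ℕ} {M c : ℝ} {E : ℕ → ℝ → ℝ} (hE : Cls n M c E) (hc : 0 < c) {t : ℝ}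
    (ht : t ∈ Set.Icc (-1:ℝ) 1) : E n t ≠ 0 := by
  have := hE.lead t ht
  intro h0
  rw [h0, abs_zero] at this
  linarith

noncomputable def resc (N : ℕ) (ρ : ℝ) (E : ℕ → ℝ → ℝ) : ℕ → ℝ → ℝ :=
  fun k t => ((ρ ^ N)⁻¹ * ρ ^ k) * E k (ρ * t)

lemma scaled_bound (n : ℕ) (M c κ : ℝ) (hc : 0 < c) (hM : 0 ≤ M) (hκ : 0 ≤ κ) :
    ∃ M1 : ℝ, 0 ≤ M1 ∧ ∀ E, Cls (n+2) M c E → ∀ ρ : ℝ, 0 < ρ → ρ ≤ 1 →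
      E (n+1) 0 ^ 2 - 2 * E (n+2) 0 * E n 0 ≤ κ * ρ ^ 2 →
      ∀ k ≤ n+2, ∀ j ≤ n+2, ∀ t ∈ Set.Icc (-1:ℝ) 1, |iteratedDeriv j (resc (n+2) ρ E k) t| ≤ M1 := by
  obtain ⟨K, hK, hint⟩ := interp (n+2)
  set D : ℝ := 2 * κ + 2 * (12 * M^2) with hD
  have hD0 : 0 ≤ D := by positivity
  set R : ℝ := (D + 1) / c with hR
  have hR0 : 0 ≤ R := by positivity
  set A : ℝ := M * ((1 + R) ^ (n+2) * 2 ^ (n+2)) + M with hA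
  refine ⟨K * A, by positivity, fun E hE ρ hρ hρ1 h0 k hk => ?_⟩
  have ndk : ∀ k ≤ n+2, ContDiff ℝ 2 (E k) := fun k hk =>
    (hE.smooth k hk).of_le (by exact_mod_cast (by omega : 2 ≤ n + 2))
  have bdk : ∀ t ∈ Set.Icc (-1:ℝ) 1, ∀ k ≤ n+2, ∀ j ≤ 2, |iteratedDeriv j (E k) t| ≤ M :=
    fun t ht k hk j hj => hE.bd k hk j (by omega) t ht
  have hb := fun t ht => hbound (ndk (n+1) (by omega)) (ndk (n+2) (by omega)) (ndk n (by omega)) (M := M) (t := t)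
    (bdk t ht _ (by omega)) (bdk t ht _ (by omega)) (bdk t ht _ (by omega))
  have hmem : ∀ t ∈ Set.Icc (-1:ℝ) 1, ρ * t ∈ Set.Icc (-ρ) ρ := fun t ht =>
    ⟨by nlinarith [ht.1], by nlinarith [ht.2]⟩
  have hmem1 : ∀ t ∈ Set.Icc (-ρ) ρ, t ∈ Set.Icc (-1:ℝ) 1 := fun t ht =>
    ⟨by linarith [ht.1], by linarith [ht.2]⟩
  have hl := landau (hb 0 (by simp)).1 (fun t ht => (hb t ht).2)
    (fun t ht => (hp_roots (hE.spl t) (hE.ne hc ht)).1) hρ hρ1 h0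
  have hroot : ∀ s ∈ Set.Icc (-ρ) ρ, ∀ z ∈ (hp (n+2) (fun k => E k s)).roots, |z| ≤ R * ρ := by
    intro s hs z hz
    have h1 := (hp_roots (hE.spl s) (hE.ne hc (hmem1 s hs))).2 z hz
    have h2 := hl s hs
    have h3 : c ^ 2 ≤ E (n+2) s ^ 2 := by
      rw [← sq_abs (E (n+2) s)]
      exact pow_le_pow_left₀ hc.le (hE.lead s (hmem1 s hs)) 2
    have h4 : c^2 * z^2 ≤ D * ρ^2 :=
      (mul_le_mul_of_nonneg_right h3 (sq_nonneg z)).trans (h1.trans h2)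
    have h5 : (c * z)^2 ≤ ((D+1) * ρ)^2 := by
      have : D * ρ^2 ≤ (D+1)^2 * ρ^2 := mul_le_mul_of_nonneg_right (by nlinarith) (sq_nonneg _)
      nlinarith
    have h6 := abs_le_of_sq_le_sq h5 (by positivity)
    rw [hR, div_mul_eq_mul_div, le_div_iff₀ hc]
    have h7 : |z| * c = |c * z| := by rw [abs_mul, abs_of_pos hc, mul_comm]
    rw [h7]
    exact h6
  refine hint _ ?_ A ?_ ?_
  · have := hE.smooth k hk
    unfold resc
    fun_prop
  · intro t ht
    have hs := hmem t ht
    have h1 := hp_coeff_bound (hE.spl (ρ * t)) (hE.ne hc (hmem1 _ hs)) _ (hroot _ hs) k hk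
    have h2 : |E (n+2) (ρ * t)| ≤ M := by simpa using hE.bd (n+2) le_rfl 0 (by omega) _ (hmem1 _ hs)
    have e1 : ρ ^ (n+2) = ρ ^ k * ρ ^ (n + 2 - k) := by rw [← pow_add]; congr 1; omega
    have e2 : (ρ ^ (n+2))⁻¹ * ρ ^ k = (ρ ^ (n+2-k))⁻¹ := by rw [e1]; field_simp
    have h3 : R ^ (n+2-k) ≤ (1+R)^(n+2) :=
      (pow_le_pow_left₀ hR0 (by linarith) _).trans (pow_le_pow_right₀ (by linarith) (by omega))
    have h4 : ((n+2).choose k : ℝ) ≤ 2 ^ (n+2) := by exact_mod_cast Nat.choose_le_two_pow (n+2) k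
    simp only [resc, e2]
    rw [abs_mul, abs_inv, abs_of_pos (by positivity : 0 < ρ ^ (n+2-k)), inv_mul_le_iff₀ (by positivity)]
    calc _ ≤ |E (n+2) (ρ*t)| * ((R * ρ) ^ (n + 2 - k) * ((n+2).choose k)) := h1
      _ = ρ ^ (n+2-k) * (|E (n+2) (ρ*t)| * (R ^ (n + 2 - k) * ((n+2).choose k))) := by rw [mul_pow]; ring
      _ ≤ ρ ^ (n+2-k) * (M * ((1+R) ^ (n + 2) * 2^(n+2))) := by gcongr
      _ ≤ _ := by gcongr; rw [hA]; linarith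
  · intro t ht
    unfold resc
    rw [iteratedDeriv_scale (hE.smooth k hk)]
    have h1 := hE.bd k hk (n+2) le_rfl _ (hmem1 _ (hmem t ht))
    have e2 : (ρ ^ (n+2))⁻¹ * ρ ^ k * ρ ^ (n+2) = ρ ^ k := by field_simp
    rw [e2, abs_mul, abs_of_pos (by positivity : 0 < ρ ^ k)]
    calc _ ≤ 1 * M := mul_le_mul (pow_le_one₀ hρ.le hρ1) h1 (abs_nonneg _) zero_le_one
      _ ≤ A := by
        have : 0 ≤ M * ((1 + R) ^ (n+2) * 2 ^ (n+2)) := by positivity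
        rw [hA]; linarith

lemma descend {μ N : ℕ} {E : ℕ → ℝ → ℝ} (hE : ∀ k ≤ μ, ContDiff ℝ μ (E k)) {ρ δ G K : ℝ} {g : ℕ → ℝ}
    (hρ : 0 < ρ) (hδ : 0 < δ) (hδ1 : δ ≤ 1) (hg1 : ∀ k ≤ μ, 1 ≤ g k) (hg2 : ∀ k ≤ μ, g k ≤ G) (hK : 0 ≤ K)
    (h : Concl μ K (fun k t => g k * resc N ρ E k (δ * t))) : Concl μ (K * G / δ ^ μ) E := by
  intro k hk
  have hder : ∀ k ≤ μ, ∀ j ≤ μ, iteratedDeriv j (fun t => g k * resc N ρ E k (δ * t)) 0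
      = g k * δ ^ j * ((ρ ^ N)⁻¹ * ρ ^ k * ρ ^ j) * iteratedDeriv j (E k) 0 := by
    intro k hk j hj
    have h1 : ContDiff ℝ j (E k) := (hE k hk).of_le (by exact_mod_cast hj)
    have h2 : ContDiff ℝ j (resc N ρ E k) := by unfold resc; fun_prop
    rw [iteratedDeriv_scale h2]
    unfold resc
    rw [iteratedDeriv_scale h1]
    simp only [mul_zero]
    ring
  have hg : 0 < g k := by linarith [hg1 k hk]
  have hgμ : 0 < g μ := by linarith [hg1 μ le_rfl]
  constructor
  · intro j hj
    have := (h k hk).1 j hj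
    rw [hder k hk j (by omega)] at this
    refine (mul_eq_zero.1 this).resolve_left (by positivity)
  · have h1 := (h k hk).2
    rw [hder k hk (μ - k) (by omega)] at h1
    have h0 := hder μ le_rfl 0 (by omega)
    simp only [iteratedDeriv_zero, pow_zero, mul_one] at h0
    beta_reduce at h1
    rw [h0] at h1
    have e1 : ρ ^ μ = ρ ^ k * ρ ^ (μ - k) := by rw [← pow_add]; congr 1; omega
    rw [abs_mul, abs_mul (g μ * _), abs_of_pos (by positivity : 0 < g k * δ ^ (μ - k) * ((ρ ^ N)⁻¹ * ρ ^ k * ρ ^ (μ - k))),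
      abs_of_pos (by positivity : 0 < g μ * ((ρ ^ N)⁻¹ * ρ ^ μ))] at h1
    rw [e1] at h1
    have h2 : g k * δ ^ (μ - k) * |iteratedDeriv (μ - k) (E k) 0| ≤ K * (g μ * |E μ 0|) := by
      have hp : 0 < (ρ ^ N)⁻¹ * ρ ^ k * ρ ^ (μ - k) := by positivity
      refine le_of_mul_le_mul_left ?_ hp
      calc _ = _ := by ring
        _ ≤ _ := h1
        _ = _ := by ring
    rw [div_mul_eq_mul_div, le_div_iff₀ (by positivity)]
    calc |iteratedDeriv (μ - k) (E k) 0| * δ ^ μ ≤ |iteratedDeriv (μ - k) (E k) 0| * (1 * δ ^ (μ - k)) := by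
          rw [one_mul]
          exact mul_le_mul_of_nonneg_left (pow_le_pow_of_le_one hδ.le hδ1 (by omega)) (abs_nonneg _)
      _ ≤ |iteratedDeriv (μ - k) (E k) 0| * (g k * δ ^ (μ - k)) := by gcongr; exact hg1 k hk
      _ ≤ K * (g μ * |E μ 0|) := by linarith
      _ ≤ K * (G * |E μ 0|) := by gcongr; exact hg2 μ le_rfl
      _ = _ := by ring

lemma trunc_class {N d : ℕ} {F : ℕ → ℝ → ℝ} {M1 c1 G δ : ℝ} {g : ℕ → ℝ} (hd : d < N)
    (hF : ∀ k ≤ N, ContDiff ℝ N (F k))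
    (hb : ∀ k ≤ N, ∀ j ≤ N, ∀ t ∈ Set.Icc (-1:ℝ) 1, |iteratedDeriv j (F k) t| ≤ M1)
    (hs : ∀ t, Splits (hp d (fun k => g k * F k t))) (hg1 : ∀ k ≤ d, 1 ≤ g k) (hg2 : ∀ k ≤ d, g k ≤ G)
    (hδ : 0 < δ) (hδ1 : δ ≤ 1) (hδ2 : M1 * δ ≤ c1 / 2) (h0 : c1 ≤ |F d 0|) :
    Cls d (G * M1) (c1/2) (fun k t => g k * F k (δ * t)) := by
  have hmem : ∀ t ∈ Set.Icc (-1:ℝ) 1, δ * t ∈ Set.Icc (-1:ℝ) 1 := fun t ht =>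
    ⟨by nlinarith [ht.1, ht.2], by nlinarith [ht.1, ht.2]⟩
  have hM1 : 0 ≤ M1 := (abs_nonneg _).trans (hb 0 (by omega) 0 (by omega) 0 (by simp))
  refine ⟨fun k hk => ?_, fun k hk j hj t ht => ?_, fun t => hs _, fun t ht => ?_⟩
  · have : ContDiff ℝ d (F k) := (hF k (by omega)).of_le (by exact_mod_cast hd.le)
    fun_prop
  · have : ContDiff ℝ j (F k) := (hF k (by omega)).of_le (by exact_mod_cast (by omega : j ≤ N))
    rw [iteratedDeriv_scale this, abs_mul, abs_mul, abs_of_pos (by linarith [hg1 k hk] : 0 < g k),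
      abs_of_pos (by positivity : 0 < δ ^ j)]
    have h1 := hb k (by omega) j (by omega) _ (hmem t ht)
    have h2 : δ ^ j ≤ 1 := pow_le_one₀ hδ.le hδ1
    have h3 := hg1 k hk
    have h4 := hg2 k hk
    have h5 : 0 ≤ G := by linarith
    calc g k * δ ^ j * _ ≤ G * 1 * M1 := by gcongr
      _ = _ := by ring
  · have hdiff : Differentiable ℝ (F d) := (hF d hd.le).differentiable (by
      have : N ≠ 0 := by omega
      exact_mod_cast this)
    have h1 := mvt_abs hdiff (a := -1) (b := 1) (B := M1) (fun t ht => by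
      simpa [iteratedDeriv_one] using hb d hd.le 1 (by omega) t ht) (x := 0) (y := δ * t) (by simp) (hmem t ht)
    have h2 : |δ * t - 0| ≤ δ := by
      rw [sub_zero, abs_mul, abs_of_pos hδ]
      have : |t| ≤ 1 := abs_le.2 ht
      nlinarith
    have h3 : M1 * |δ * t - 0| ≤ M1 * δ := mul_le_mul_of_nonneg_left h2 hM1
    have h4 := abs_sub_abs_le_abs_sub (F d 0) (F d (δ * t))
    rw [abs_sub_comm] at h4
    have h5 : c1 / 2 ≤ |F d (δ * t)| := by linarith
    rw [abs_mul, abs_of_pos (by linarith [hg1 d le_rfl] : 0 < g d)]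
    nlinarith [hg1 d le_rfl, abs_nonneg (F d (δ * t))]

set_option maxHeartbeats 4000000 in
theorem main_est (n : ℕ) : ∀ M c : ℝ, 0 < c → ∃ K : ℝ, 0 ≤ K ∧ ∀ E, Cls n M c E →
    ∀ μ ≤ n, (∀ k < μ, E k 0 = 0) → E μ 0 ≠ 0 → Concl μ K E := by
  induction n using Nat.strong_induction_on with
  | _ n ih =>
  intro M c hc
  have zero_in : (0:ℝ) ∈ Set.Icc (-1:ℝ) 1 := by simp
  by_cases hM : 0 ≤ M
  swap
  · refine ⟨0, le_rfl, fun E hE => ?_⟩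
    exact absurd ((abs_nonneg _).trans (hE.bd 0 (by omega) 0 (by omega) 0 zero_in)) hM
  match n, ih with
  | 0, _ =>
    refine ⟨1, zero_le_one, fun E hE μ hμ _ _ k hk => ?_⟩
    obtain rfl : μ = 0 := by omega
    obtain rfl : k = 0 := by omega
    simp
  | 1, _ =>
    refine ⟨1 + M / c, by positivity, fun E hE μ hμ hz hne k hk => ⟨fun j hj => ?_, ?_⟩⟩
    · obtain ⟨rfl, rfl⟩ : j = 0 ∧ k = 0 := by omega
      simpa using hz 0 (by omega)
    · by_cases hkμ : k = μ
      · subst hkμ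
        simp only [Nat.sub_self, iteratedDeriv_zero]
        have : 0 ≤ M / c := by positivity
        nlinarith [abs_nonneg (E k 0)]
      · obtain ⟨rfl, rfl⟩ : k = 0 ∧ μ = 1 := by omega
        have h1 := hE.bd 0 (by omega) 1 (by omega) 0 zero_in
        have h2 := hE.lead 0 zero_in
        have h3 : M ≤ M / c * |E 1 0| := by
          rw [div_mul_eq_mul_div, le_div_iff₀ hc]; gcongr
        rw [Nat.sub_zero]
        nlinarith [abs_nonneg (E 1 0)]
  | n + 2, ih =>
    set κ : ℝ := 1 + 3 * M^2 with hκ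
    obtain ⟨M1, hM1, hsb⟩ := scaled_bound n M c κ hc hM (by positivity)
    set c1 : ℝ := min (1/2) (1 / (4 * (M + 1))) with hc1
    have hc1p : 0 < c1 := by rw [hc1]; positivity
    set G : ℝ := ((n:ℝ) + 2) * (n + 2) with hG
    set δ : ℝ := c1 / (2 * (M1 + c1)) with hδ
    have hδp : 0 < δ := by positivity
    have hδ1 : δ ≤ 1 := by rw [hδ, div_le_one (by positivity)]; linarith
    have hδ2 : M1 * δ ≤ c1 / 2 := by
      rw [hδ, ← mul_div_assoc, div_le_div_iff₀ (by positivity) (by norm_num)]; nlinarith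
    obtain ⟨K0, hK0, ih0⟩ := ih n (by omega) (G * M1) (c1/2) (by positivity)
    obtain ⟨K1, hK1, ih1⟩ := ih (n+1) (by omega) (G * M1) (c1/2) (by positivity)
    have hGp : 0 < G := by positivity
    refine ⟨M1 / c + (K0 + K1) * G / δ ^ (n+2), by positivity, fun E hE μ hμ hz hne => ?_⟩
    have h00 : ∀ k ≤ n+2, |E k 0| ≤ M := fun k hk => by
      simpa using hE.bd k hk 0 (by omega) 0 zero_in
    rcases Nat.lt_or_ge μ (n+2) with hlt | hge
    · -- not all roots vanish
      obtain ⟨hh0, hroots⟩ := hp_roots (hE.spl 0) (hE.ne hc zero_in)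
      set h := E (n+1) 0 ^ 2 - 2 * E (n+2) 0 * E n 0 with hh
      have hpos : 0 < h := by
        rcases hh0.lt_or_eq with h1 | h1
        · exact h1
        exfalso
        have := hp_coeff_bound (hE.spl 0) (hE.ne hc zero_in) 0 (fun z hz => by
          have h2 := hroots z hz
          rw [← h1] at h2
          have h3 : 0 < E (n+2) 0 ^ 2 := by
            have := hE.ne hc zero_in
            positivity
          have h4 : z^2 ≤ 0 := by
            by_contra hcon
            push Not at hcon
            nlinarith [mul_pos h3 hcon]
          have : z = 0 := by nlinarith
          simp [this]) μ hμ
        rw [zero_pow (by omega)] at this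
        simp only [zero_mul, mul_zero] at this
        exact hne (abs_nonpos_iff.1 this)
      have hle : h ≤ 3 * M ^ 2 := by
        have a1 := abs_le.1 (h00 (n+1) (by omega))
        have a2 : |E (n+2) 0 * E n 0| ≤ M * M := by
          rw [abs_mul]; exact mul_le_mul (h00 _ (by omega)) (h00 _ (by omega)) (abs_nonneg _) hM
        have a3 := abs_le.1 a2
        rw [hh]
        nlinarith
      set ρ : ℝ := min 1 (Real.sqrt h) with hρ
      have hρp : 0 < ρ := lt_min one_pos (Real.sqrt_pos.2 hpos)
      have hρ1 : ρ ≤ 1 := min_le_left _ _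
      have hρh : ρ ^ 2 ≤ h := by
        have : ρ ≤ Real.sqrt h := min_le_right _ _
        calc ρ ^ 2 ≤ Real.sqrt h ^ 2 := pow_le_pow_left₀ hρp.le this 2
          _ = h := Real.sq_sqrt hpos.le
      have hκρ : h ≤ κ * ρ ^ 2 := by
        rcases le_total 1 (Real.sqrt h) with h1 | h1
        · rw [hρ, min_eq_left h1, hκ]; linarith
        · rw [hρ, min_eq_right h1, Real.sq_sqrt hpos.le, hκ]; nlinarith [sq_nonneg M]
      have hb := hsb E hE ρ hρp hρ1 hκρ
      have hF : ∀ k ≤ n+2, ContDiff ℝ ((n+2 : ℕ)) (resc (n+2) ρ E k) := fun k hk => by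
        have := hE.smooth k hk
        unfold resc; fun_prop
      have hspl : ∀ t, Splits (hp (n+2) (fun k => resc (n+2) ρ E k t)) := fun t =>
        splits_hp_scale (hE.spl (ρ * t)) _ ρ
      have hspl1 := fun t => splits_hp_trunc (hspl t)
      have hspl0 := fun t => splits_hp_trunc (hspl1 t)
      -- values at zero
      have hr : ∀ k, resc (n+2) ρ E k 0 = (ρ ^ (n+2))⁻¹ * ρ ^ k * E k 0 := fun k => by simp [resc]
      have hE' : ∀ k ≤ μ, ContDiff ℝ μ (E k) := fun k hk =>
        (hE.smooth k (by omega)).of_le (by exact_mod_cast hμ)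
      have hδpow : δ ^ (n+2) ≤ δ ^ μ := pow_le_pow_of_le_one hδp.le hδ1 hμ
      have hfin : ∀ K, 0 ≤ K → K ≤ K0 + K1 → K * G / δ ^ μ ≤ M1 / c + (K0 + K1) * G / δ ^ (n+2) := by
        intro K hK hKK
        have : K * G / δ ^ μ ≤ (K0 + K1) * G / δ ^ (n+2) := by gcongr
        have h2 : 0 ≤ M1 / c := by positivity
        linarith
      have hdich : c1 ≤ |resc (n+2) ρ E (n+1) 0| ∨ c1 ≤ |resc (n+2) ρ E n 0| := by
        by_contra hcon
        push Not at hcon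
        obtain ⟨hc1', hc0'⟩ := hcon
        have b1 : |resc (n+2) ρ E (n+1) 0| < 1/2 := hc1'.trans_le (min_le_left _ _)
        have b0 : |resc (n+2) ρ E n 0| < 1/(4*(M+1)) := hc0'.trans_le (min_le_right _ _)
        have e1 : resc (n+2) ρ E (n+1) 0 = E (n+1) 0 / ρ := by
          rw [hr, pow_succ ρ (n+1)]; field_simp
        have e0 : resc (n+2) ρ E n 0 = E n 0 / ρ^2 := by
          rw [hr, pow_add ρ n 2]; field_simp
        have key : 1 ≤ (E (n+1) 0 / ρ) ^ 2 - 2 * E (n+2) 0 * (E n 0 / ρ^2) := by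
          have : (E (n+1) 0 / ρ) ^ 2 - 2 * E (n+2) 0 * (E n 0 / ρ^2) = h / ρ^2 := by
            rw [hh]; field_simp
          rw [this, le_div_iff₀ (by positivity)]; linarith
        rw [← e1, ← e0] at key
        have a2 : |E (n+2) 0 * resc (n+2) ρ E n 0| ≤ M * (1/(4*(M+1))) := by
          rw [abs_mul]; exact mul_le_mul (h00 _ (by omega)) b0.le (abs_nonneg _) hM
        have a4 : M * (1/(4*(M+1))) ≤ 1/4 := by
          rw [mul_one_div, div_le_div_iff₀ (by positivity) (by norm_num)]; linarith
        have a3 := abs_le.1 a2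
        have a1 := abs_lt.1 b1
        nlinarith
      rcases hdich with hd | hd
      · have hμd : μ ≤ n + 1 := by omega
        set g : ℕ → ℝ := fun k => ((n+1 : ℕ):ℝ) + 1 - k with hg
        have hg1 : ∀ k ≤ n+1, 1 ≤ g k := fun k hk => by
          have : (k:ℝ) ≤ (n+1:ℕ) := by exact_mod_cast hk
          simp only [hg]; linarith
        have hg2 : ∀ k ≤ n+1, g k ≤ G := fun k hk => by
          have : (0:ℝ) ≤ k := by positivity
          have hn : (0:ℝ) ≤ n := by positivity
          simp only [hg, hG]; push_cast; nlinarith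
        have hcls := trunc_class (g := g) (G := G) (by omega : n+1 < n+2) hF hb hspl1 hg1 hg2 hδp hδ1 hδ2 hd
        have hres := ih1 _ hcls μ hμd (fun k hk => by simp [hr, hz k hk]) (by
          have := hg1 μ hμd
          simp only [mul_zero, hr]
          have : g μ ≠ 0 := by linarith
          positivity)
        exact (descend hE' hρp hδp hδ1 (fun k hk => hg1 k (by omega)) (fun k hk => hg2 k (by omega)) hK1 hres).mono
          (hfin _ hK1 (by linarith))
      · have hμd : μ ≤ n := by
          by_contra hcon
          have : E n 0 = 0 := hz n (by omega)
          rw [hr, this, mul_zero, abs_zero] at hd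
          linarith
        set g : ℕ → ℝ := fun k => ((n:ℝ) + 1 - k) * (((n+1 : ℕ):ℝ) + 1 - k) with hg
        have hg1 : ∀ k ≤ n, 1 ≤ g k := fun k hk => by
          have : (k:ℝ) ≤ n := by exact_mod_cast hk
          simp only [hg]; push_cast; nlinarith
        have hg2 : ∀ k ≤ n, g k ≤ G := fun k hk => by
          have h0 : (0:ℝ) ≤ k := by positivity
          have : (k:ℝ) ≤ n := by exact_mod_cast hk
          simp only [hg, hG]; push_cast; 
          apply mul_le_mul <;> linarith
        have hspl0' : ∀ t, Splits (hp n (fun k => g k * resc (n+2) ρ E k t)) := fun t => by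
          have := hspl0 t
          simp only [← mul_assoc] at this
          exact this
        have hcls := trunc_class (g := g) (G := G) (by omega : n < n+2) hF hb hspl0' hg1 hg2 hδp hδ1 hδ2 hd
        have hres := ih0 _ hcls μ hμd (fun k hk => by simp [hr, hz k hk]) (by
          have := hg1 μ hμd
          simp only [mul_zero, hr]
          have : g μ ≠ 0 := by linarith
          positivity)
        exact (descend hE' hρp hδp hδ1 (fun k hk => hg1 k (by omega)) (fun k hk => hg2 k (by omega)) hK0 hres).mono
          (hfin _ hK0 (by linarith))
    · obtain rfl : μ = n + 2 := by omega
      have hh0 : E (n+1) 0 ^ 2 - 2 * E (n+2) 0 * E n 0 = 0 := by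
        rw [hz (n+1) (by omega), hz n (by omega)]; ring
      have hall : ∀ ρ : ℝ, 0 < ρ → ρ ≤ 1 → ∀ k ≤ n+2, ∀ j ≤ n+2,
          ρ ^ (k + j) * |iteratedDeriv j (E k) 0| ≤ M1 * ρ ^ (n+2) := by
        intro ρ hρ hρ1 k hk j hj
        have := hsb E hE ρ hρ hρ1 (by rw [hh0]; positivity) k hk j hj 0 zero_in
        unfold resc at this
        rw [iteratedDeriv_scale ((hE.smooth k hk).of_le (by exact_mod_cast hj)), mul_zero, abs_mul,
          abs_of_pos (by positivity)] at this
        rw [pow_add]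
        calc _ = ρ ^ (n+2) * ((ρ ^ (n+2))⁻¹ * ρ ^ k * ρ ^ j * |iteratedDeriv j (E k) 0|) := by field_simp
          _ ≤ ρ ^ (n+2) * M1 := by gcongr
          _ = _ := by ring
      intro k hk
      constructor
      · intro j hj
        by_contra hcon
        have hp : 0 < |iteratedDeriv j (E k) 0| := abs_pos.2 hcon
        set y := |iteratedDeriv j (E k) 0|
        set ρ : ℝ := min 1 (y / (2 * (M1 + 1))) with hρ
        have hρp : 0 < ρ := by rw [hρ]; positivity
        have h1 := hall ρ hρp (min_le_left _ _) k hk j (by omega)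
        have h2 : ρ ≤ y / (2 * (M1+1)) := min_le_right _ _
        rw [le_div_iff₀ (by positivity)] at h2
        have h3 : ρ ^ (n+2) ≤ ρ ^ (k+j) * ρ := by
          rw [← pow_succ]
          exact pow_le_pow_of_le_one hρp.le (min_le_left _ _) (by omega)
        have h4 : ρ ^ (k+j) * y ≤ ρ ^ (k+j) * (M1 * ρ) := by
          calc _ ≤ _ := h1
            _ ≤ M1 * (ρ ^ (k+j) * ρ) := by gcongr
            _ = _ := by ring
        have h5 := le_of_mul_le_mul_left h4 (by positivity)
        nlinarith
      · have h1 := hall 1 one_pos le_rfl k hk (n + 2 - k) (by omega)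
        simp only [one_pow, one_mul, mul_one] at h1
        have h2 := hE.lead 0 zero_in
        have h3 : M1 ≤ M1 / c * |E (n+2) 0| := by
          rw [div_mul_eq_mul_div, le_div_iff₀ hc]; gcongr
        have h4 : 0 ≤ (K0 + K1) * G / δ ^ (n+2) := by positivity
        nlinarith [abs_nonneg (E (n+2) 0), mul_nonneg h4 (abs_nonneg (E (n+2) 0))]


lemma perm_of_prod {ι : Type*} [Fintype ι] [DecidableEq ι] (v d d' : ι → ℝ)
    (h : ∀ x w : ℝ, ∏ i with v i = x, (w - d i) = ∏ i with v i = x, (w - d' i)) :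
    ∃ π : Equiv.Perm ι, ∀ i, v (π i) = v i ∧ d' (π i) = d i := by
  have hm : ∀ x, (Finset.univ.filter (fun i => v i = x)).val.map d =
      (Finset.univ.filter (fun i => v i = x)).val.map d' := by
    intro x
    have hp : ∏ i with v i = x, (X - C (d i)) = ∏ i with v i = x, (X - C (d' i)) := by
      refine Polynomial.funext fun w => ?_
      simpa [eval_prod] using h x w
    have hr : ∀ e : ι → ℝ, (∏ i with v i = x, (X - C (e i))).roots =
        (Finset.univ.filter (fun i => v i = x)).val.map e := by
      intro e
      rw [← roots_multiset_prod_X_sub_C (Multiset.map e _), Multiset.map_map]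
      rfl
    rw [← hr, ← hr, hp]
  have hc : ∀ c : ℝ × ℝ, Nonempty ({i // (v i, d i) = c} ≃ {i // (v i, d' i) = c}) := by
    intro c
    refine ⟨Fintype.equivOfCardEq ?_⟩
    have := congrArg (Multiset.count c.2) (hm c.1)
    rw [Multiset.count_map, Multiset.count_map] at this
    rw [Fintype.card_subtype, Fintype.card_subtype]
    have key : ∀ e : ι → ℝ, (Finset.univ.filter (fun i => (v i, e i) = c)).card =
        Multiset.card (Multiset.filter (fun a => c.2 = e a) (Finset.univ.filter (fun i => v i = c.1)).val) := by
      intro e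
      rw [← Finset.filter_val, Finset.card_val, Finset.filter_filter]
      congr 1
      ext i
      simp [Prod.ext_iff, eq_comm]
    rw [key, key, this]
  let f := fun c => Classical.choice (hc c)
  refine ⟨Equiv.ofFiberEquiv (f := fun i => (v i, d i)) (g := fun i => (v i, d' i)) f, fun i => ?_⟩
  have := Equiv.ofFiberEquiv_map (f := fun i => (v i, d i)) (g := fun i => (v i, d' i)) f i
  simpa using this

lemma conv_mono {ι T : Type*} [Fintype ι] [LinearOrder ι] {l : Filter T} [l.NeBot] (u : T → ι → ℝ)
    (hm : ∀ᶠ t in l, Monotone (u t)) {R : ℝ} (hb : ∀ᶠ t in l, ∀ i, |u t i| ≤ R) (g : ℝ → ℝ)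
    (hl : ∀ w, Tendsto (fun t => ∏ i, (w - u t i)) l (𝓝 (g w))) :
    ∃ v : ι → ℝ, (∀ i, Tendsto (fun t => u t i) l (𝓝 (v i))) ∧ (∀ w, ∏ i, (w - v i) = g w) ∧ ∀ i, |v i| ≤ R := by
  have hK : IsCompact (Set.univ.pi (fun _ : ι => Set.Icc (-R) R)) := isCompact_univ_pi fun _ => isCompact_Icc
  have hle : ∀ᶠ x in map u l, x ∈ Set.univ.pi (fun _ : ι => Set.Icc (-R) R) := by
    rw [eventually_map]
    filter_upwards [hb] with t ht i _ using abs_le.1 (ht i)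
  have hcl : ∀ v, ClusterPt v (map u l) → Monotone v ∧ ∀ w, ∏ i, (w - v i) = g w := by
    intro v hv
    constructor
    · have h1 : ClusterPt v (𝓟 {f : ι → ℝ | Monotone f}) := hv.mono (by
        rw [le_principal_iff]
        exact hm)
      have h2 := mem_closure_iff_clusterPt.2 h1
      rw [IsClosed.closure_eq isClosed_monotone] at h2
      exact h2
    · intro w
      have hcont : Continuous (fun f : ι → ℝ => ∏ i, (w - f i)) := by fun_prop
      have h2 := hv.map hcont.continuousAt (tendsto_map (f := fun f : ι → ℝ => ∏ i, (w - f i)))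
      have h3 : map (fun f : ι → ℝ => ∏ i, (w - f i)) (map u l) ≤ 𝓝 (g w) := by
        rw [Filter.map_map]; exact hl w
      have h4 : NeBot (𝓝 (∏ i, (w - v i)) ⊓ 𝓝 (g w)) := h2.mono h3
      exact eq_of_nhds_neBot h4
  obtain ⟨v, hvK, hv⟩ := hK.exists_clusterPt (f := map u l) (le_principal_iff.2 hle)
  have ht : map u l ≤ 𝓝 v := by
    refine hK.le_nhds_of_unique_clusterPt hle fun y _ hy => ?_
    obtain ⟨m1, p1⟩ := hcl y hy
    obtain ⟨m2, p2⟩ := hcl v hv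
    obtain ⟨π, hπ⟩ := perm_of_prod (fun _ => 0) y v (fun x w => by
      by_cases hx : (0:ℝ) = x
      · simp [hx, p1, p2]
      · simp [hx])
    let e := Fintype.orderIsoFinOfCardEq ι rfl
    have h1 : Monotone ((v ∘ e) ∘ (e.toEquiv.trans (π.trans e.symm.toEquiv))) := by
      have : (v ∘ e) ∘ (e.toEquiv.trans (π.trans e.symm.toEquiv)) = y ∘ e := by
        ext i; simp [(hπ _).2]
      rw [this]; exact m1.comp e.monotone
    have h2 : Monotone ((v ∘ e) ∘ (Equiv.refl _)) := by
      simpa using m2.comp e.monotone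
    have h3 := Tuple.unique_monotone h1 h2
    ext i
    have := congrFun h3 (e.symm i)
    simpa [(hπ _).2] using this
  refine ⟨v, fun i => ?_, (hcl v hv).2, fun i => abs_le.2 (hvK i trivial)⟩
  exact (tendsto_pi_nhds.1 ht) i

lemma conv_anti {ι T : Type*} [Fintype ι] [LinearOrder ι] {l : Filter T} [l.NeBot] (u : T → ι → ℝ)
    (hm : ∀ᶠ t in l, Antitone (u t)) {R : ℝ} (hb : ∀ᶠ t in l, ∀ i, |u t i| ≤ R) (g : ℝ → ℝ)
    (hl : ∀ w, Tendsto (fun t => ∏ i, (w - u t i)) l (𝓝 (g w))) :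
    ∃ v : ι → ℝ, (∀ i, Tendsto (fun t => u t i) l (𝓝 (v i))) ∧ (∀ w, ∏ i, (w - v i) = g w) ∧ ∀ i, |v i| ≤ R := by
  have hneg : ∀ (f : ι → ℝ) (w : ℝ), ∏ i, (w - - f i) = (-1) ^ Fintype.card ι * ∏ i, (-w - f i) := by
    intro f w
    rw [Fintype.card, ← Finset.prod_const, ← Finset.prod_mul_distrib]
    refine Finset.prod_congr rfl fun i _ => by ring
  obtain ⟨v, h1, h2, h3⟩ := conv_mono (fun t i => - u t i) (by
    filter_upwards [hm] with t ht i j hij using neg_le_neg (ht hij)) (R := R) (by simpa using hb)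
    (fun w => (-1) ^ Fintype.card ι * g (-w)) (fun w => by
      simp only [hneg]
      exact (hl (-w)).const_mul _)
  refine ⟨fun i => - v i, fun i => by simpa using (h1 i).neg, fun w => ?_, by simpa using h3⟩
  rw [hneg, h2]
  rw [← mul_assoc, ← mul_pow]; simp


lemma local_zero {n : ℕ} {e : ℕ → ℝ} {L : Fin n → ℝ} {μ : ℕ} (hμ : μ = (Finset.univ.filter (fun i => L i = 0)).card)
    (h : ∀ u : ℝ, ∏ i, (u - L i) = ∑ k ∈ Finset.range (n+1), e k * u ^ k) :
    μ ≤ n ∧ (∀ k < μ, e k = 0) ∧ e μ ≠ 0 := by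
  have hμn : μ ≤ n := by
    rw [hμ]; simpa using Finset.card_le_univ (Finset.univ.filter (fun i => L i = 0))
  have hp : hp n e = X ^ μ * ∏ i with ¬ L i = 0, (X - C (L i)) := by
    refine Polynomial.funext fun u => ?_
    rw [hp_eval, ← h u, eval_mul, eval_prod, ← Finset.prod_filter_mul_prod_filter_not _ (fun i => L i = 0)]
    congr 1
    · rw [hμ, eval_pow, eval_X, ← Finset.prod_const]
      refine Finset.prod_congr rfl fun i hi => ?_
      rw [(Finset.mem_filter.1 hi).2, sub_zero]
    · simp
  have hc : ∀ k ≤ n, e k = (X ^ μ * ∏ i with ¬ L i = 0, (X - C (L i))).coeff k := fun k hk => by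
    rw [← hp, hp_coeff, if_pos hk]
  refine ⟨hμn, fun k hk => ?_, ?_⟩
  · rw [hc k (by omega), coeff_X_pow_mul', if_neg (by omega)]
  · rw [hc μ hμn, coeff_X_pow_mul', if_pos le_rfl, Nat.sub_self, coeff_zero_eq_eval_zero, eval_prod]
    refine Finset.prod_ne_zero_iff.2 fun i hi => ?_
    simpa using (Finset.mem_filter.1 hi).2

/-- convergence of the rescaled coefficients -/
lemma coef_lim {n μ : ℕ} {K : ℝ} {E : ℕ → ℝ → ℝ} (hμ : μ ≤ n) (hE : ∀ k ≤ n, ContDiff ℝ n (E k))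
    (hC : Concl μ K E) (k : ℕ) (hk : k ≤ μ) :
    ∃ e : ℝ, |e| ≤ K * |E μ 0| ∧ Tendsto (fun t => E k t / t ^ (μ - k)) (𝓝[≠] 0) (𝓝 e) := by
  obtain ⟨h1, h2⟩ := hC k hk
  refine ⟨_, ?_, peano ((hE k (by omega)).of_le (by exact_mod_cast (by omega : μ - k ≤ n)))
    (fun j hj => h1 j (by omega))⟩
  rw [abs_div, Nat.abs_cast]
  refine (div_le_self (abs_nonneg _) ?_).trans h2
  exact_mod_cast Nat.succ_le_of_lt (Nat.factorial_pos _)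

lemma root_bound {n μ : ℕ} {K : ℝ} {E : ℕ → ℝ → ℝ} (hK : 0 ≤ K) (hμ : μ ≤ n) (hE : ∀ k ≤ n, ContDiff ℝ n (E k))
    (hne : E μ 0 ≠ 0) (hC : Concl μ K E) {y : ℝ → ℝ} (hy : Tendsto y (𝓝 0) (𝓝 0))
    (hr : ∀ t, ∑ k ∈ Finset.range (n+1), E k t * y t ^ k = 0) :
    ∀ᶠ t in 𝓝[≠] (0:ℝ), |y t| ≤ (1 + 2 * (K + 1) * n) * |t| := by
  have hH : Tendsto (fun t => ∑ k ∈ Finset.Ico μ (n+1), E k t * y t ^ (k - μ)) (𝓝[≠] 0) (𝓝 (E μ 0)) := by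
    have : E μ 0 = ∑ k ∈ Finset.Ico μ (n+1), E k 0 * 0 ^ (k - μ) := by
      rw [Finset.sum_eq_single μ]
      · simp
      · intro b hb hb2
        have : b - μ ≠ 0 := by have := Finset.mem_Ico.1 hb; omega
        simp [this]
      · intro h; exact absurd (Finset.mem_Ico.2 ⟨le_rfl, by omega⟩) h
    rw [this]
    refine (tendsto_finsetSum _ fun k hk => ?_).mono_left nhdsWithin_le_nhds
    have := Finset.mem_Ico.1 hk
    exact ((hE k (by omega)).continuous.tendsto 0).mul (hy.pow _)
  have hpos : 0 < |E μ 0| := abs_pos.2 hne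
  have h1 : ∀ᶠ t in 𝓝[≠] (0:ℝ), |E μ 0| / 2 < |∑ k ∈ Finset.Ico μ (n+1), E k t * y t ^ (k - μ)| :=
    hH.abs.eventually (lt_mem_nhds (by linarith))
  have h2 : ∀ k ∈ Finset.range μ, ∀ᶠ t in 𝓝[≠] (0:ℝ), |E k t| ≤ (K+1) * |E μ 0| * |t| ^ (μ - k) := by
    intro k hk
    obtain ⟨e, he, ht⟩ := coef_lim hμ hE hC k (by have := Finset.mem_range.1 hk; omega)
    have := ht.abs.eventually (gt_mem_nhds (show |e| < (K+1) * |E μ 0| by nlinarith))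
    filter_upwards [this, self_mem_nhdsWithin] with t h3 h4
    have h4 : t ≠ 0 := h4
    rw [abs_div, abs_pow, div_lt_iff₀ (by positivity)] at h3
    exact h3.le
  have h2' := (Filter.eventually_all_finset _).2 h2
  filter_upwards [h1, h2', self_mem_nhdsWithin] with t a1 a2 a3
  have a3 : t ≠ 0 := a3
  have htp : 0 < |t| := abs_pos.2 a3
  by_contra hcon
  push Not at hcon
  set B := 2 * (K+1) * n with hB
  have hB0 : 0 ≤ B := by positivity
  have hty : |t| ≤ |y t| := by nlinarith
  have hy0 : 0 < |y t| := by linarith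
  have e1 := hr t
  rw [← Finset.sum_range_add_sum_Ico _ (by omega : μ ≤ n + 1)] at e1
  have e2 : ∑ k ∈ Finset.Ico μ (n+1), E k t * y t ^ k = y t ^ μ * ∑ k ∈ Finset.Ico μ (n+1), E k t * y t ^ (k - μ) := by
    rw [Finset.mul_sum]
    refine Finset.sum_congr rfl fun k hk => ?_
    have := Finset.mem_Ico.1 hk
    have : y t ^ k = y t ^ μ * y t ^ (k - μ) := by rw [← pow_add]; congr 1; omega
    rw [this]; ring
  rw [e2] at e1
  have e3 : |y t| ^ μ * |∑ k ∈ Finset.Ico μ (n+1), E k t * y t ^ (k - μ)| = |∑ k ∈ Finset.range μ, E k t * y t ^ k| := by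
    rw [← abs_pow, ← abs_mul, ← abs_neg]; congr 1; linarith
  by_cases hμ0 : μ = 0
  · subst hμ0
    simp only [Finset.range_zero, Finset.sum_empty, abs_zero, pow_zero, one_mul] at e3
    simp only [Nat.sub_zero] at e3 a1
    linarith
  have e4 : |∑ k ∈ Finset.range μ, E k t * y t ^ k| ≤ μ * ((K+1) * |E μ 0| * (|t| * |y t| ^ (μ - 1))) := by
    refine (Finset.abs_sum_le_sum_abs _ _).trans ?_
    refine (Finset.sum_le_card_nsmul _ _ ((K+1) * |E μ 0| * (|t| * |y t| ^ (μ - 1))) fun k hk => ?_).trans ?_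
    · have hkμ := Finset.mem_range.1 hk
      rw [abs_mul, abs_pow]
      calc _ ≤ (K+1) * |E μ 0| * |t| ^ (μ - k) * |y t| ^ k := by gcongr; exact a2 k hk
        _ = (K+1) * |E μ 0| * (|t| * (|t| ^ (μ - 1 - k) * |y t| ^ k)) := by
          have : |t| ^ (μ - k) = |t| * |t| ^ (μ - 1 - k) := by rw [← pow_succ']; congr 1; omega
          rw [this]; ring
        _ ≤ (K+1) * |E μ 0| * (|t| * (|y t| ^ (μ - 1 - k) * |y t| ^ k)) := by gcongr
        _ = _ := by rw [← pow_add]; congr 4; omega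
    · rw [Finset.card_range, nsmul_eq_mul]
  have e5 : |y t| ^ μ = |y t| ^ (μ - 1) * |y t| := by rw [← pow_succ]; congr 1; omega
  have e6 : |y t| ^ (μ - 1) * (|y t| * (|E μ 0| / 2)) ≤ |y t| ^ (μ - 1) * (μ * (K+1) * |E μ 0| * |t|) := by
    calc _ = |y t| ^ μ * (|E μ 0| / 2) := by rw [e5]; ring
      _ ≤ _ := by gcongr
      _ = _ := e3
      _ ≤ _ := e4
      _ = _ := by ring
  have e7 := le_of_mul_le_mul_left e6 (by positivity)
  have e8 : |E μ 0| * |y t| ≤ |E μ 0| * (2 * μ * (K+1) * |t|) := by linarith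
  have e9 := le_of_mul_le_mul_left e8 hpos
  have e10 : (μ:ℝ) ≤ n := by exact_mod_cast hμ
  have e11 : 2 * μ * (K+1) * |t| ≤ 2 * n * (K+1) * |t| := by gcongr
  rw [hB] at hcon
  linarith

lemma local_limits {n μ : ℕ} {K : ℝ} {E : ℕ → ℝ → ℝ} {L : ℝ → Fin n → ℝ} (hK : 0 ≤ K)
    (hE : ∀ k ≤ n, ContDiff ℝ n (E k))
    (hprod : ∀ t u : ℝ, ∏ i, (u - L t i) = ∑ k ∈ Finset.range (n+1), E k t * u ^ k)
    (hcont : ∀ i, ContinuousAt (fun t => L t i) 0) (hmono : ∀ t, Monotone (L t))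
    (hμ : μ = (Finset.univ.filter (fun i => L 0 i = 0)).card) (hC : Concl μ K E) :
    ∃ dp dm : Fin n → ℝ, (∀ i, L 0 i = 0 → Tendsto (fun t => L t i / t) (𝓝[>] 0) (𝓝 (dp i)) ∧
      Tendsto (fun t => L t i / t) (𝓝[<] 0) (𝓝 (dm i)) ∧ |dp i| ≤ 1 + 2 * (K + 1) * n ∧
      |dm i| ≤ 1 + 2 * (K + 1) * n) ∧
      ∀ w, ∏ i with L 0 i = 0, (w - dp i) = ∏ i with L 0 i = 0, (w - dm i) := by
  obtain ⟨hμn, hz, hne⟩ := local_zero hμ (hprod 0)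
  have hpm : 𝓝[>] (0:ℝ) ≤ 𝓝[≠] 0 := nhdsWithin_mono _ fun x hx => ne_of_gt hx
  have hmm : 𝓝[<] (0:ℝ) ≤ 𝓝[≠] 0 := nhdsWithin_mono _ fun x hx => ne_of_lt hx
  set B := 1 + 2 * (K + 1) * n with hB
  have hbd : ∀ i : {i // L 0 i = 0}, ∀ᶠ t in 𝓝[≠] (0:ℝ), |L t i / t| ≤ B := by
    intro i
    have := root_bound hK hμn hE hne hC (y := fun t => L t i) (by
      have := hcont i
      unfold ContinuousAt at this
      beta_reduce at this
      rwa [i.2] at this) (fun t => by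
        rw [← hprod]
        exact Finset.prod_eq_zero (Finset.mem_univ i.1) (sub_self _))
    filter_upwards [this, self_mem_nhdsWithin] with t h1 h2
    have h2 : t ≠ 0 := h2
    rw [abs_div, div_le_iff₀ (abs_pos.2 h2)]
    exact h1
  have hbd' := Filter.eventually_all.2 hbd
  -- limit of the cluster product
  have hlim : ∃ g : ℝ → ℝ, ∀ w, Tendsto (fun t => ∏ i : {i // L 0 i = 0}, (w - L t i / t)) (𝓝[≠] 0) (𝓝 (g w)) := by
    have : ∀ w, ∃ g, Tendsto (fun t => ∏ i : {i // L 0 i = 0}, (w - L t i / t)) (𝓝[≠] 0) (𝓝 g) := by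
      intro w
      have hnum : ∀ k ∈ Finset.range (n+1), ∃ e, Tendsto (fun t => E k t * (t * w) ^ k / t ^ μ) (𝓝[≠] 0) (𝓝 e) := by
        intro k hk
        have hk' := Finset.mem_range.1 hk
        rcases Nat.lt_or_ge μ k with hlt | hle
        · refine ⟨E k 0 * (0 ^ (k - μ) * w ^ k), ?_⟩
          have : Tendsto (fun t => E k t * (t ^ (k - μ) * w ^ k)) (𝓝[≠] 0) (𝓝 (E k 0 * (0 ^ (k - μ) * w ^ k))) := by
            have hc : Continuous (fun t => E k t * (t ^ (k - μ) * w ^ k)) := by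
              have := (hE k (by omega)).continuous
              fun_prop
            exact (hc.tendsto 0).mono_left nhdsWithin_le_nhds
          refine this.congr' ?_
          filter_upwards [self_mem_nhdsWithin] with t ht
          have ht : t ≠ 0 := ht
          have e : t ^ k = t ^ μ * t ^ (k - μ) := by rw [← pow_add]; congr 1; omega
          rw [mul_pow, e]; field_simp
        · obtain ⟨e, _, he⟩ := coef_lim hμn hE hC k hle
          refine ⟨e * w ^ k, (he.mul_const _).congr' ?_⟩
          filter_upwards [self_mem_nhdsWithin] with t ht
          have ht : t ≠ 0 := ht
          have e : t ^ μ = t ^ k * t ^ (μ - k) := by rw [← pow_add]; congr 1; omega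
          rw [mul_pow, e]; field_simp
      choose! e he using hnum
      have h1 := tendsto_finsetSum _ he
      have hden : Tendsto (fun t => ∏ i with ¬ L 0 i = 0, (t * w - L t i)) (𝓝[≠] 0)
          (𝓝 (∏ i with ¬ L 0 i = 0, (0 * w - L 0 i))) := by
        refine (tendsto_finsetProd _ fun i _ => ?_).mono_left nhdsWithin_le_nhds
        exact (tendsto_id.mul_const w).sub (hcont i)
      have hden0 : ∏ i with ¬ L 0 i = 0, (0 * w - L 0 i) ≠ 0 := by
        refine Finset.prod_ne_zero_iff.2 fun i hi => ?_
        simpa using (Finset.mem_filter.1 hi).2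
      refine ⟨_, (h1.div hden hden0).congr' ?_⟩
      filter_upwards [self_mem_nhdsWithin, hden.eventually_ne hden0] with t ht ht2
      have ht : t ≠ 0 := ht
      simp only [Pi.div_apply]
      rw [← Finset.sum_div, ← hprod, div_div, div_eq_iff (by positivity),
        ← Finset.prod_filter_mul_prod_filter_not _ (fun i => L 0 i = 0), ← mul_assoc]
      congr 1
      rw [← Finset.prod_subtype_eq_prod_filter, hμ, ← Finset.prod_const, ← Finset.prod_subtype_eq_prod_filter]
      simp only [Finset.subtype_univ]
      rw [← Finset.prod_mul_distrib]
      refine Finset.prod_congr rfl fun i _ => ?_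
      field_simp
    choose g hg using this
    exact ⟨g, hg⟩
  obtain ⟨g, hg⟩ := hlim
  obtain ⟨vp, p1, p2, p3⟩ := conv_mono (l := 𝓝[>] (0:ℝ)) (fun t (i : {i // L 0 i = 0}) => L t i / t) (by
    filter_upwards [self_mem_nhdsWithin] with t ht i j hij
    have ht : 0 < t := ht
    exact div_le_div_of_nonneg_right (hmono t hij) ht.le) (hpm hbd') g (fun w => (hg w).mono_left hpm)
  obtain ⟨vm, m1, m2, m3⟩ := conv_anti (l := 𝓝[<] (0:ℝ)) (fun t (i : {i // L 0 i = 0}) => L t i / t) (by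
    filter_upwards [self_mem_nhdsWithin] with t ht i j hij
    have ht : t < 0 := ht
    exact div_le_div_of_nonpos_of_le ht.le (hmono t hij)) (hmm hbd') g (fun w => (hg w).mono_left hmm)
  refine ⟨fun i => if h : L 0 i = 0 then vp ⟨i, h⟩ else 0, fun i => if h : L 0 i = 0 then vm ⟨i, h⟩ else 0,
    fun i hi => ?_, fun w => ?_⟩
  · simp only [hi, dif_pos]
    exact ⟨p1 ⟨i, hi⟩, m1 ⟨i, hi⟩, p3 _, m3 _⟩
  · have key : ∀ v : {i // L 0 i = 0} → ℝ, ∏ i with L 0 i = 0, (w - if h : L 0 i = 0 then v ⟨i, h⟩ else 0) =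
        ∏ i, (w - v i) := by
      intro v
      rw [← Finset.prod_subtype_eq_prod_filter]
      simp only [Finset.subtype_univ]
      refine Finset.prod_congr rfl fun i _ => ?_
      simp [i.2]
    rw [key, key, p2, m2]


lemma sorted_fun (m : Multiset ℝ) (n : ℕ) (h : m.card = n) :
    ∃ f : Fin n → ℝ, Monotone f ∧ Finset.univ.val.map f = m := by
  obtain ⟨l, rfl⟩ := Quot.exists_rep m
  have h' : l.length = n := h
  subst h'
  have e : Finset.univ.val.map l.get = (l : Multiset ℝ) := by
    rw [Fin.univ_val_map, List.ofFn_get]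
  refine ⟨l.get ∘ Tuple.sort l.get, Tuple.monotone_sort _, ?_⟩
  rw [← Multiset.map_map]
  have : Multiset.map (Tuple.sort l.get) Finset.univ.val = Finset.univ.val := by
    have := Finset.map_univ_equiv (Tuple.sort l.get)
    exact congrArg Finset.val this
  rw [this]; exact e

/-- the polynomial value -/
noncomputable def pv {n : ℕ} (a : Fin n → ℝ → ℝ) (t x : ℝ) : ℝ :=
  x ^ n + ∑ j : Fin n, (-1 : ℝ) ^ ((j : ℕ) + 1) * a j t * x ^ (n - ((j : ℕ) + 1))

lemma exists_roots {n : ℕ} (a : Fin n → ℝ → ℝ)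
    (hhyp : ∀ t : ℝ, ∀ z : ℂ, z ^ n + ∑ j : Fin n, (-1 : ℂ) ^ ((j : ℕ) + 1) * (a j t : ℂ) * z ^ (n - ((j : ℕ) + 1)) = 0 →
      z.im = 0) (t : ℝ) :
    ∃ f : Fin n → ℝ, Monotone f ∧ ∀ x, pv a t x = ∏ i, (x - f i) := by
  set q : ℝ[X] := ∑ j : Fin n, C ((-1 : ℝ) ^ ((j : ℕ) + 1) * a j t) * X ^ (n - ((j : ℕ) + 1)) with hq
  have hdeg : q.degree < n := by
    rw [hq, ← Polynomial.mem_degreeLT]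
    refine Submodule.sum_mem _ fun j _ => ?_
    rw [Polynomial.mem_degreeLT]
    refine lt_of_le_of_lt (degree_C_mul_X_pow_le _ _) ?_
    have h1 : n - ((j:ℕ)+1) < n := by have := j.2; omega
    exact Nat.cast_lt.2 h1
  have hmon : (X ^ n + q).Monic := monic_X_pow_add hdeg
  have hnat : (X ^ n + q).natDegree = n := by
    refine natDegree_eq_of_degree_eq_some ?_
    rw [degree_add_eq_left_of_degree_lt (by rwa [degree_X_pow]), degree_X_pow]
  have hspl : (X ^ n + q).Splits := by
    refine Splits.of_splits_map (algebraMap ℝ ℂ) (IsAlgClosed.splits _) fun z hz => ?_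
    have hz := (mem_roots'.1 hz).2
    have him := hhyp t z (by
      simp only [IsRoot, hq, eval_map, eval₂_add, eval₂_pow, eval₂_X, eval₂_finsetSum, eval₂_mul, eval₂_C] at hz
      simpa using hz)
    exact ⟨z.re, by apply Complex.ext <;> simp [him]⟩
  obtain ⟨f, hf, hfm⟩ := sorted_fun (X ^ n + q).roots n (by rw [← hspl.natDegree_eq_card_roots, hnat])
  refine ⟨f, hf, fun x => ?_⟩
  have h1 := hspl.eq_prod_roots
  rw [hmon.leadingCoeff, C_1, one_mul, ← hfm, Multiset.map_map] at h1
  have h2 := congrArg (eval x) h1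
  have h3 : (Multiset.map ((fun x => X - C x) ∘ f) Finset.univ.val).prod = ∏ i, (X - C (f i)) := rfl
  rw [h3, eval_prod] at h2
  simp only [hq, eval_add, eval_pow, eval_X, eval_finsetSum, eval_mul, eval_C, eval_sub] at h2
  exact h2

lemma root_le {n : ℕ} (a : Fin n → ℝ → ℝ) (t x : ℝ) (h : pv a t x = 0) : |x| ≤ 1 + ∑ j, |a j t| := by
  have hs : 0 ≤ ∑ j, |a j t| := Finset.sum_nonneg fun j _ => abs_nonneg _
  by_contra hcon
  push Not at hcon
  have hx1 : 1 ≤ |x| := by linarith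
  have e : |x| ^ n = |∑ j : Fin n, (-1 : ℝ) ^ ((j : ℕ) + 1) * a j t * x ^ (n - ((j : ℕ) + 1))| := by
    rw [← abs_pow, ← abs_neg]; congr 1; unfold pv at h; linarith
  rcases Nat.eq_zero_or_pos n with h0 | h0
  · subst h0; simp at e
  have e2 : |x| ^ n ≤ (∑ j, |a j t|) * |x| ^ (n - 1) := by
    rw [e, Finset.sum_mul]
    refine (Finset.abs_sum_le_sum_abs _ _).trans (Finset.sum_le_sum fun j _ => ?_)
    rw [abs_mul, abs_mul, abs_pow, abs_neg, abs_one, one_pow, one_mul, abs_pow]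
    exact mul_le_mul_of_nonneg_left (pow_le_pow_right₀ hx1 (by omega)) (abs_nonneg _)
  have e3 : |x| ^ n = |x| * |x| ^ (n-1) := by rw [← pow_succ']; congr 1; omega
  rw [e3] at e2
  have := le_of_mul_le_mul_right e2 (by positivity)
  linarith

lemma roots_continuous {n : ℕ} (a : Fin n → ℝ → ℝ) (ha : ∀ j, Continuous (a j)) (lam : ℝ → Fin n → ℝ)
    (hm : ∀ t, Monotone (lam t)) (hp : ∀ t x, pv a t x = ∏ i, (x - lam t i)) (i : Fin n) :
    Continuous (fun t => lam t i) := by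
  rw [continuous_iff_continuousAt]
  intro t0
  have hc : Continuous (fun t => 1 + ∑ j, |a j t|) := by fun_prop
  obtain ⟨v, h1, -, -⟩ := conv_mono (l := 𝓝 t0) lam (Eventually.of_forall hm)
    (R := (1 + ∑ j, |a j t0|) + 1) (by
      filter_upwards [(hc.tendsto t0).eventually (gt_mem_nhds (lt_add_one _))] with t ht i
      refine (root_le a t _ ?_).trans ht.le
      rw [hp]
      exact Finset.prod_eq_zero (Finset.mem_univ i) (sub_self _)) (fun w => pv a t0 w) (fun w => by
      simp only [← hp]
      have : Continuous (fun t => pv a t w) := by unfold pv; fun_prop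
      exact this.tendsto t0)
  have h2 : v i = lam t0 i :=
    (tendsto_nhds_unique ((tendsto_pure_nhds (fun t => lam t i) t0)) ((h1 i).mono_left (pure_le_nhds t0))).symm
  have h3 := h1 i
  rw [h2] at h3
  exact h3

/-- Taylor coefficients at `x0` -/
noncomputable def tc {n : ℕ} (a : Fin n → ℝ → ℝ) (x0 : ℝ) (k : ℕ) (s : ℝ) : ℝ :=
  n.choose k * x0 ^ (n - k) + ∑ j : Fin n, ((-1 : ℝ) ^ ((j : ℕ) + 1) *
    ((n - ((j:ℕ) + 1)).choose k * x0 ^ (n - ((j:ℕ)+1) - k))) * a j s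

lemma binom_ext {n m : ℕ} (h : m ≤ n) (x0 u : ℝ) :
    (x0 + u) ^ m = ∑ k ∈ Finset.range (n+1), m.choose k * x0 ^ (m - k) * u ^ k := by
  rw [add_comm, add_pow]
  rw [← Finset.sum_subset (Finset.range_mono (Nat.succ_le_succ h) : Finset.range (m+1) ⊆ _)]
  · refine Finset.sum_congr rfl fun k _ => by ring
  · intro k _ hk
    rw [Nat.choose_eq_zero_of_lt (by simpa using hk)]; simp

lemma tc_sum {n : ℕ} (a : Fin n → ℝ → ℝ) (x0 s u : ℝ) :
    pv a s (x0 + u) = ∑ k ∈ Finset.range (n+1), tc a x0 k s * u ^ k := by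
  unfold pv tc
  simp only [add_mul, Finset.sum_add_distrib, Finset.sum_mul]
  rw [binom_ext le_rfl, Finset.sum_comm]
  congr 1
  refine Finset.sum_congr rfl fun j _ => ?_
  rw [binom_ext (by omega : n - ((j:ℕ)+1) ≤ n), Finset.mul_sum]
  refine Finset.sum_congr rfl fun k _ => ?_
  ring

lemma tc_bound {n : ℕ} (a : Fin n → ℝ → ℝ) (ha : ∀ j, ContDiff ℝ n (a j)) (R : ℝ) :
    ∃ M, ∀ t0 x0 : ℝ, |t0| ≤ R → |x0| ≤ R → ∀ k ≤ n, ∀ j ≤ n, ∀ t ∈ Set.Icc (-1:ℝ) 1,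
      |iteratedDeriv j (fun t => tc a x0 k (t0 + t)) t| ≤ M := by
  have h1 : ∀ j : Fin (n+1), ∀ i, ∃ Q, ∀ s ∈ Set.Icc (-(R+1)) (R+1), |iteratedDeriv j (a i) s| ≤ Q := by
    intro j i
    have := (ha i).continuous_iteratedDeriv j (by exact_mod_cast (by omega : (j:ℕ) ≤ n))
    obtain ⟨Q, hQ⟩ := isCompact_Icc.exists_bound_of_continuousOn (this.continuousOn (s := Set.Icc (-(R+1)) (R+1)))
    exact ⟨Q, fun s hs => by simpa using hQ s hs⟩
  choose Q hQ using h1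
  set S := ∑ j, ∑ i, |Q j i| with hS
  have hQS : ∀ j i, Q j i ≤ S := by
    intro j i
    calc Q j i ≤ |Q j i| := le_abs_self _
      _ ≤ ∑ i, |Q j i| := Finset.single_le_sum (f := fun i => |Q j i|) (fun i _ => abs_nonneg _) (Finset.mem_univ i)
      _ ≤ S := Finset.single_le_sum (f := fun j => ∑ i, |Q j i|)
          (fun j _ => Finset.sum_nonneg fun i _ => abs_nonneg _) (Finset.mem_univ j)
  have hS0 : 0 ≤ S := Finset.sum_nonneg fun j _ => Finset.sum_nonneg fun i _ => abs_nonneg _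
  set W : ℝ := 2 ^ n * (1 + |R|) ^ n with hW
  have hW0 : 0 ≤ W := by positivity
  refine ⟨W + n * (W * S), fun t0 x0 ht0 hx0 k hk j hj t ht => ?_⟩
  have hco : ∀ m ≤ n, |(m.choose k * x0 ^ (m - k) : ℝ)| ≤ W := by
    intro m hm
    rw [abs_mul, Nat.abs_cast, abs_pow]
    have b1 : (m.choose k : ℝ) ≤ 2 ^ n := by
      have h1 : (m.choose k : ℝ) ≤ 2 ^ m := by exact_mod_cast Nat.choose_le_two_pow m k
      exact h1.trans (pow_le_pow_right₀ (by norm_num) hm)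
    have b2 : |x0| ^ (m - k) ≤ (1 + |R|) ^ n :=
      (pow_le_pow_left₀ (abs_nonneg _) (hx0.trans (by linarith [le_abs_self R])) _).trans
        (pow_le_pow_right₀ (by linarith [abs_nonneg R]) (by omega))
    exact mul_le_mul b1 b2 (by positivity) (by positivity)
  rw [iteratedDeriv_comp_const_add]
  beta_reduce
  have hmem : t0 + t ∈ Set.Icc (-(R+1)) (R+1) := by
    have := abs_le.1 ht0
    exact ⟨by linarith [ht.1], by linarith [ht.2]⟩
  set s := t0 + t
  have hcd : ∀ i, ContDiff ℝ j (a i) := fun i => (ha i).of_le (by exact_mod_cast hj)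
  unfold tc
  rw [iteratedDeriv_fun_add (by fun_prop) (by fun_prop), iteratedDeriv_fun_sum (fun i _ => by fun_prop)]
  refine (abs_add_le _ _).trans (add_le_add ?_ ?_)
  · rw [iteratedDeriv_const]
    split_ifs
    · exact hco n le_rfl
    · simpa using hW0
  · refine (Finset.abs_sum_le_sum_abs _ _).trans ?_
    refine (Finset.sum_le_card_nsmul _ _ (W * S) fun i _ => ?_).trans (by simp)
    rw [iteratedDeriv_const_mul_field, abs_mul, abs_mul, abs_pow, abs_neg, abs_one, one_pow, one_mul]
    have b1 := hco (n - ((i:ℕ)+1)) (by omega)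
    have b2 := (hQ ⟨j, by omega⟩ i s hmem).trans (hQS _ _)
    exact mul_le_mul b1 b2 (abs_nonneg _) hW0

lemma splits_of_prod {n : ℕ} {e : ℕ → ℝ} {L : Fin n → ℝ}
    (h : ∀ u : ℝ, ∏ i, (u - L i) = ∑ k ∈ Finset.range (n+1), e k * u ^ k) : Splits (hp n e) := by
  have : hp n e = ∏ i, (X - C (L i)) := by
    refine Polynomial.funext fun u => ?_
    rw [hp_eval, ← h, eval_prod]; simp
  rw [this]
  exact Splits.prod fun i _ => Splits.X_sub_C _

lemma deriv_data_aux {n : ℕ} (a : Fin n → ℝ → ℝ) (ha : ∀ j, ContDiff ℝ n (a j)) (lam : ℝ → Fin n → ℝ)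
    (hm : ∀ t, Monotone (lam t)) (hp : ∀ t x, pv a t x = ∏ i, (x - lam t i)) (R : ℝ) :
    ∃ B, ∀ t0, |t0| ≤ R → ∃ dp dm : Fin n → ℝ,
      (∀ i, Tendsto (fun t => (lam (t0 + t) i - lam t0 i) / t) (𝓝[>] 0) (𝓝 (dp i)) ∧
        Tendsto (fun t => (lam (t0 + t) i - lam t0 i) / t) (𝓝[<] 0) (𝓝 (dm i)) ∧ |dp i| ≤ B ∧ |dm i| ≤ B) ∧
      ∀ x w, ∏ i with lam t0 i = x, (w - dp i) = ∏ i with lam t0 i = x, (w - dm i) := by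
  have hcont := roots_continuous a (fun j => (ha j).continuous) lam hm hp
  -- bound for roots
  have hR' : ∃ R', R ≤ R' ∧ ∀ t0, |t0| ≤ R → ∀ i, |lam t0 i| ≤ R' := by
    have : ∀ i, ∃ Q, ∀ s ∈ Set.Icc (-R) R, |lam s i| ≤ Q := fun i => by
      obtain ⟨Q, hQ⟩ := isCompact_Icc.exists_bound_of_continuousOn ((hcont i).continuousOn (s := Set.Icc (-R) R))
      exact ⟨Q, fun s hs => by simpa using hQ s hs⟩
    choose Q hQ using this
    have h0 : 0 ≤ ∑ i, |Q i| := Finset.sum_nonneg fun i _ => abs_nonneg _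
    refine ⟨R.toNNReal + ∑ i, |Q i|, by linarith [Real.le_coe_toNNReal R], fun t0 ht0 i => ?_⟩
    have h1 := hQ i t0 (abs_le.1 ht0)
    have h2 : |Q i| ≤ ∑ i, |Q i| := Finset.single_le_sum (f := fun i => |Q i|) (fun i _ => abs_nonneg _) (Finset.mem_univ i)
    have h3 : (0:ℝ) ≤ R.toNNReal := NNReal.coe_nonneg _
    linarith [le_abs_self (Q i)]
  obtain ⟨R', hRR', hlR'⟩ := hR'
  obtain ⟨M, hM⟩ := tc_bound a ha R'
  obtain ⟨K, hK, hmain⟩ := main_est n M 1 one_pos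
  refine ⟨1 + 2 * (K + 1) * n, fun t0 ht0 => ?_⟩
  have hloc : ∀ i0 : Fin n, ∃ dp dm : Fin n → ℝ, (∀ i, lam t0 i = lam t0 i0 →
      Tendsto (fun t => (lam (t0 + t) i - lam t0 i) / t) (𝓝[>] 0) (𝓝 (dp i)) ∧
      Tendsto (fun t => (lam (t0 + t) i - lam t0 i) / t) (𝓝[<] 0) (𝓝 (dm i)) ∧ |dp i| ≤ 1 + 2 * (K + 1) * n ∧
      |dm i| ≤ 1 + 2 * (K + 1) * n) ∧
      ∀ w, ∏ i with lam t0 i = lam t0 i0, (w - dp i) = ∏ i with lam t0 i = lam t0 i0, (w - dm i) := by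
    intro i0
    set x0 := lam t0 i0 with hx0
    set E : ℕ → ℝ → ℝ := fun k t => tc a x0 k (t0 + t) with hE
    set L : ℝ → Fin n → ℝ := fun t i => lam (t0 + t) i - x0 with hL
    have hprod : ∀ t u : ℝ, ∏ i, (u - L t i) = ∑ k ∈ Finset.range (n+1), E k t * u ^ k := by
      intro t u
      rw [hE, ← tc_sum, hp]
      refine Finset.prod_congr rfl fun i _ => by rw [hL]; ring
    have hsm : ∀ k ≤ n, ContDiff ℝ n (E k) := fun k hk => by
      rw [hE]; unfold tc; fun_prop
    have hL0 : ∀ i, L 0 i = lam t0 i - x0 := fun i => by simp [hL]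
    have hL0' : ∀ i, L 0 i = 0 ↔ lam t0 i = x0 := fun i => by rw [hL0, sub_eq_zero]
    have hcls : Cls n M 1 E := by
      refine ⟨hsm, fun k hk j hj t ht => hM t0 x0 (ht0.trans hRR') (hlR' t0 ht0 i0) k hk j hj t ht,
        fun t => splits_of_prod (hprod t), fun t ht => ?_⟩
      have : E n t = 1 := by
        simp only [hE, tc]
        rw [Finset.sum_eq_zero]
        · simp
        · intro j _
          rw [Nat.choose_eq_zero_of_lt (by have := j.2; omega)]; simp
      rw [this, abs_one]
    obtain ⟨hμ, hz, hne⟩ := local_zero rfl (hprod 0)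
    have hC := hmain E hcls _ hμ hz hne
    obtain ⟨dp, dm, h1, h2⟩ := local_limits (L := L) hK hsm hprod (fun i => by
        have := hcont i
        have : Continuous (fun t => L t i) := by rw [hL]; fun_prop
        exact this.continuousAt) (fun t i j hij => by
        have := hm (t0 + t) hij
        simp only [hL]; linarith) rfl hC
    simp only [hL0'] at h1 h2
    refine ⟨dp, dm, fun i hi => ?_, h2⟩
    rw [hi]
    exact h1 i hi
  choose dp dm h1 h2 using hloc
  -- a representative of each cluster
  have hrep : ∃ r : ℝ → Fin n → Fin n, ∀ i, lam t0 (r (lam t0 i) i) = lam t0 i ∧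
      ∀ i', lam t0 i' = lam t0 i → r (lam t0 i') i' = r (lam t0 i) i := by
    classical
    refine ⟨fun x i => if h : ∃ j, lam t0 j = x then h.choose else i, fun i => ?_⟩
    have hi : ∃ j, lam t0 j = lam t0 i := ⟨i, rfl⟩
    refine ⟨?_, fun i' hi' => ?_⟩
    · simp only [dif_pos hi]; exact hi.choose_spec
    · rw [hi']; simp only [dif_pos hi]
  obtain ⟨r, hr⟩ := hrep
  refine ⟨fun i => dp (r (lam t0 i) i) i, fun i => dm (r (lam t0 i) i) i, fun i => ?_, fun x w => ?_⟩
  · exact h1 _ i (hr i).1.symm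
  · by_cases hx : ∃ i, lam t0 i = x
    · obtain ⟨i, rfl⟩ := hx
      have := h2 (r (lam t0 i) i) w
      rw [(hr i).1] at this
      have key : ∀ d : Fin n → Fin n → ℝ, ∏ i' with lam t0 i' = lam t0 i, (w - d (r (lam t0 i') i') i') =
          ∏ i' with lam t0 i' = lam t0 i, (w - d (r (lam t0 i) i) i') := by
        intro d
        refine Finset.prod_congr rfl fun i' hi' => ?_
        rw [(hr i).2 i' (Finset.mem_filter.1 hi').2]
      rw [key, key, this]
    · have : Finset.univ.filter (fun i => lam t0 i = x) = ∅ := by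
        rw [Finset.filter_eq_empty_iff]; intro i _ h; exact hx ⟨i, h⟩
      rw [this]; simp

theorem deriv_data {n : ℕ} (a : Fin n → ℝ → ℝ) (ha : ∀ j, ContDiff ℝ n (a j)) (lam : ℝ → Fin n → ℝ)
    (hm : ∀ t, Monotone (lam t)) (hp : ∀ t x, pv a t x = ∏ i, (x - lam t i)) :
    ∃ dp dm : ℝ → Fin n → ℝ,
      (∀ t0 i, Tendsto (fun t => (lam (t0 + t) i - lam t0 i) / t) (𝓝[>] 0) (𝓝 (dp t0 i))) ∧
      (∀ t0 i, Tendsto (fun t => (lam (t0 + t) i - lam t0 i) / t) (𝓝[<] 0) (𝓝 (dm t0 i))) ∧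
      (∀ R, ∃ B, ∀ t0, |t0| ≤ R → ∀ i, |dp t0 i| ≤ B) ∧
      (∀ t0, ∃ π : Equiv.Perm (Fin n), ∀ i, lam t0 (π i) = lam t0 i ∧ dp t0 (π i) = dm t0 i) := by
  have h := deriv_data_aux a ha lam hm hp
  choose B hB using h
  choose dp dm h1 h2 using fun t0 => hB |t0| t0 le_rfl
  refine ⟨dp, dm, fun t0 i => (h1 t0 i).1, fun t0 i => (h1 t0 i).2.1, fun R => ⟨B R, fun t0 ht0 i => ?_⟩, fun t0 => ?_⟩
  · obtain ⟨dp', dm', h1', -⟩ := hB R t0 ht0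
    rw [tendsto_nhds_unique (h1 t0 i).1 (h1' i).1]
    exact (h1' i).2.2.1
  · exact perm_of_prod (lam t0) (dm t0) (dp t0) (fun x w => (h2 t0 x w).symm)


lemma select_fin {G : Type*} [Group G] (π : ℝ → G) (F : Finset ℝ) :
    ∃ σ : ℝ → G, ∀ t1 t2, t1 < t2 → ∃ h ∈ Subgroup.closure (π '' (Set.Ioo t1 t2 ∩ F)),
      σ t2 = h * (if t1 ∈ F then π t1 else 1) * σ t1 := by
  classical
  induction F using Finset.induction_on_max with
  | empty => exact ⟨fun _ => 1, fun t1 t2 _ => ⟨1, one_mem _, by simp⟩⟩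
  | insert a F ha ih =>
    obtain ⟨σ, hσ⟩ := ih
    have hnot : ∀ t, a ≤ t → t ∉ F := fun t ht h => absurd (ha t h) (not_lt.2 ht)
    have hone : ∀ t1 t2, a ≤ t1 → t1 < t2 → σ t2 = σ t1 := by
      intro t1 t2 h1 h2
      obtain ⟨h, hh, he⟩ := hσ t1 t2 h2
      have hemp : Set.Ioo t1 t2 ∩ (F : Set ℝ) = ∅ := by
        ext x
        simp only [Set.mem_inter_iff, Set.mem_Ioo, Finset.mem_coe, Set.mem_empty_iff_false, iff_false]
        rintro ⟨⟨h3, -⟩, h4⟩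
        exact hnot x (by linarith) h4
      rw [hemp, Set.image_empty, Subgroup.closure_empty, Subgroup.mem_bot] at hh
      rw [he, hh, if_neg (hnot t1 h1)]; simp
    have hsub : ∀ t1 t2 : ℝ, Subgroup.closure (π '' (Set.Ioo t1 t2 ∩ (F : Set ℝ))) ≤
        Subgroup.closure (π '' (Set.Ioo t1 t2 ∩ ((insert a F : Finset ℝ) : Set ℝ))) := fun t1 t2 =>
      Subgroup.closure_mono (Set.image_mono (Set.inter_subset_inter_right _ (by simp)))
    refine ⟨fun t => if t ≤ a then σ t else π a * σ t, fun t1 t2 h12 => ?_⟩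
    rcases le_or_gt t2 a with h2 | h2
    · obtain ⟨h, hh, he⟩ := hσ t1 t2 h12
      have h1 : t1 < a := by linarith
      refine ⟨h, hsub _ _ hh, ?_⟩
      simp only [if_pos h2, if_pos h1.le, he, Finset.mem_insert, h1.ne, false_or]
    rcases lt_trichotomy t1 a with h1 | h1 | h1
    · obtain ⟨h, hh, he⟩ := hσ t1 t2 h12
      refine ⟨π a * h, mul_mem (Subgroup.subset_closure ⟨a, ⟨⟨h1, h2⟩, by simp⟩, rfl⟩) (hsub _ _ hh), ?_⟩
      simp only [if_neg (not_le.2 h2), if_pos h1.le, he, Finset.mem_insert, h1.ne, false_or, mul_assoc]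
    · subst h1
      refine ⟨1, one_mem _, ?_⟩
      simp [not_le.2 h2, hone t1 t2 le_rfl h12]
    · refine ⟨1, one_mem _, ?_⟩
      simp [not_le.2 h2, not_le.2 h1, hone t1 t2 h1.le h12, h1.ne', hnot t1 h1.le]

lemma select {G : Type*} [Group G] [Finite G] (π : ℝ → G) :
    ∃ σ : ℝ → G, ∀ t1 t2, t1 < t2 → ∃ h ∈ Subgroup.closure (π '' (Set.Ioo t1 t2)),
      σ t2 = h * π t1 * σ t1 := by
  classical
  choose s hs using select_fin π
  let U : Ultrafilter (Finset ℝ) := Ultrafilter.of atTop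
  have hU : (U : Filter (Finset ℝ)) ≤ atTop := Ultrafilter.of_le _
  have hlim : ∀ t, ∃ g, ∀ᶠ F in (U : Filter (Finset ℝ)), s F t = g := by
    intro t
    exact Ultrafilter.eventually_exists_iff.1 (Eventually.of_forall fun F => ⟨s F t, rfl⟩)
  choose σ hσ using hlim
  refine ⟨σ, fun t1 t2 h12 => ?_⟩
  obtain ⟨F, ⟨hF1, hF2⟩, hF3⟩ := (((hσ t1).and (hσ t2)).and (hU (eventually_ge_atTop {t1}))).exists
  obtain ⟨h, hh, he⟩ := hs F t1 t2 h12
  have hmem : t1 ∈ F := hF3 (Finset.mem_singleton_self _)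
  rw [if_pos hmem, hF1, hF2] at he
  exact ⟨h, Subgroup.closure_mono (Set.image_mono Set.inter_subset_left) hh, he⟩

lemma tendsto_select {ι T : Type*} [Finite ι] {l : Filter T} (f : ι → T → ℝ) (k : T → ι) (P : ι → Prop) (D : ℝ)
    (hf : ∀ i, P i → Tendsto (f i) l (𝓝 D)) (hk : ∀ᶠ t in l, P (k t)) : Tendsto (fun t => f (k t) t) l (𝓝 D) := by
  intro U hU
  have : ∀ᶠ t in l, ∀ i, P i → f i t ∈ U := Filter.eventually_all.2 fun i => by
    by_cases h : P i
    · filter_upwards [hf i h hU] with t ht _ using ht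
    · exact Eventually.of_forall fun t h' => absurd h' h
  have h3 : ∀ᶠ t in l, f (k t) t ∈ U := by
    filter_upwards [this, hk] with t h1 h2 using h1 _ h2
  exact h3

/-- separation of blocks -/
lemma sep_blocks {n : ℕ} {lam : ℝ → Fin n → ℝ} (hcont : ∀ i, Continuous (fun t => lam t i)) {t0 : ℝ} {d : Fin n → ℝ}
    {l : Filter ℝ} (hl : l ≤ 𝓝[≠] 0)
    (hd : ∀ i, Tendsto (fun t => (lam (t0 + t) i - lam t0 i) / t) l (𝓝 (d i))) :
    ∀ᶠ t in l, ∀ i j, lam (t0 + t) i = lam (t0 + t) j → lam t0 i = lam t0 j ∧ d i = d j := by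
  refine Filter.eventually_all.2 fun i => Filter.eventually_all.2 fun j => ?_
  by_cases h1 : lam t0 i = lam t0 j
  · by_cases h2 : d i = d j
    · exact Eventually.of_forall fun t _ => ⟨h1, h2⟩
    · filter_upwards [((hd i).sub (hd j)).eventually_ne (sub_ne_zero.2 h2)] with t ht h
      exfalso; apply ht; rw [h, h1, sub_self]
  · have hc : Continuous (fun t => lam (t0 + t) i - lam (t0 + t) j) := by
      have a1 := hcont i
      have a2 := hcont j
      fun_prop
    have := (hc.tendsto 0).mono_left (hl.trans nhdsWithin_le_nhds)
    filter_upwards [this.eventually_ne (b₂ := 0) (by simpa [sub_eq_zero] using h1)] with t ht h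
    exact absurd (sub_eq_zero.2 h) ht

/-- permutations preserving a colouring -/
def presSub {ι κ : Type*} (c : ι → κ) : Subgroup (Equiv.Perm ι) where
  carrier := {g | ∀ i, c (g i) = c i}
  one_mem' := fun i => rfl
  mul_mem' := fun {g h} hg hh i => by
    rw [Equiv.Perm.mul_apply, hg, hh]
  inv_mem' := fun {g} hg i => by
    have := hg (g⁻¹ i)
    rw [← Equiv.Perm.mul_apply, mul_inv_cancel, Equiv.Perm.one_apply] at this
    exact this.symm

theorem final_sel {n : ℕ} (lam : ℝ → Fin n → ℝ) (hcont : ∀ i, Continuous (fun t => lam t i)) (dp dm : ℝ → Fin n → ℝ)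
    (hp : ∀ t0 i, Tendsto (fun t => (lam (t0 + t) i - lam t0 i) / t) (𝓝[>] 0) (𝓝 (dp t0 i)))
    (hm : ∀ t0 i, Tendsto (fun t => (lam (t0 + t) i - lam t0 i) / t) (𝓝[<] 0) (𝓝 (dm t0 i)))
    (hπ : ∀ t0, ∃ π : Equiv.Perm (Fin n), ∀ i, lam t0 (π i) = lam t0 i ∧ dp t0 (π i) = dm t0 i) :
    ∃ σ : ℝ → Equiv.Perm (Fin n), ∀ j t0, ∃ k, HasDerivAt (fun t => lam t (σ t j)) (dp t0 k) t0 := by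
  choose π hπ using hπ
  obtain ⟨σ, hσ⟩ := select π
  refine ⟨σ, fun j t0 => ⟨π t0 (σ t0 j), ?_⟩⟩
  have hpm : 𝓝[>] (0:ℝ) ≤ 𝓝[≠] 0 := nhdsWithin_mono _ fun x hx => ne_of_gt hx
  have hmm : 𝓝[<] (0:ℝ) ≤ 𝓝[≠] 0 := nhdsWithin_mono _ fun x hx => ne_of_lt hx
  rw [hasDerivAt_iff_tendsto_slope_zero, ← Set.Iio_union_Ioi, nhdsWithin_union, tendsto_sup]
  constructor
  · have h1 := sep_blocks hcont hmm (hm t0)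
    obtain ⟨δ, hδ, h2⟩ := mem_nhdsLT_iff_exists_Ioo_subset.1 h1
    have hδ : δ < 0 := hδ
    have hk : ∀ t ∈ Set.Ioo δ 0, lam t0 (σ (t0 + t) j) = lam t0 (σ t0 j) ∧ dm t0 (σ (t0+t) j) = dm t0 (σ t0 j) := by
      intro t ht
      obtain ⟨h, hh, he⟩ := hσ (t0 + t) t0 (by linarith [ht.2])
      have hpi : ∀ s, t0 + t ≤ s → s < t0 → π s ∈ presSub (fun i => (lam t0 i, dm t0 i)) := by
        intro s hs1 hs2 i
        have := h2 (show s - t0 ∈ Set.Ioo δ 0 from ⟨by linarith [ht.1], by linarith⟩) (π s i) i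
        rw [add_sub_cancel] at this
        exact Prod.ext_iff.2 (this (hπ s i).1)
      have hle : Subgroup.closure (π '' Set.Ioo (t0 + t) t0) ≤ presSub (fun i => (lam t0 i, dm t0 i)) := by
        rw [Subgroup.closure_le]
        rintro _ ⟨s, hs, rfl⟩
        exact hpi s hs.1.le hs.2
      have h3 := (mul_mem (hle hh) (hpi (t0+t) le_rfl (by linarith [ht.2]))) (σ (t0 + t) j)
      rw [← Equiv.Perm.mul_apply, ← he] at h3
      have h4 := Prod.ext_iff.1 h3
      exact ⟨h4.1.symm, h4.2.symm⟩
    have hev : ∀ᶠ t in 𝓝[<] (0:ℝ), t ∈ Set.Ioo δ 0 := Ioo_mem_nhdsLT hδ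
    have h5 := tendsto_select (l := 𝓝[<] (0:ℝ)) (fun i t => (lam (t0 + t) i - lam t0 i) / t) (fun t => σ (t0 + t) j)
      (fun i => dm t0 i = dm t0 (σ t0 j)) (dm t0 (σ t0 j)) (fun i hi => hi ▸ hm t0 i) (hev.mono fun t ht => (hk t ht).2)
    rw [(hπ t0 _).2]
    refine h5.congr' (hev.mono fun t ht => ?_)
    beta_reduce
    rw [(hk t ht).1, smul_eq_mul, div_eq_inv_mul]
  · have h1 := sep_blocks hcont hpm (hp t0)
    obtain ⟨δ, hδ, h2⟩ := mem_nhdsGT_iff_exists_Ioo_subset.1 h1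
    have hδ : 0 < δ := hδ
    have hk : ∀ t ∈ Set.Ioo 0 δ, lam t0 (σ (t0 + t) j) = lam t0 (π t0 (σ t0 j)) ∧
        dp t0 (σ (t0+t) j) = dp t0 (π t0 (σ t0 j)) := by
      intro t ht
      obtain ⟨h, hh, he⟩ := hσ t0 (t0 + t) (by linarith [ht.1])
      have hle : Subgroup.closure (π '' Set.Ioo t0 (t0 + t)) ≤ presSub (fun i => (lam t0 i, dp t0 i)) := by
        rw [Subgroup.closure_le]
        rintro _ ⟨s, hs, rfl⟩ i
        have := h2 (show s - t0 ∈ Set.Ioo 0 δ from ⟨by linarith [hs.1], by linarith [ht.2, hs.2]⟩) (π s i) i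
        rw [add_sub_cancel] at this
        exact Prod.ext_iff.2 (this (hπ s i).1)
      have h3 := (hle hh) (π t0 (σ t0 j))
      rw [← Equiv.Perm.mul_apply, ← Equiv.Perm.mul_apply, ← he] at h3
      exact Prod.ext_iff.1 h3
    have hev : ∀ᶠ t in 𝓝[>] (0:ℝ), t ∈ Set.Ioo 0 δ := Ioo_mem_nhdsGT hδ
    have h5 := tendsto_select (l := 𝓝[>] (0:ℝ)) (fun i t => (lam (t0 + t) i - lam t0 i) / t) (fun t => σ (t0 + t) j)
      (fun i => dp t0 i = dp t0 (π t0 (σ t0 j))) (dp t0 (π t0 (σ t0 j))) (fun i hi => hi ▸ hp t0 i)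
      (hev.mono fun t ht => (hk t ht).2)
    refine h5.congr' (hev.mono fun t ht => ?_)
    beta_reduce
    rw [(hk t ht).1, (hπ t0 _).1, smul_eq_mul, div_eq_inv_mul]

theorem bronshtein (n : ℕ) (hn : 1 ≤ n) (a : Fin n → ℝ → ℝ)
    (ha : ∀ j, ContDiff ℝ n (a j))
    (hhyp : ∀ t : ℝ, ∀ z : ℂ,
      z ^ n + ∑ j : Fin n, (-1 : ℂ) ^ ((j : ℕ) + 1) * (a j t : ℂ) * z ^ (n - ((j : ℕ) + 1)) = 0 →
        z.im = 0) :
    ∃ lam : Fin n → ℝ → ℝ,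
      (∀ j, Differentiable ℝ (lam j)) ∧
      (∀ j, ∀ K : Set ℝ, IsCompact K → ∃ C : ℝ, ∀ t ∈ K, |deriv (lam j) t| ≤ C) ∧
      (∀ t x : ℝ,
        x ^ n + ∑ j : Fin n, (-1 : ℝ) ^ ((j : ℕ) + 1) * a j t * x ^ (n - ((j : ℕ) + 1)) =
          ∏ j : Fin n, (x - lam j t)) := by
  choose lam hmono hprod using exists_roots a hhyp
  have hcont := roots_continuous a (fun j => (ha j).continuous) lam hmono hprod
  obtain ⟨dp, dm, h1, h2, h3, h4⟩ := deriv_data a ha lam hmono hprod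
  obtain ⟨σ, hσ⟩ := final_sel lam hcont dp dm h1 h2 h4
  refine ⟨fun j t => lam t (σ t j), fun j t => ?_, fun j K hK => ?_, fun t x => ?_⟩
  · obtain ⟨k, hk⟩ := hσ j t
    exact hk.differentiableAt
  · obtain ⟨R, hR⟩ := hK.isBounded.exists_norm_le
    obtain ⟨B, hB⟩ := h3 R
    refine ⟨B, fun t ht => ?_⟩
    obtain ⟨k, hk⟩ := hσ j t
    rw [hk.deriv]
    exact hB t (hR t ht) k
  · have h5 := hprod t x
    unfold pv at h5
    rw [h5]
    exact (Equiv.prod_comp (σ t) (fun i => x - lam t i)).symm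
end

section
/- Let n ≥ 1 and let a_1, …, a_n : ℝ → ℝ be functions of class C^n. Suppose that for every t ∈ ℝ the monic polynomial P(t)(x) = x^n + Σ_{j=1}^n (-1)^j a_j(t) x^{n-j} is hyperbolic, i.e. all its complex roots are real. Then there exist functions λ_1, …, λ_n : ℝ → ℝ of class C^1 such that for every t ∈ ℝ one has P(t)(x) = ∏_{j=1}^n (x - λ_j(t)) for all x. -/
section Helpers
open Filter Topology Set

lemma hyp_taylor (F : ℝ → ℝ) (m : ℕ) (hF : ContDiff ℝ m F) (z : ℝ)
    (h : ∀ j < m, iteratedDeriv j F z = 0) :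
    Tendsto (fun t => F t / (t - z) ^ m) (𝓝[≠] z) (𝓝 (iteratedDeriv m F z / m.factorial)) := by
  have h1 := taylor_isLittleO_univ (x₀ := z) hF
  have h2 : ∀ t, taylorWithinEval F m univ z t
      = iteratedDeriv m F z / m.factorial * (t - z) ^ m := by
    intro t
    rw [taylor_within_apply, Finset.sum_range_succ, Finset.sum_eq_zero]
    · simp [iteratedDerivWithin_univ]; ring
    · intro k hk
      rw [iteratedDerivWithin_univ, h k (Finset.mem_range.1 hk)]; simp
  simp only [h2] at h1
  have h3 := (h1.mono (nhdsWithin_le_nhds (s := {z}ᶜ))).tendsto_div_nhds_zero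
  have h4 := h3.add_const (iteratedDeriv m F z / m.factorial)
  rw [zero_add] at h4
  refine h4.congr' ?_
  filter_upwards [self_mem_nhdsWithin] with t ht
  have : (t - z) ^ m ≠ 0 := pow_ne_zero _ (sub_ne_zero.2 ht)
  field_simp
  ring

lemma hyp_vanish (F : ℝ → ℝ) (m : ℕ) (hF : ContDiff ℝ m F) (z : ℝ) (C : ℝ)
    (h : ∀ᶠ t in 𝓝[≠] z, |F t| ≤ C * |t - z| ^ m) :
    ∀ j < m, iteratedDeriv j F z = 0 := by
  intro j
  induction j using Nat.strong_induction_on with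
  | _ j ih =>
  intro hj
  have h1 := hyp_taylor F j (hF.of_le (by exact_mod_cast hj.le)) z
    (fun i hi => ih i hi (hi.trans hj))
  have h2 : Tendsto (fun t => F t / (t - z) ^ j) (𝓝[≠] z) (𝓝 0) := by
    have h3 : Tendsto (fun t : ℝ => C * |t - z| ^ (m - j)) (𝓝[≠] z) (𝓝 0) := by
      have : Tendsto (fun t : ℝ => C * |t - z| ^ (m - j)) (𝓝 z) (𝓝 (C * |z - z| ^ (m - j))) := by
        apply Continuous.tendsto
        fun_prop
      rw [sub_self, abs_zero, zero_pow (by omega), mul_zero] at this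
      exact this.mono_left nhdsWithin_le_nhds
    refine squeeze_zero_norm' ?_ h3
    filter_upwards [h, self_mem_nhdsWithin] with t ht htz
    have hp : 0 < |t - z| := abs_pos.2 (sub_ne_zero.2 htz)
    rw [Real.norm_eq_abs, abs_div, abs_pow, div_le_iff₀ (by positivity), mul_assoc, ← pow_add,
      Nat.sub_add_cancel hj.le]
    exact ht
  have h5 := tendsto_nhds_unique h1 h2
  have : (j.factorial : ℝ) ≠ 0 := by exact_mod_cast j.factorial_ne_zero
  field_simp at h5
  simpa using h5

/-- Rolle with multiplicities. -/
lemma hyp_rolle (K : ℕ) : ∀ (F : ℝ → ℝ), ContDiff ℝ K F → ∀ (x : ℕ → ℝ), Monotone x →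
    (∀ i k, i + k ≤ K → x i = x (i + k) → iteratedDeriv k F (x i) = 0) →
    ∃ ξ, x 0 ≤ ξ ∧ ξ ≤ x K ∧ iteratedDeriv K F ξ = 0 := by
  induction K with
  | zero =>
    intro F _ x _ h
    exact ⟨x 0, le_rfl, le_rfl, h 0 0 (by simp) rfl⟩
  | succ K ih =>
    intro F hF x hx h
    have hd : ContDiff ℝ K (deriv F) := by
      have : ContDiff ℝ ((K : ℕ∞) + 1 : WithTop ℕ∞) F := by exact_mod_cast hF
      exact (contDiff_succ_iff_deriv.1 this).2.2
    have hy : ∀ i, ∃ y, x i ≤ y ∧ y ≤ x (i + 1) ∧ (x i < x (i + 1) → x i < y ∧ y < x (i + 1)) ∧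
        (i ≤ K → deriv F y = 0) := by
      intro i
      rcases (hx (Nat.le_succ i)).lt_or_eq with hlt | heq
      · by_cases hi : i ≤ K
        · obtain ⟨c, hc, hc'⟩ := exists_deriv_eq_zero (f := F) hlt hF.continuous.continuousOn
            (by
              have e1 := h i 0 (by omega) rfl
              have e2 := h (i + 1) 0 (by omega) rfl
              simp only [iteratedDeriv_zero] at e1 e2
              rw [e1, e2])
          exact ⟨c, hc.1.le, hc.2.le, fun _ => hc, fun _ => hc'⟩
        · obtain ⟨c, hc⟩ := exists_between hlt
          exact ⟨c, hc.1.le, hc.2.le, fun _ => hc, fun h => absurd h hi⟩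
      · refine ⟨x i, le_rfl, heq.le, fun h => absurd heq h.ne, fun hi => ?_⟩
        have := h i 1 (by omega) heq
        rwa [iteratedDeriv_one] at this
    choose y hy1 hy2 hy3 hy4 using hy
    have hym : Monotone y := monotone_nat_of_le_succ fun i => (hy2 i).trans (hy1 (i + 1))
    obtain ⟨ξ, h1, h2, h3⟩ := ih (deriv F) hd y hym (by
      intro i k hik hyy
      rw [← iteratedDeriv_succ']
      rcases Nat.eq_zero_or_pos k with rfl | hk
      · rw [zero_add, iteratedDeriv_one]
        exact hy4 i (by omega)
      · have e1 : y i ≤ x (i + 1) := hy2 i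
        have e2 : x (i + 1) ≤ x (i + k) := hx (by omega)
        have e3 : x (i + k) ≤ y (i + k) := hy1 _
        have e4 : x i = x (i + 1) := by
          by_contra hne
          have := (hy3 i (lt_of_le_of_ne (hx (by omega)) hne)).2
          linarith
        have e5 : x (i + k) = x (i + k + 1) := by
          by_contra hne
          have := (hy3 (i + k) (lt_of_le_of_ne (hx (by omega)) hne)).1
          linarith
        have e6 : y i = x i := le_antisymm (e4 ▸ e1) (hy1 i)
        rw [e6]
        apply h i (k + 1) (by omega)
        rw [← add_assoc]
        have := hy2 (i + k)
        linarith)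
    refine ⟨ξ, (hy1 0).trans h1, h2.trans (hy2 K), ?_⟩
    rwa [iteratedDeriv_succ']


lemma hyp_count (F : ℝ → ℝ) (m : ℕ) (hF : ContDiff ℝ m F) {ι : Type} [Fintype ι]
    (hι : Fintype.card ι = m + 1) (τ : ι → ℝ) (a b : ℝ) (hτ : ∀ i, a ≤ τ i ∧ τ i ≤ b)
    (hv : ∀ z j, j < (Finset.univ.filter (fun i => τ i = z)).card → iteratedDeriv j F z = 0) :
    ∃ ξ, a ≤ ξ ∧ ξ ≤ b ∧ iteratedDeriv m F ξ = 0 := by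
  classical
  let e : Fin (m + 1) ≃ ι := (Fintype.equivFinOfCardEq hι).symm
  let f : Fin (m + 1) → ℝ := τ ∘ e
  have hmono : Monotone (f ∘ Tuple.sort f) := Tuple.monotone_sort f
  let u : ℕ → ι := fun k => e (Tuple.sort f ⟨min k m, by omega⟩)
  have hx : Monotone (fun k => τ (u k)) := by
    intro k k' hk
    exact hmono (show (⟨min k m, by omega⟩ : Fin (m + 1)) ≤ ⟨min k' m, by omega⟩ from
      Fin.mk_le_mk.2 (by omega))
  obtain ⟨ξ, h1, h2, h3⟩ := hyp_rolle m F hF (fun k => τ (u k)) hx (by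
    intro i k hik hxx
    apply hv
    have : (Finset.range (k + 1)).card ≤
        (Finset.univ.filter (fun j => τ j = τ (u i))).card := by
      apply Finset.card_le_card_of_injOn (fun j => u (i + j))
      · intro j hj
        have hj' : j < k + 1 := by simpa using hj
        have e1 : τ (u i) ≤ τ (u (i + j)) := hx (by omega)
        have e2 : τ (u (i + j)) ≤ τ (u (i + k)) := hx (by omega)
        simp only [Finset.coe_filter, Finset.mem_univ, true_and, Set.mem_ofPred_eq]
        linarith
      · intro j hj j' hj' hjj
        have hj1 : j < k + 1 := by simpa using hj
        have hj2 : j' < k + 1 := by simpa using hj'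
        have := (Tuple.sort f).injective (e.injective hjj)
        simp only [Fin.mk.injEq] at this
        omega
    rw [Finset.card_range] at this
    exact this)
  exact ⟨ξ, (hτ _).1.trans h1, h2.trans (hτ _).2, h3⟩

lemma hyp_joint (m : ℕ) : ∀ (Φ : ℝ × ℝ → ℝ), ContDiff ℝ m Φ →
    Continuous (fun q : ℝ × ℝ => iteratedDeriv m (fun t => Φ (q.1, t)) q.2) := by
  induction m with
  | zero =>
    intro Φ h
    simpa using h.continuous
  | succ m ih =>
    intro Φ h
    have hdiff : Differentiable ℝ Φ := h.differentiable (by simp)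
    have hder : ∀ c, deriv (fun t => Φ (c, t)) = fun t => fderiv ℝ Φ (c, t) (0, 1) := by
      intro c
      ext t
      have h1 : HasDerivAt (fun t : ℝ => (c, t)) ((0 : ℝ), (1 : ℝ)) t :=
        (hasDerivAt_const t c).prodMk (hasDerivAt_id t)
      exact ((hdiff (c, t)).hasFDerivAt.comp_hasDerivAt t h1).deriv
    have h2 : ContDiff ℝ m (fun q : ℝ × ℝ => fderiv ℝ Φ q (0, 1)) :=
      (h.fderiv_right (m := m) (by norm_cast)).clm_apply contDiff_const
    have h3 := ih _ h2
    simp only [iteratedDeriv_succ', hder]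
    exact h3

lemma hyp_limit (n : ℕ) (lam : Fin n → ℝ → ℝ) (d : Fin n → ℝ) (z μ c : ℝ)
    (hd : ∀ i, HasDerivAt (lam i) (d i) z) (S : Finset (Fin n))
    (hS : ∀ i ∈ S, lam i z = μ * z + c) :
    Tendsto (fun t => (∏ i, (μ * t + c - lam i t)) / (t - z) ^ S.card) (𝓝[≠] z)
      (𝓝 ((∏ i ∈ S, (μ - d i)) * ∏ i ∈ Sᶜ, (μ * z + c - lam i z))) := by
  have h1 : Tendsto (fun t => ∏ i ∈ S, (μ - slope (lam i) z t)) (𝓝[≠] z)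
      (𝓝 (∏ i ∈ S, (μ - d i))) :=
    tendsto_finsetProd _ fun i _ => (hasDerivAt_iff_tendsto_slope.1 (hd i)).const_sub μ
  have h2 : Tendsto (fun t => ∏ i ∈ Sᶜ, (μ * t + c - lam i t)) (𝓝[≠] z)
      (𝓝 (∏ i ∈ Sᶜ, (μ * z + c - lam i z))) := by
    refine tendsto_finsetProd _ fun i _ => ?_
    have : ContinuousAt (fun t => μ * t + c - lam i t) z :=
      ContinuousAt.sub (by fun_prop) (hd i).continuousAt
    exact this.tendsto.mono_left nhdsWithin_le_nhds
  refine (h1.mul h2).congr' ?_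
  filter_upwards [self_mem_nhdsWithin] with t ht
  have htz : t - z ≠ 0 := sub_ne_zero.2 ht
  rw [← Finset.prod_mul_prod_compl S, mul_div_right_comm]
  congr 1
  rw [← Finset.prod_const, ← Finset.prod_div_distrib]
  refine Finset.prod_congr rfl fun i hi => ?_
  rw [slope_def_field, hS i hi]
  field_simp
  ring

lemma hyp_bound_of_tendsto (F : ℝ → ℝ) (m : ℕ) (z A : ℝ)
    (h : Tendsto (fun t => F t / (t - z) ^ m) (𝓝[≠] z) (𝓝 A)) :
    ∀ᶠ t in 𝓝[≠] z, |F t| ≤ (|A| + 1) * |t - z| ^ m := by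
  have := h.abs.eventually (gt_mem_nhds (lt_add_one |A|))
  filter_upwards [this, self_mem_nhdsWithin] with t ht htz
  have hp : 0 < |t - z| := abs_pos.2 (sub_ne_zero.2 htz)
  rw [abs_div, abs_pow, div_lt_iff₀ (by positivity)] at ht
  exact ht.le

lemma hyp_inj (n : ℕ) (P : ℝ → ℝ → ℝ) (hPc : ContDiff ℝ n (fun q : ℝ × ℝ => P q.1 q.2))
    (lam : Fin n → ℝ → ℝ) (hd : ∀ i, Differentiable ℝ (lam i))
    (hP : ∀ t x, P t x = ∏ i, (x - lam i t)) (i0 : Fin n) (t0 μ : ℝ)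
    (hμ : ∀ i, lam i t0 = lam i0 t0 → deriv (lam i) t0 ≠ μ) :
    ∃ δ > 0, InjOn (fun t => lam i0 t - μ * t) (Ioo (t0 - δ) (t0 + δ)) := by
  classical
  set G : Finset (Fin n) := Finset.univ.filter (fun i => lam i t0 = lam i0 t0) with hG
  have hmn : G.card ≤ n := by simpa using Finset.card_le_univ G
  set m := G.card with hm
  let Φ : ℝ × ℝ → ℝ := fun q => P q.2 (μ * q.2 + q.1)
  have hΦn : ContDiff ℝ n Φ := by
    have : ContDiff ℝ n (fun q : ℝ × ℝ => (q.2, μ * q.2 + q.1)) := by fun_prop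
    exact hPc.comp this
  have hΦ : ∀ k ≤ n, ContDiff ℝ k Φ := fun k hk => hΦn.of_le (by exact_mod_cast hk)
  have hΦc : ∀ c, ∀ k ≤ n, ContDiff ℝ k (fun t => Φ (c, t)) := fun c k hk =>
    (hΦ k hk).comp (by fun_prop)
  have hΦe : ∀ c t, Φ (c, t) = ∏ i, (μ * t + c - lam i t) := fun c t => hP _ _
  have hvan : ∀ (c z : ℝ) (S : Finset (Fin n)), (∀ i ∈ S, lam i z = μ * z + c) →
      ∀ j < S.card, iteratedDeriv j (fun t => Φ (c, t)) z = 0 := by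
    intro c z S hS
    have hSn : S.card ≤ n := by simpa using Finset.card_le_univ S
    have h1 := hyp_limit n lam (fun i => deriv (lam i) z) z μ c
      (fun i => (hd i z).hasDerivAt) S hS
    simp only [← hΦe] at h1
    exact hyp_vanish _ S.card (hΦc c _ hSn) z _
      (hyp_bound_of_tendsto (fun t => Φ (c, t)) _ z _ h1)
  set c0 := lam i0 t0 - μ * t0 with hc0
  have hGc : ∀ i ∈ G, lam i t0 = μ * t0 + c0 := by
    intro i hi
    have : lam i t0 = lam i0 t0 := by simpa [hG] using hi
    rw [this, hc0]; ring
  have hD0 : iteratedDeriv m (fun t => Φ (c0, t)) t0 ≠ 0 := by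
    have h1 := hyp_limit n lam (fun i => deriv (lam i) t0) t0 μ c0
      (fun i => (hd i t0).hasDerivAt) G hGc
    simp only [← hΦe] at h1
    have h2 := hyp_taylor _ m (hΦc c0 m hmn) t0 (hvan c0 t0 G hGc)
    have h3 := tendsto_nhds_unique h2 h1
    intro h0
    rw [h0, zero_div] at h3
    refine mul_ne_zero ?_ ?_ h3.symm
    · rw [Finset.prod_ne_zero_iff]
      intro i hi
      have : lam i t0 = lam i0 t0 := by simpa [hG] using hi
      exact sub_ne_zero.2 (hμ i this).symm
    · rw [Finset.prod_ne_zero_iff]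
      intro i hi
      have : lam i t0 ≠ lam i0 t0 := by simpa [hG] using hi
      rw [hc0]
      intro h
      apply this
      linarith
  have hcont := hyp_joint m Φ (hΦ m hmn)
  obtain ⟨δ, hδ, hδ'⟩ : ∃ δ > 0, ∀ c t, |c - c0| < δ → |t - t0| < δ →
      iteratedDeriv m (fun t => Φ (c, t)) t ≠ 0 := by
    have := hcont.continuousAt.eventually_ne (x := (c0, t0)) hD0
    obtain ⟨δ, hδ, h⟩ := Metric.eventually_nhds_iff.1 this
    refine ⟨δ, hδ, fun c t h1 h2 => @h (c, t) ?_⟩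
    rw [Prod.dist_eq]
    exact max_lt h1 h2
  let w : Fin n → ℝ := fun i => deriv (lam i) t0 - μ
  have hw : ∀ i ∈ G, w i ≠ 0 := fun i hi =>
    sub_ne_zero.2 (hμ i (by simpa [hG] using hi))
  have hsl : ∀ᶠ t in 𝓝[≠] t0, ∀ i ∈ G, 0 < w i * ((lam i t - μ * t - c0) / (t - t0)) := by
    rw [Filter.eventually_all_finset]
    intro i hi
    have h1 : Tendsto (fun t => w i * (slope (lam i) t0 t - μ)) (𝓝[≠] t0) (𝓝 (w i * w i)) :=
      ((hasDerivAt_iff_tendsto_slope.1 (hd i t0).hasDerivAt).sub_const μ).const_mul _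
    have h2 := h1.eventually (lt_mem_nhds (mul_self_pos.2 (hw i hi)))
    filter_upwards [h2, self_mem_nhdsWithin] with t ht htz
    have : t - t0 ≠ 0 := sub_ne_zero.2 htz
    have e : (lam i t - μ * t - c0) / (t - t0) = slope (lam i) t0 t - μ := by
      rw [slope_def_field, hGc i hi]
      field_simp
      ring
    rw [e]
    exact ht
  obtain ⟨tm, htm1, htm2, htm⟩ : ∃ t, t0 - δ < t ∧ t < t0 ∧
      ∀ i ∈ G, 0 < w i * ((lam i t - μ * t - c0) / (t - t0)) := by
    have e1 : ∀ᶠ t in 𝓝[<] t0, t ∈ Ioo (t0 - δ) t0 := Ioo_mem_nhdsLT (by linarith)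
    obtain ⟨t, ht⟩ := (e1.and (hsl.filter_mono (nhdsWithin_mono t0 (fun x hx => ne_of_lt hx)))).exists
    exact ⟨t, ht.1.1, ht.1.2, ht.2⟩
  obtain ⟨tp, htp1, htp2, htp⟩ : ∃ t, t0 < t ∧ t < t0 + δ ∧
      ∀ i ∈ G, 0 < w i * ((lam i t - μ * t - c0) / (t - t0)) := by
    have e1 : ∀ᶠ t in 𝓝[>] t0, t ∈ Ioo t0 (t0 + δ) := Ioo_mem_nhdsGT (by linarith)
    obtain ⟨t, ht⟩ := (e1.and (hsl.filter_mono (nhdsWithin_mono t0 (fun x hx => ne_of_gt hx)))).exists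
    exact ⟨t, ht.1.1, ht.1.2, ht.2⟩
  have hm1 : ∀ i ∈ G, w i * (lam i tm - μ * tm - c0) < 0 := by
    intro i hi
    have := htm i hi
    rw [← mul_div_assoc] at this
    rcases div_pos_iff.1 this with h | h
    · linarith [h.2]
    · exact h.1
  have hp1 : ∀ i ∈ G, 0 < w i * (lam i tp - μ * tp - c0) := by
    intro i hi
    have := htp i hi
    rw [← mul_div_assoc] at this
    rcases div_pos_iff.1 this with h | h
    · exact h.1
    · linarith [h.2]
  have hcs : ∀ᶠ c in 𝓝 c0, (∀ i ∈ G, w i * (lam i tm - μ * tm - c) < 0) ∧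
      (∀ i ∈ G, 0 < w i * (lam i tp - μ * tp - c)) ∧ |c - c0| < δ := by
    refine Eventually.and ?_ (Eventually.and ?_ ?_)
    · rw [Filter.eventually_all_finset]
      intro i hi
      have : ContinuousAt (fun c => w i * (lam i tm - μ * tm - c)) c0 := by fun_prop
      exact this.eventually (gt_mem_nhds (hm1 i hi))
    · rw [Filter.eventually_all_finset]
      intro i hi
      have : ContinuousAt (fun c => w i * (lam i tp - μ * tp - c)) c0 := by fun_prop
      exact this.eventually (lt_mem_nhds (hp1 i hi))
    · exact Metric.ball_mem_nhds c0 hδ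
  have hgc : ∀ i, Continuous (fun t => lam i t - μ * t) := fun i =>
    (hd i).continuous.sub (by fun_prop)
  have hts : ∀ᶠ t in 𝓝 t0, (((∀ i ∈ G, w i * (lam i tm - μ * tm - (lam i0 t - μ * t)) < 0) ∧
      (∀ i ∈ G, 0 < w i * (lam i tp - μ * tp - (lam i0 t - μ * t))) ∧
        |(lam i0 t - μ * t) - c0| < δ) ∧ t ∈ Ioo tm tp) :=
    ((hgc i0).continuousAt.eventually hcs).and (Ioo_mem_nhds htm2 htp1)
  obtain ⟨η, hη, hη'⟩ := Metric.eventually_nhds_iff.1 hts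
  refine ⟨η, hη, ?_⟩
  intro t1 ht1 t2 ht2 heq
  by_contra hne
  have A1 := @hη' t1 (by rw [Real.dist_eq, abs_lt]; constructor <;> linarith [ht1.1, ht1.2])
  have A2 := @hη' t2 (by rw [Real.dist_eq, abs_lt]; constructor <;> linarith [ht2.1, ht2.2])
  dsimp only at heq
  set c := lam i0 t1 - μ * t1 with hc
  have hcross : ∀ i, ∃ τ, tm ≤ τ ∧ τ ≤ tp ∧ (i ∈ G → lam i τ - μ * τ = c) ∧ (i = i0 → τ = t1) := by
    intro i
    by_cases hi0 : i = i0
    · subst hi0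
      exact ⟨t1, A1.2.1.le, A1.2.2.le, fun _ => rfl, fun _ => rfl⟩
    by_cases hi : i ∈ G
    · have l1 := A1.1.1 i hi
      have l2 := A1.1.2.1 i hi
      have hle : tm ≤ tp := by linarith
      have : (0 : ℝ) ∈ (fun t => w i * (lam i t - μ * t - c)) '' Icc tm tp := by
        apply intermediate_value_Icc hle (Continuous.continuousOn
          (((hgc i).sub continuous_const).const_smul (w i)))
        exact ⟨l1.le, l2.le⟩
      obtain ⟨τ, hτ, hτ'⟩ := this
      refine ⟨τ, hτ.1, hτ.2, fun _ => ?_, fun h => absurd h hi0⟩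
      have := (mul_eq_zero.1 hτ').resolve_left (hw i hi)
      linarith
    · exact ⟨tm, le_rfl, by linarith, fun h => absurd h hi, fun h => absurd h hi0⟩
  choose τ hτ1 hτ2 hτ3 hτ4 using hcross
  have hi0G : i0 ∈ G := by simp [hG]
  obtain ⟨ξ, hξ1, hξ2, hξ3⟩ := hyp_count (fun t => Φ (c, t)) m (hΦc c m hmn) (ι := Option G)
    (by simp [hm]) (fun o => o.elim t2 (fun i => τ i)) tm tp (by
      intro o
      cases o with
      | none => exact ⟨A2.2.1.le, A2.2.2.le⟩
      | some i => exact ⟨hτ1 i, hτ2 i⟩) (by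
      intro z j hj
      let u : Option G → Fin n := fun o => o.elim i0 (fun i => i)
      refine hvan c z ((Finset.univ.filter
        (fun o : Option G => o.elim t2 (fun i => τ i) = z)).image u) ?_ j ?_
      · intro i hi
        obtain ⟨o, ho, rfl⟩ := Finset.mem_image.1 hi
        have ho' : o.elim t2 (fun i => τ i) = z := by simpa using ho
        cases o with
        | none =>
          simp only [Option.elim_none] at ho'
          subst ho'
          show lam i0 t2 = _
          linarith
        | some i =>
          simp only [Option.elim_some] at ho'
          subst ho'
          show lam i _ = _
          linarith [hτ3 i i.2]
      · rw [Finset.card_image_of_injOn]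
        · exact hj
        · intro o ho o' ho' huu
          have e1 : o.elim t2 (fun i => τ i) = z := by simpa using ho
          have e2 : o'.elim t2 (fun i => τ i) = z := by simpa using ho'
          cases o with
          | none =>
            cases o' with
            | none => rfl
            | some i =>
              exfalso
              have hi : i0 = i := huu
              simp only [Option.elim_none, Option.elim_some] at e1 e2
              rw [hτ4 i hi.symm] at e2
              exact hne (e2.trans e1.symm)
          | some i =>
            cases o' with
            | none =>
              exfalso
              have hi : i = i0 := huu
              simp only [Option.elim_none, Option.elim_some] at e1 e2
              rw [hτ4 i hi] at e1
              exact hne (e1.trans e2.symm)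
            | some i' =>
              have : (i : Fin n) = i' := huu
              rw [Subtype.ext this])
  refine hδ' c ξ A1.1.2.2 ?_ hξ3
  rw [abs_lt]
  constructor <;> linarith

lemma hyp_C1 (n : ℕ) (P : ℝ → ℝ → ℝ) (hPc : ContDiff ℝ n (fun q : ℝ × ℝ => P q.1 q.2))
    (lam : Fin n → ℝ → ℝ) (hd : ∀ i, Differentiable ℝ (lam i))
    (hP : ∀ t x, P t x = ∏ i, (x - lam i t)) (i0 : Fin n) : ContDiff ℝ 1 (lam i0) := by
  rw [contDiff_one_iff_deriv]
  refine ⟨hd i0, continuous_iff_continuousAt.2 fun t0 => ?_⟩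
  set q := deriv (lam i0) t0 with hq
  have hgd : ∀ μ t, HasDerivAt (fun t => lam i0 t - μ * t) (deriv (lam i0) t - μ) t := by
    intro μ t
    have h1 : HasDerivAt (fun t : ℝ => μ * t) μ t := by
      simpa using (hasDerivAt_id t).const_mul μ
    exact (hd i0 t).hasDerivAt.sub h1
  have key : ∀ μ, (∀ i, deriv (lam i) t0 ≠ μ) → ∃ δ > 0,
      StrictMonoOn (fun t => lam i0 t - μ * t) (Ioo (t0 - δ) (t0 + δ)) ∨
      StrictAntiOn (fun t => lam i0 t - μ * t) (Ioo (t0 - δ) (t0 + δ)) := by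
    intro μ hμ
    obtain ⟨δ, hδ, h⟩ := hyp_inj n P hPc lam hd hP i0 t0 μ (fun i _ => hμ i)
    refine ⟨δ, hδ, ContinuousOn.strictMonoOn_of_injOn_Ioo (by linarith) ?_ h⟩
    exact ((hd i0).continuous.sub (by fun_prop)).continuousOn
  have hmono : ∀ μ δ, StrictMonoOn (fun t => lam i0 t - μ * t) (Ioo (t0 - δ) (t0 + δ)) →
      ∀ t ∈ Ioo (t0 - δ) (t0 + δ), μ ≤ deriv (lam i0) t := by
    intro μ δ h t ht
    have h1 := (hgd μ t).hasDerivWithinAt (s := Ioo (t0 - δ) (t0 + δ))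
    have h2 := h.monotoneOn.derivWithin_nonneg (x := t)
    rw [h1.derivWithin (isOpen_Ioo.uniqueDiffWithinAt ht)] at h2
    linarith
  have hanti : ∀ μ δ, StrictAntiOn (fun t => lam i0 t - μ * t) (Ioo (t0 - δ) (t0 + δ)) →
      ∀ t ∈ Ioo (t0 - δ) (t0 + δ), deriv (lam i0) t ≤ μ := by
    intro μ δ h t ht
    have h1 := (hgd μ t).hasDerivWithinAt (s := Ioo (t0 - δ) (t0 + δ))
    have h2 := h.antitoneOn.derivWithin_nonpos (x := t)
    rw [h1.derivWithin (isOpen_Ioo.uniqueDiffWithinAt ht)] at h2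
    linarith
  have hpick : ∀ a b : ℝ, a < b → ∃ μ ∈ Ioo a b, ∀ i, deriv (lam i) t0 ≠ μ := by
    intro a b hab
    have hfin : (Set.range (fun i => deriv (lam i) t0)).Finite := Set.finite_range _
    obtain ⟨μ, hμ1, hμ2⟩ := ((Ioo_infinite hab).sdiff hfin).nonempty
    exact ⟨μ, hμ1, fun i hi => hμ2 ⟨i, hi⟩⟩
  rw [ContinuousAt, tendsto_order]
  constructor
  · intro b hb
    obtain ⟨μ, hμ, hμ'⟩ := hpick b q hb
    obtain ⟨δ, hδ, h⟩ := key μ hμ'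
    have hmem : t0 ∈ Ioo (t0 - δ) (t0 + δ) := ⟨by linarith, by linarith⟩
    rcases h with h | h
    · filter_upwards [isOpen_Ioo.mem_nhds hmem] with t ht
      exact hμ.1.trans_le (hmono μ δ h t ht)
    · have := hanti μ δ h t0 hmem
      linarith [hμ.2]
  · intro b hb
    obtain ⟨μ, hμ, hμ'⟩ := hpick q b hb
    obtain ⟨δ, hδ, h⟩ := key μ hμ'
    have hmem : t0 ∈ Ioo (t0 - δ) (t0 + δ) := ⟨by linarith, by linarith⟩
    rcases h with h | h
    · have := hmono μ δ h t0 hmem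
      linarith [hμ.1]
    · filter_upwards [isOpen_Ioo.mem_nhds hmem] with t ht
      exact (hanti μ δ h t ht).trans_lt hμ.2


lemma hyp_fin_sel (n : ℕ) (x : Fin n → ℝ → ℝ) (L R : ℝ → Fin n → ℝ × ℝ)
    (hm : ∀ t0, ∃ τ : Equiv.Perm (Fin n), (∀ i, x (τ i) t0 = x i t0) ∧ ∀ i, R t0 (τ i) = L t0 i)
    (T : Finset ℝ) :
    ∃ σ : ℝ → Equiv.Perm (Fin n),
      (∀ (J : Set ℝ) (c : Fin n → ℝ × ℝ), J.OrdConnected →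
        (∀ t ∈ J, ∀ i j, x i t = x j t → c i = c j) →
        ∀ t ∈ J, ∀ t' ∈ J, ∀ i, c (σ t i) = c (σ t' i)) ∧
      (∃ s, ∀ t, (∀ u ∈ T, u < t) → σ t = s) ∧
      (∀ t0 ∈ T, ∀ ε > 0, ∃ t t', t0 - ε < t ∧ t < t0 ∧ t0 < t' ∧ t' < t0 + ε ∧
        ∀ i, L t0 (σ t i) = R t0 (σ t' i)) := by
  induction T using Finset.induction_on_max with
  | empty => exact ⟨fun _ => 1, by simp, ⟨1, by simp⟩, by simp⟩
  | insert b T hb ih =>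
    obtain ⟨σ, h1, ⟨s, h2⟩, h3⟩ := ih
    obtain ⟨τ, hτ1, hτ2⟩ := hm b
    have hgt : ∀ t, b < t → σ t = s := fun t ht => h2 t fun u hu => (hb u hu).trans ht
    refine ⟨fun t => if b < t then τ * σ t else σ t, ?_, ⟨τ * s, ?_⟩, ?_⟩
    · intro J c hJ hc
      have key : ∀ t ∈ J, ∀ t' ∈ J, t ≤ b → b < t' → ∀ i, c (σ t i) = c ((τ * σ t') i) := by
        intro t ht t' ht' h h' i
        have hbJ : b ∈ J := hJ.out ht ht' ⟨h, h'.le⟩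
        rw [h1 J c hJ hc t ht t' ht' i, Equiv.Perm.mul_apply]
        exact (hc b hbJ _ _ (hτ1 _)).symm
      intro t ht t' ht' i
      by_cases h : b < t <;> by_cases h' : b < t' <;> simp only [h, h', if_true, if_false]
      · rw [hgt t h, hgt t' h']
      · exact (key t' ht' t ht (not_lt.1 h') h i).symm
      · exact key t ht t' ht' (not_lt.1 h) h' i
      · exact h1 J c hJ hc t ht t' ht' i
    · intro t ht
      have hbt : b < t := ht b (Finset.mem_insert_self _ _)
      simp only [hbt, if_true, hgt t hbt]
    · intro t0 ht0 ε hε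
      rcases Finset.mem_insert.1 ht0 with rfl | ht0
      · -- the new point
        obtain ⟨t, ht, htT⟩ : ∃ t, (t0 - ε < t ∧ t < t0) ∧ ∀ u ∈ T, u < t := by
          have e1 : ∀ᶠ t in 𝓝[<] t0, ∀ u ∈ T, u < t := by
            rw [Filter.eventually_all_finset]
            intro u hu
            exact mem_nhdsWithin_of_mem_nhds (Ioi_mem_nhds (hb u hu))
          have e2 : ∀ᶠ t in 𝓝[<] t0, t0 - ε < t ∧ t < t0 :=
            Ioo_mem_nhdsLT (by linarith)
          obtain ⟨t, ht⟩ := (e2.and e1).exists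
          exact ⟨t, ht⟩
        refine ⟨t, t0 + ε / 2, ht.1, ht.2, by linarith, by linarith, fun i => ?_⟩
        have hlt : t0 < t0 + ε / 2 := by linarith
        simp only [not_lt.2 ht.2.le, if_false, hlt, if_true, hgt _ hlt, h2 t htT,
          Equiv.Perm.mul_apply, hτ2]
      · have hlt := hb t0 ht0
        obtain ⟨t, t', e1, e2, e3, e4, e5⟩ := h3 t0 ht0 (min ε (b - t0)) (lt_min hε (by linarith))
        have m1 := min_le_left ε (b - t0)
        have m2 := min_le_right ε (b - t0)
        refine ⟨t, t', by linarith, e2, e3, by linarith, fun i => ?_⟩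
        have n1 : ¬ b < t := by linarith
        have n2 : ¬ b < t' := by linarith
        simp only [n1, n2, if_false, e5]

lemma hyp_sel (n : ℕ) (x : Fin n → ℝ → ℝ) (L R : ℝ → Fin n → ℝ × ℝ)
    (hL : ∀ t i, (L t i).1 = x i t) (hR : ∀ t i, (R t i).1 = x i t)
    (hm : ∀ t0, ∃ τ : Equiv.Perm (Fin n), ∀ i, R t0 (τ i) = L t0 i)
    (δ : ℝ → ℝ) (hδ : ∀ t, 0 < δ t)
    (hδL : ∀ t0 t, t0 - δ t0 < t → t < t0 → ∀ i j, x i t = x j t → L t0 i = L t0 j)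
    (hδR : ∀ t0 t, t0 < t → t < t0 + δ t0 → ∀ i j, x i t = x j t → R t0 i = R t0 j) :
    ∃ σ : ℝ → Equiv.Perm (Fin n), ∀ t0, ∃ π : Equiv.Perm (Fin n),
      (∀ t, t0 - δ t0 < t → t < t0 → ∀ i, L t0 (σ t i) = L t0 (π i)) ∧
      (∀ t, t0 < t → t < t0 + δ t0 → ∀ i, R t0 (σ t i) = L t0 (π i)) ∧
      (∀ i, x (σ t0 i) t0 = x (π i) t0) := by
  let _ : TopologicalSpace (Equiv.Perm (Fin n)) := ⊥
  have : DiscreteTopology (Equiv.Perm (Fin n)) := ⟨rfl⟩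
  let K : ℝ → Set (ℝ → Equiv.Perm (Fin n)) := fun t0 => {σ | ∃ π : Equiv.Perm (Fin n),
      (∀ t, t0 - δ t0 < t → t < t0 → ∀ i, L t0 (σ t i) = L t0 (π i)) ∧
      (∀ t, t0 < t → t < t0 + δ t0 → ∀ i, R t0 (σ t i) = L t0 (π i)) ∧
      (∀ i, x (σ t0 i) t0 = x (π i) t0)}
  have hev : ∀ (t : ℝ) (p : Equiv.Perm (Fin n) → Prop),
      IsClosed {σ : ℝ → Equiv.Perm (Fin n) | p (σ t)} := by
    intro t p
    exact (isClosed_discrete {s | p s}).preimage (continuous_apply t)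
  have hK : ∀ t0, IsClosed (K t0) := by
    intro t0
    have : K t0 = ⋃ π : Equiv.Perm (Fin n), {σ |
      (∀ t, t0 - δ t0 < t → t < t0 → ∀ i, L t0 (σ t i) = L t0 (π i)) ∧
      (∀ t, t0 < t → t < t0 + δ t0 → ∀ i, R t0 (σ t i) = L t0 (π i)) ∧
      (∀ i, x (σ t0 i) t0 = x (π i) t0)} := by
      ext σ; simp [K]
    rw [this]
    refine isClosed_iUnion_of_finite fun π => ?_
    refine IsClosed.and ?_ (IsClosed.and ?_ ?_)
    · simp only [Set.ofPred_forall]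
      refine isClosed_iInter fun t => isClosed_iInter fun _ => isClosed_iInter fun _ =>
        isClosed_iInter fun i => hev t (fun s => L t0 (s i) = L t0 (π i))
    · simp only [Set.ofPred_forall]
      refine isClosed_iInter fun t => isClosed_iInter fun _ => isClosed_iInter fun _ =>
        isClosed_iInter fun i => hev t (fun s => R t0 (s i) = L t0 (π i))
    · exact hev t0 (fun s => ∀ i, x (s i) t0 = x (π i) t0)
  have hne := isCompact_univ.inter_iInter_nonempty K hK (by
    intro T
    obtain ⟨σ, h1, -, h3⟩ := hyp_fin_sel n x L R (by
      intro t0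
      obtain ⟨τ, hτ⟩ := hm t0
      refine ⟨τ, fun i => ?_, hτ⟩
      rw [← hR, hτ, hL]) T
    refine ⟨σ, mem_univ _, ?_⟩
    simp only [mem_iInter]
    intro t0 ht0
    obtain ⟨t1, t2, e1, e2, e3, e4, e5⟩ := h3 t0 ht0 (δ t0) (hδ t0)
    have cl : ∀ t, t0 - δ t0 < t → t < t0 → ∀ i, L t0 (σ t i) = L t0 (σ t1 i) := fun t ha hb i =>
      h1 (Ioo (t0 - δ t0) t0) (L t0) ordConnected_Ioo (fun t ht => hδL t0 t ht.1 ht.2)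
        t ⟨ha, hb⟩ t1 ⟨e1, e2⟩ i
    refine ⟨σ t1, cl, ?_, ?_⟩
    · intro t ha hb i
      rw [e5]
      exact h1 (Ioo t0 (t0 + δ t0)) (R t0) ordConnected_Ioo (fun t ht => hδR t0 t ht.1 ht.2)
        t ⟨ha, hb⟩ t2 ⟨e3, e4⟩ i
    · intro i
      have := h1 (Ioo (t0 - δ t0) (t0 + δ t0)) (fun i => (x i t0, 0)) ordConnected_Ioo (by
        intro t ht i j hij
        rcases lt_trichotomy t t0 with h | h | h
        · have := hδL t0 t ht.1 h i j hij
          simp only [← hL, this]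
        · subst h; simp [hij]
        · have := hδR t0 t h ht.2 i j hij
          simp only [← hR, this]) t0 ⟨by linarith [hδ t0], by linarith [hδ t0]⟩ t1
            ⟨e1, by linarith⟩ i
      exact congrArg Prod.fst this)
  obtain ⟨σ, -, hσ⟩ := hne
  exact ⟨σ, fun t0 => mem_iInter.1 hσ t0⟩

lemma hyp_sel_diff (n : ℕ) (x : Fin n → ℝ → ℝ) (l r : ℝ → Fin n → ℝ)
    (hl : ∀ t i, HasDerivWithinAt (x i) (l t i) (Iio t) t)
    (hr : ∀ t i, HasDerivWithinAt (x i) (r t i) (Ioi t) t)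
    (hm : ∀ t, ∃ τ : Equiv.Perm (Fin n), ∀ i, x (τ i) t = x i t ∧ r t (τ i) = l t i) :
    ∃ σ : ℝ → Equiv.Perm (Fin n), ∀ i, Differentiable ℝ (fun t => x (σ t i) t) := by
  have sepR : ∀ t0, ∃ d > 0, ∀ t, t0 < t → t < t0 + d → ∀ i j, x i t = x j t →
      (x i t0, r t0 i) = (x j t0, r t0 j) := by
    intro t0
    have : ∀ᶠ t in 𝓝[>] t0, ∀ i j, x i t = x j t → (x i t0, r t0 i) = (x j t0, r t0 j) := by
      rw [eventually_all]; intro i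
      rw [eventually_all]; intro j
      by_cases h : (x i t0, r t0 i) = (x j t0, r t0 j)
      · exact Eventually.of_forall fun _ _ => h
      · have hd := (hr t0 i).sub (hr t0 j)
        have hne : ∀ᶠ t in 𝓝[>] t0, (x i - x j) t ≠ 0 := by
          by_cases h1 : r t0 i = r t0 j
          · have : (x i - x j) t0 ≠ 0 := by
              intro h0
              apply h
              have h2 : x i t0 = x j t0 := sub_eq_zero.1 h0
              rw [h1, h2]
            exact hd.continuousWithinAt.eventually_ne this
          · have := hd.eventually_ne (c := 0) (sub_ne_zero.2 h1)
            simpa using this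
        filter_upwards [hne] with t ht h0
        exact absurd (by simp [h0]) ht
    obtain ⟨u, hu, hu'⟩ := mem_nhdsGT_iff_exists_Ioo_subset.1 this
    refine ⟨u - t0, sub_pos.2 hu, fun t h1 h2 => hu' ⟨h1, by linarith⟩⟩
  have sepL : ∀ t0, ∃ d > 0, ∀ t, t0 - d < t → t < t0 → ∀ i j, x i t = x j t →
      (x i t0, l t0 i) = (x j t0, l t0 j) := by
    intro t0
    have : ∀ᶠ t in 𝓝[<] t0, ∀ i j, x i t = x j t → (x i t0, l t0 i) = (x j t0, l t0 j) := by
      rw [eventually_all]; intro i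
      rw [eventually_all]; intro j
      by_cases h : (x i t0, l t0 i) = (x j t0, l t0 j)
      · exact Eventually.of_forall fun _ _ => h
      · have hd := (hl t0 i).sub (hl t0 j)
        have hne : ∀ᶠ t in 𝓝[<] t0, (x i - x j) t ≠ 0 := by
          by_cases h1 : l t0 i = l t0 j
          · have : (x i - x j) t0 ≠ 0 := by
              intro h0
              apply h
              have h2 : x i t0 = x j t0 := sub_eq_zero.1 h0
              rw [h1, h2]
            exact hd.continuousWithinAt.eventually_ne this
          · have := hd.eventually_ne (c := 0) (sub_ne_zero.2 h1)
            simpa using this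
        filter_upwards [hne] with t ht h0
        exact absurd (by simp [h0]) ht
    obtain ⟨u, hu, hu'⟩ := mem_nhdsLT_iff_exists_Ioo_subset.1 this
    refine ⟨t0 - u, sub_pos.2 hu, fun t h1 h2 => hu' ⟨by linarith, h2⟩⟩
  choose dR hdR hdR' using sepR
  choose dL hdL hdL' using sepL
  obtain ⟨σ, hσ⟩ := hyp_sel n x (fun t i => (x i t, l t i)) (fun t i => (x i t, r t i))
    (fun _ _ => rfl) (fun _ _ => rfl) (by
      intro t0
      obtain ⟨τ, hτ⟩ := hm t0
      exact ⟨τ, fun i => by simp only [(hτ i).1, (hτ i).2]⟩)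
    (fun t => min (dL t) (dR t)) (fun t => lt_min (hdL t) (hdR t))
    (fun t0 t h1 h2 => hdL' t0 t (by have := min_le_left (dL t0) (dR t0); linarith) h2)
    (fun t0 t h1 h2 => hdR' t0 t h1 (by have := min_le_right (dL t0) (dR t0); linarith))
  refine ⟨σ, fun i t0 => ?_⟩
  obtain ⟨π, h1, h2, h3⟩ := hσ t0
  have hδ : 0 < min (dL t0) (dR t0) := lt_min (hdL t0) (hdR t0)
  have hL : HasDerivWithinAt (fun t => x (σ t i) t) (l t0 (π i)) (Iio t0) t0 := by
    rw [hasDerivWithinAt_iff_tendsto_slope' (by simp)]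
    have hall : ∀ j, Tendsto (slope (x j) t0) (𝓝[<] t0) (𝓝 (l t0 j)) := fun j =>
      (hasDerivWithinAt_iff_tendsto_slope' (by simp)).1 (hl t0 j)
    rw [Metric.tendsto_nhds]
    intro ε hε
    have hev : ∀ᶠ t in 𝓝[<] t0, ∀ j, dist (slope (x j) t0 t) (l t0 j) < ε := by
      rw [eventually_all]; intro j
      exact Metric.tendsto_nhds.1 (hall j) ε hε
    have hI : ∀ᶠ t in 𝓝[<] t0, t ∈ Ioo (t0 - min (dL t0) (dR t0)) t0 :=
      Ioo_mem_nhdsLT (by linarith)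
    filter_upwards [hev, hI] with t ht hI
    have e := h1 t hI.1 hI.2 i
    simp only [Prod.mk.injEq] at e
    have := ht (σ t i)
    rw [e.2] at this
    convert this using 2
    simp only [slope_def_field, e.1, h3]
  have hR : HasDerivWithinAt (fun t => x (σ t i) t) (l t0 (π i)) (Ioi t0) t0 := by
    rw [hasDerivWithinAt_iff_tendsto_slope' (by simp)]
    have hall : ∀ j, Tendsto (slope (x j) t0) (𝓝[>] t0) (𝓝 (r t0 j)) := fun j =>
      (hasDerivWithinAt_iff_tendsto_slope' (by simp)).1 (hr t0 j)
    rw [Metric.tendsto_nhds]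
    intro ε hε
    have hev : ∀ᶠ t in 𝓝[>] t0, ∀ j, dist (slope (x j) t0 t) (r t0 j) < ε := by
      rw [eventually_all]; intro j
      exact Metric.tendsto_nhds.1 (hall j) ε hε
    have hI : ∀ᶠ t in 𝓝[>] t0, t ∈ Ioo t0 (t0 + min (dL t0) (dR t0)) :=
      Ioo_mem_nhdsGT (by linarith)
    filter_upwards [hev, hI] with t ht hI
    have e := h2 t hI.1 hI.2 i
    simp only [Prod.mk.injEq] at e
    have := ht (σ t i)
    rw [e.2] at this
    convert this using 2
    simp only [slope_def_field, e.1, h3]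
  have hU := hL.union hR
  rw [Iio_union_Ioi, compl_eq_univ_sdiff, hasDerivWithinAt_sdiff_singleton,
    hasDerivWithinAt_univ] at hU
  exact hU.differentiableAt


lemma hyp_fin_of_multiset {α : Type} (s : Multiset α) (n : ℕ) (h : Multiset.card s = n) :
    ∃ g : Fin n → α, Finset.univ.val.map g = s := by
  induction s using Quot.inductionOn with
  | h l =>
    have h2 : l.length = n := h
    subst h2
    exact ⟨l.get, by rw [Fin.univ_val_map, List.ofFn_get]; rfl⟩

lemma hyp_sorted_roots (n : ℕ) (b : Fin n → ℝ)
    (hhyp : ∀ z : ℂ,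
      z ^ n + ∑ j : Fin n, (-1 : ℂ) ^ ((j : ℕ) + 1) * (b j : ℂ) * z ^ (n - ((j : ℕ) + 1)) = 0 →
        z.im = 0) :
    ∃ f : Fin n → ℝ, Monotone f ∧ ∀ x : ℝ,
      x ^ n + ∑ j : Fin n, (-1 : ℝ) ^ ((j : ℕ) + 1) * b j * x ^ (n - ((j : ℕ) + 1)) =
        ∏ i, (x - f i) := by
  classical
  set q : Polynomial ℂ := ∑ j : Fin n, Polynomial.C ((-1 : ℂ) ^ ((j : ℕ) + 1) * (b j : ℂ)) *
    Polynomial.X ^ (n - ((j : ℕ) + 1)) with hq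
  have hqd : q.degree < n := by
    rw [hq]
    refine lt_of_le_of_lt (Polynomial.degree_sum_le _ _) ?_
    rw [Finset.sup_lt_iff (WithBot.bot_lt_coe _)]
    intro j _
    refine lt_of_le_of_lt (Polynomial.degree_C_mul_X_pow_le _ _) ?_
    have := j.2
    exact_mod_cast (by omega : n - ((j : ℕ) + 1) < n)
  set p : Polynomial ℂ := Polynomial.X ^ n + q with hp
  have hmon : p.Monic := Polynomial.monic_X_pow_add hqd
  have hdeg : p.natDegree = n := by
    apply Polynomial.natDegree_eq_of_degree_eq_some
    rw [hp, Polynomial.degree_add_eq_left_of_degree_lt] <;> rw [Polynomial.degree_X_pow]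
    exact hqd
  have heval : ∀ z : ℂ, p.eval z =
      z ^ n + ∑ j : Fin n, (-1 : ℂ) ^ ((j : ℕ) + 1) * (b j : ℂ) * z ^ (n - ((j : ℕ) + 1)) := by
    intro z
    simp [hp, hq, Polynomial.eval_finsetSum]
  have hs := IsAlgClosed.splits p
  have hc : Multiset.card p.roots = n := by rw [← hs.natDegree_eq_card_roots, hdeg]
  obtain ⟨g, hg⟩ := hyp_fin_of_multiset p.roots n hc
  have hprod : ∀ z : ℂ, p.eval z = ∏ i, (z - g i) := by
    intro z
    rw [hs.eval_eq_prod_roots_of_monic hmon, ← hg, Multiset.map_map]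
    rfl
  have him : ∀ i, (g i).im = 0 := by
    intro i
    apply hhyp
    rw [← heval, hprod]
    exact Finset.prod_eq_zero (Finset.mem_univ i) (sub_self _)
  let f0 : Fin n → ℝ := fun i => (g i).re
  have hf0 : ∀ i, ((f0 i : ℝ) : ℂ) = g i := fun i => Complex.ext (by simp [f0]) (by simp [him i])
  refine ⟨f0 ∘ Tuple.sort f0, Tuple.monotone_sort f0, fun x => ?_⟩
  have h1 := Equiv.prod_comp (Tuple.sort f0) (fun i => x - f0 i)
  simp only [Function.comp]
  rw [h1]
  have h2 : p.eval (x : ℂ) = ∏ i, ((x : ℂ) - (f0 i : ℂ)) := by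
    rw [hprod]; simp [hf0]
  rw [heval] at h2
  exact_mod_cast h2

lemma hyp_ms {ι κ : Type} [Fintype ι] [Fintype κ] (z : ι → ℝ) (w : κ → ℝ)
    (h : ∀ μ : ℝ, ∏ i, (μ - z i) = ∏ i, (μ - w i)) :
    Finset.univ.val.map z = Finset.univ.val.map w := by
  have key : (((Finset.univ.val.map z).map (fun a => Polynomial.X - Polynomial.C a)).prod :
      Polynomial ℝ) = ((Finset.univ.val.map w).map (fun a => Polynomial.X - Polynomial.C a)).prod := by
    apply Polynomial.funext
    intro r
    have e := h r
    rw [Multiset.map_map, Multiset.map_map]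
    change Polynomial.eval r (∏ i, (Polynomial.X - Polynomial.C (z i))) =
      Polynomial.eval r (∏ i, (Polynomial.X - Polynomial.C (w i)))
    simpa [Polynomial.eval_prod] using e
  have := congrArg Polynomial.roots key
  rwa [Polynomial.roots_multiset_prod_X_sub_C, Polynomial.roots_multiset_prod_X_sub_C] at this

lemma hyp_uniq {m : ℕ} (z w : Fin m → ℝ) (hz : Monotone z) (hw : Monotone w)
    (h : ∀ μ : ℝ, ∏ i, (μ - z i) = ∏ i, (μ - w i)) : z = w := by
  have h1 := hyp_ms z w h
  rw [Fin.univ_val_map, Fin.univ_val_map] at h1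
  exact List.ofFn_injective ((Multiset.coe_eq_coe.1 h1).eq_of_pairwise'
    hz.sortedLE_ofFn.pairwise hw.sortedLE_ofFn.pairwise)

lemma hyp_conv {m : ℕ} (l : Filter ℝ) [l.NeBot] (Y : ℝ → Fin m → ℝ) (M : ℝ)
    (hb : ∀ᶠ t in l, ∀ k, |Y t k| ≤ M) (hmono : ∀ᶠ t in l, Monotone (Y t)) (κ : ℝ → ℝ)
    (hk : ∀ μ, Tendsto (fun t => ∏ k, (μ - Y t k)) l (𝓝 (κ μ))) :
    ∃ z, Tendsto Y l (𝓝 z) ∧ Monotone z ∧ ∀ μ, ∏ k, (μ - z k) = κ μ := by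
  have hK : IsCompact (Set.pi univ (fun _ : Fin m => Set.Icc (-M) M)) :=
    isCompact_univ_pi (fun _ => isCompact_Icc)
  have hmem : ∀ᶠ t in l, Y t ∈ Set.pi univ (fun _ : Fin m => Set.Icc (-M) M) := by
    filter_upwards [hb] with t ht k _
    exact abs_le.1 (ht k)
  have hcl : ∀ z, MapClusterPt z l Y → Monotone z ∧ ∀ μ, ∏ k, (μ - z k) = κ μ := by
    intro z hz
    constructor
    · intro i j hij
      have hclosed : IsClosed {w : Fin m → ℝ | w i ≤ w j} :=
        isClosed_le (continuous_apply i) (continuous_apply j)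
      have := hclosed.mem_of_mapClusterPt hz (by
        filter_upwards [hmono] with t ht using ht hij)
      exact this
    · intro μ
      have hcont : Continuous (fun w : Fin m → ℝ => ∏ k, (μ - w k)) := by fun_prop
      have h1 : MapClusterPt (∏ k, (μ - z k)) l (fun t => ∏ k, (μ - Y t k)) :=
        MapClusterPt.continuousAt_comp (f := fun w : Fin m → ℝ => ∏ k, (μ - w k))
          hcont.continuousAt hz
      have h2 : ClusterPt (∏ k, (μ - z k)) (𝓝 (κ μ)) := ClusterPt.mono h1 (hk μ)
      exact eq_of_nhds_neBot h2
  obtain ⟨z, _, hz⟩ := hK.exists_mapClusterPt_of_frequently (l := l) (f := Y) hmem.frequently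
  refine ⟨z, hK.tendsto_nhds_of_unique_mapClusterPt hmem ?_, hcl z hz⟩
  intro w _ hw
  exact hyp_uniq w z (hcl w hw).1 (hcl z hz).1 (fun μ => by rw [(hcl w hw).2, (hcl z hz).2])

lemma hyp_mv_smooth (n : ℕ) (N : ℕ) (a : Fin n → ℝ → ℝ) (ha : ∀ j, ContDiff ℝ N (a j))
    (q : MvPolynomial (Fin n) ℝ) : ContDiff ℝ N (fun t => MvPolynomial.aeval (fun j => a j t) q) := by
  induction q using MvPolynomial.induction_on with
  | C r => simpa using contDiff_const
  | add p q hp hq => simpa using hp.add hq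
  | mul_X p i hp => simpa using hp.mul (ha i)

lemma hyp_esymm (n : ℕ) (b : Fin n → ℝ) (f : Fin n → ℝ)
    (h : ∀ x : ℝ,
      x ^ n + ∑ j : Fin n, (-1 : ℝ) ^ ((j : ℕ) + 1) * b j * x ^ (n - ((j : ℕ) + 1)) =
        ∏ i, (x - f i)) (j : Fin n) :
    b j = MvPolynomial.aeval f (MvPolynomial.esymm (Fin n) ℝ ((j : ℕ) + 1)) := by
  classical
  rw [MvPolynomial.aeval_esymm_eq_multiset_esymm]
  set s := Finset.univ.val.map f with hs
  have hcard : Multiset.card s = n := by simp [hs]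
  have key : (Polynomial.X ^ n + ∑ j : Fin n, Polynomial.C ((-1 : ℝ) ^ ((j : ℕ) + 1) * b j) *
      Polynomial.X ^ (n - ((j : ℕ) + 1)) : Polynomial ℝ) =
      (s.map fun t => Polynomial.X - Polynomial.C t).prod := by
    apply Polynomial.funext
    intro r
    have e := h r
    rw [hs, Multiset.map_map]
    change _ = Polynomial.eval r (∏ i, (Polynomial.X - Polynomial.C (f i)))
    simpa [Polynomial.eval_prod, Polynomial.eval_finsetSum] using e
  have hj := j.2
  have hc := congrArg (fun p => Polynomial.coeff p (n - ((j : ℕ) + 1))) key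
  beta_reduce at hc
  rw [Multiset.prod_X_sub_C_coeff s (by omega), hcard] at hc
  have e1 : n - (n - ((j : ℕ) + 1)) = (j : ℕ) + 1 := by omega
  rw [e1, Polynomial.coeff_add, Polynomial.coeff_X_pow, if_neg (by omega), zero_add,
    Polynomial.finsetSum_coeff, Finset.sum_eq_single j] at hc
  · rw [Polynomial.coeff_C_mul_X_pow, if_pos rfl] at hc
    exact mul_left_cancel₀ (pow_ne_zero _ (by norm_num)) hc
  · intro i _ hij
    rw [Polynomial.coeff_C_mul_X_pow, if_neg]
    have := i.2
    intro h3
    exact hij (Fin.ext (by omega))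
  · simp

lemma hyp_power_smooth (n : ℕ) (a : Fin n → ℝ → ℝ) (ha : ∀ j, ContDiff ℝ n (a j))
    (x : ℝ → Fin n → ℝ)
    (h : ∀ t y : ℝ,
      y ^ n + ∑ j : Fin n, (-1 : ℝ) ^ ((j : ℕ) + 1) * a j t * y ^ (n - ((j : ℕ) + 1)) =
        ∏ i, (y - x t i)) (χ : Polynomial ℝ) :
    ContDiff ℝ n (fun t => ∑ i, χ.eval (x t i)) := by
  classical
  let S : MvPolynomial (Fin n) ℝ := ∑ i, Polynomial.aeval (MvPolynomial.X i) χ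
  have hS : S ∈ MvPolynomial.symmetricSubalgebra (Fin n) ℝ := by
    rw [MvPolynomial.mem_symmetricSubalgebra]
    intro e
    simp only [S, map_sum]
    rw [← Equiv.sum_comp e (fun i => Polynomial.aeval (MvPolynomial.X i : MvPolynomial (Fin n) ℝ) χ)]
    refine Finset.sum_congr rfl fun i _ => ?_
    rw [← Polynomial.aeval_algHom_apply, MvPolynomial.rename_X]
  obtain ⟨q, hq⟩ := MvPolynomial.esymmAlgHom_fin_surjective (R := ℝ) (le_refl n) ⟨S, hS⟩
  have hq2 : MvPolynomial.aeval (fun i : Fin n => MvPolynomial.esymm (Fin n) ℝ (i + 1)) q = S := by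
    rw [← MvPolynomial.esymmAlgHom_apply, hq]
  have e : (fun t => ∑ i, χ.eval (x t i)) = fun t => MvPolynomial.aeval (fun j => a j t) q := by
    funext t
    have h1 : MvPolynomial.aeval (x t) S = ∑ i, χ.eval (x t i) := by
      simp only [S, map_sum]
      refine Finset.sum_congr rfl fun i _ => ?_
      rw [← Polynomial.aeval_algHom_apply, MvPolynomial.aeval_X, Polynomial.coe_aeval_eq_eval]
    rw [← h1, ← hq2]
    have h3 : (fun j => a j t) =
        fun j : Fin n => MvPolynomial.aeval (x t) (MvPolynomial.esymm (Fin n) ℝ ((j : ℕ) + 1)) := by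
      funext j
      exact hyp_esymm n (fun j => a j t) (x t) (h t) j
    rw [h3]
    exact DFunLike.congr_fun (MvPolynomial.comp_aeval
      (fun i : Fin n => MvPolynomial.esymm (Fin n) ℝ ((i : ℕ) + 1)) (MvPolynomial.aeval (x t))) q
  rw [e]
  exact hyp_mv_smooth n n a ha q


lemma hyp_perm_of_ms {ι : Type} [Fintype ι] (r l : ι → ℝ)
    (h : Finset.univ.val.map r = Finset.univ.val.map l) :
    ∃ σ : Equiv.Perm ι, ∀ i, r (σ i) = l i := by
  classical
  have hc : ∀ c : ℝ, Fintype.card {a // l a = c} = Fintype.card {b // r b = c} := by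
    intro c
    have := congrArg (Multiset.count c) h
    rw [Multiset.count_map, Multiset.count_map] at this
    rw [Fintype.card_subtype, Fintype.card_subtype]
    simp only [eq_comm (a := c)] at this
    exact this.symm
  exact ⟨Equiv.ofFiberEquiv (f := l) (g := r) fun c => Fintype.equivOfCardEq (hc c),
    fun i => Equiv.ofFiberEquiv_map _ i⟩

lemma hyp_cont (n : ℕ) (a : Fin n → ℝ → ℝ) (ha : ∀ j, ContDiff ℝ n (a j))
    (x : ℝ → Fin n → ℝ) (hx : ∀ t, Monotone (x t))
    (h : ∀ t y : ℝ,
      y ^ n + ∑ j : Fin n, (-1 : ℝ) ^ ((j : ℕ) + 1) * a j t * y ^ (n - ((j : ℕ) + 1)) =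
        ∏ i, (y - x t i)) : Continuous x := by
  rw [continuous_iff_continuousAt]
  intro t0
  have hS := (hyp_power_smooth n a ha x h (Polynomial.X ^ 2)).continuous
  simp only [Polynomial.eval_pow, Polynomial.eval_X] at hS
  have hb : ∀ᶠ t in 𝓝 t0, ∀ k, |x t k| ≤ (∑ i, x t0 i ^ 2) + 1 + 1 := by
    filter_upwards [hS.continuousAt.eventually (gt_mem_nhds (lt_add_one (∑ i, x t0 i ^ 2)))] with t ht k
    have h1 : x t k ^ 2 ≤ ∑ i, x t i ^ 2 :=
      Finset.single_le_sum (f := fun i => x t i ^ 2) (fun i _ => sq_nonneg _) (Finset.mem_univ k)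
    have h2 : |x t k| ≤ x t k ^ 2 + 1 := by
      rw [← sq_abs]; nlinarith [sq_nonneg (|x t k| - 1), abs_nonneg (x t k)]
    linarith
  have hca : ∀ j, Continuous (a j) := fun j => (ha j).continuous
  obtain ⟨z, hz1, hz2, hz3⟩ := hyp_conv (𝓝 t0) x _ hb (Eventually.of_forall hx)
    (fun μ => ∏ k, (μ - x t0 k)) (fun μ => by
      simp only [← h]
      have : Continuous fun t => μ ^ n +
        ∑ j : Fin n, (-1 : ℝ) ^ ((j : ℕ) + 1) * a j t * μ ^ (n - ((j : ℕ) + 1)) := by fun_prop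
      exact this.continuousAt)
  have := hyp_uniq z (x t0) hz2 (hx t0) hz3
  rw [this] at hz1
  exact hz1

lemma hyp_lip (n : ℕ) (hn : 2 ≤ n) (a : Fin n → ℝ → ℝ) (ha : ∀ j, ContDiff ℝ n (a j))
    (x : ℝ → Fin n → ℝ) (hx : ∀ t, Monotone (x t))
    (h : ∀ t y : ℝ,
      y ^ n + ∑ j : Fin n, (-1 : ℝ) ^ ((j : ℕ) + 1) * a j t * y ^ (n - ((j : ℕ) + 1)) =
        ∏ i, (y - x t i)) (t0 : ℝ) (i : Fin n) :
    ∃ C, 0 ≤ C ∧ ∀ᶠ t in 𝓝[≠] t0, |x t i - x t0 i| ≤ C * |t - t0| := by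
  classical
  have hcont := hyp_cont n a ha x hx h
  set R := Finset.univ.image (x t0) with hR
  set χ : Polynomial ℝ := ∏ ρ ∈ R, (Polynomial.X - Polynomial.C ρ) ^ 2 with hχ
  have hev : ∀ y, χ.eval y = ∏ ρ ∈ R, (y - ρ) ^ 2 := by
    intro y; simp [hχ, Polynomial.eval_prod]
  have hpos : ∀ y, 0 ≤ χ.eval y := by
    intro y; rw [hev]; exact Finset.prod_nonneg fun _ _ => sq_nonneg _
  have hmem : ∀ j, x t0 j ∈ R := fun j => Finset.mem_image_of_mem _ (Finset.mem_univ j)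
  let S : ℝ → ℝ := fun t => ∑ i, χ.eval (x t i)
  have hSs : ContDiff ℝ n S := hyp_power_smooth n a ha x h χ
  have hS2 : ContDiff ℝ (2 : ℕ) S := hSs.of_le (by exact_mod_cast hn)
  have hSpos : ∀ t, 0 ≤ S t := fun t => Finset.sum_nonneg fun _ _ => hpos _
  have hS0 : S t0 = 0 := by
    refine Finset.sum_eq_zero fun j _ => ?_
    rw [hev]
    exact Finset.prod_eq_zero (hmem j) (by simp)
  have hd : deriv S t0 = 0 := by
    apply IsLocalMin.deriv_eq_zero
    refine Eventually.of_forall fun t => ?_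
    simp only [hS0]; exact hSpos t
  have hT := hyp_taylor S 2 hS2 t0 (by
    intro j hj
    interval_cases j
    · simpa using hS0
    · simpa [iteratedDeriv_one] using hd)
  have hB := hyp_bound_of_tendsto S 2 t0 _ hT
  set K := |iteratedDeriv 2 S t0 / (Nat.factorial 2 : ℕ)| + 1 with hK
  have hKpos : 0 < K := by positivity
  set ρ0 := x t0 i with hρ0
  set c := ∏ ρ ∈ R.erase ρ0, (ρ0 - ρ) ^ 2 with hc
  have hcpos : 0 < c := by
    refine Finset.prod_pos fun ρ hρ => ?_
    have : ρ0 - ρ ≠ 0 := sub_ne_zero.2 (Finset.ne_of_mem_erase hρ).symm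
    positivity
  have hxi : Continuous fun t => x t i := (continuous_apply i).comp hcont
  have hQ : Continuous fun t => ∏ ρ ∈ R.erase ρ0, (x t i - ρ) ^ 2 := by fun_prop
  have hQe : ∀ᶠ t in 𝓝[≠] t0, c / 2 < ∏ ρ ∈ R.erase ρ0, (x t i - ρ) ^ 2 := by
    apply eventually_nhdsWithin_of_eventually_nhds
    exact hQ.continuousAt.eventually (lt_mem_nhds (half_lt_self hcpos))
  refine ⟨Real.sqrt (2 * K / c), Real.sqrt_nonneg _, ?_⟩
  filter_upwards [hB, hQe] with t h1 h2
  have h3 : χ.eval (x t i) ≤ S t :=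
    Finset.single_le_sum (f := fun i => χ.eval (x t i)) (fun i _ => hpos _) (Finset.mem_univ i)
  rw [hev, ← Finset.mul_prod_erase _ _ (hmem i)] at h3
  have h4 : S t ≤ K * |t - t0| ^ 2 := (le_abs_self _).trans h1
  have h5 : (x t i - ρ0) ^ 2 * (c / 2) ≤ K * |t - t0| ^ 2 :=
    (mul_le_mul_of_nonneg_left h2.le (sq_nonneg _)).trans (h3.trans h4)
  apply abs_le_of_sq_le_sq _ (by positivity)
  rw [mul_pow, Real.sq_sqrt (by positivity)]
  rw [div_mul_eq_mul_div, le_div_iff₀ hcpos]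
  linarith

lemma hyp_kappa (n : ℕ) (hn : 2 ≤ n) (a : Fin n → ℝ → ℝ) (ha : ∀ j, ContDiff ℝ n (a j))
    (x : ℝ → Fin n → ℝ) (hx : ∀ t, Monotone (x t))
    (h : ∀ t y : ℝ,
      y ^ n + ∑ j : Fin n, (-1 : ℝ) ^ ((j : ℕ) + 1) * a j t * y ^ (n - ((j : ℕ) + 1)) =
        ∏ i, (y - x t i)) (t0 ρ : ℝ) :
    ∃ κ : ℝ → ℝ, ∀ μ, Tendsto (fun t => ∏ i with x t0 i = ρ, (μ - (x t i - ρ) / (t - t0)))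
      (𝓝[≠] t0) (𝓝 (κ μ)) := by
  classical
  suffices H : ∀ μ, ∃ k, Tendsto (fun t => ∏ i with x t0 i = ρ, (μ - (x t i - ρ) / (t - t0)))
      (𝓝[≠] t0) (𝓝 k) by
    choose κ hκ using H
    exact ⟨κ, hκ⟩
  intro μ
  have hcont := hyp_cont n a ha x hx h
  have hxi : ∀ i, Continuous fun t => x t i := fun i => (continuous_apply i).comp hcont
  choose C hC0 hC using hyp_lip n hn a ha x hx h t0
  set G := Finset.univ.filter (fun i => x t0 i = ρ) with hG
  set m := G.card with hm
  have hmn : m ≤ n := by simpa using Finset.card_le_univ G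
  let F : ℝ → ℝ := fun t => (ρ + μ * (t - t0)) ^ n + ∑ j : Fin n, (-1 : ℝ) ^ ((j : ℕ) + 1) * a j t *
    (ρ + μ * (t - t0)) ^ (n - ((j : ℕ) + 1))
  have hF : ContDiff ℝ n F := by
    have h0 : ContDiff ℝ n (fun t : ℝ => ρ + μ * (t - t0)) := by fun_prop
    refine (h0.pow n).add (ContDiff.sum fun j _ => ?_)
    exact (contDiff_const.mul (ha j)).mul (h0.pow _)
  have hFm : ContDiff ℝ m F := hF.of_le (by exact_mod_cast hmn)
  let Q : ℝ → ℝ := fun t => ∏ i ∈ Gᶜ, (ρ + μ * (t - t0) - x t i)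
  have hQc : Continuous Q := by
    refine continuous_finsetProd _ fun i _ => ?_
    have := hxi i
    fun_prop
  have hQ0 : Q t0 ≠ 0 := by
    refine Finset.prod_ne_zero_iff.2 fun i hi => ?_
    simp only [hG, Finset.mem_compl, Finset.mem_filter, Finset.mem_univ, true_and] at hi
    simp only [sub_self, mul_zero, add_zero]
    exact sub_ne_zero.2 (Ne.symm hi)
  have hFQ : ∀ t, F t = (∏ i ∈ G, (ρ + μ * (t - t0) - x t i)) * Q t := by
    intro t
    rw [Finset.prod_mul_prod_compl]
    exact h t _
  have hGm : ∀ t, t ≠ t0 → ∏ i ∈ G, (ρ + μ * (t - t0) - x t i) =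
      (t - t0) ^ m * ∏ i ∈ G, (μ - (x t i - ρ) / (t - t0)) := by
    intro t ht
    rw [hm, ← Finset.prod_const, ← Finset.prod_mul_distrib]
    refine Finset.prod_congr rfl fun i _ => ?_
    have := sub_ne_zero.2 ht
    field_simp
    ring
  have hbd : ∀ᶠ t in 𝓝[≠] t0, |F t| ≤ ((∏ i ∈ G, (|μ| + C i)) * (|Q t0| + 1)) * |t - t0| ^ m := by
    have hQe : ∀ᶠ t in 𝓝[≠] t0, |Q t| < |Q t0| + 1 := by
      apply eventually_nhdsWithin_of_eventually_nhds
      exact hQc.abs.continuousAt.eventually (gt_mem_nhds (lt_add_one _))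
    filter_upwards [hQe, eventually_all.2 hC] with t h1 h2
    rw [hFQ, abs_mul, Finset.abs_prod]
    have h3 : ∏ i ∈ G, |ρ + μ * (t - t0) - x t i| ≤ (∏ i ∈ G, (|μ| + C i)) * |t - t0| ^ m := by
      rw [hm, ← Finset.prod_const, ← Finset.prod_mul_distrib]
      refine Finset.prod_le_prod (fun _ _ => abs_nonneg _) fun i hi => ?_
      have hi2 : x t0 i = ρ := by simpa [hG] using hi
      have h4 := h2 i
      rw [hi2] at h4
      calc |ρ + μ * (t - t0) - x t i| = |μ * (t - t0) - (x t i - ρ)| := by ring_nf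
        _ ≤ |μ * (t - t0)| + |x t i - ρ| := abs_sub _ _
        _ ≤ (|μ| + C i) * |t - t0| := by rw [abs_mul]; linarith
    have hnn : 0 ≤ (∏ i ∈ G, (|μ| + C i)) * |t - t0| ^ m := by
      refine mul_nonneg (Finset.prod_nonneg fun i _ => ?_) (by positivity)
      have := hC0 i
      positivity
    calc _ ≤ ((∏ i ∈ G, (|μ| + C i)) * |t - t0| ^ m) * (|Q t0| + 1) :=
          mul_le_mul h3 h1.le (abs_nonneg _) hnn
      _ = _ := by ring
  have hT := hyp_taylor F m hFm t0 (hyp_vanish F m hFm t0 _ hbd)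
  have hQt : Tendsto Q (𝓝[≠] t0) (𝓝 (Q t0)) := hQc.continuousAt.mono_left nhdsWithin_le_nhds
  refine ⟨_, (hT.div hQt hQ0).congr' ?_⟩
  filter_upwards [hQt.eventually_ne hQ0, self_mem_nhdsWithin] with t h1 h2
  have h3 : (t - t0) ^ m ≠ 0 := pow_ne_zero _ (sub_ne_zero.2 h2)
  simp only [Pi.div_apply]
  rw [hFQ, hGm t h2]
  field_simp

lemma hyp_oneside (n : ℕ) (hn : 2 ≤ n) (a : Fin n → ℝ → ℝ) (ha : ∀ j, ContDiff ℝ n (a j))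
    (x : ℝ → Fin n → ℝ) (hx : ∀ t, Monotone (x t))
    (h : ∀ t y : ℝ,
      y ^ n + ∑ j : Fin n, (-1 : ℝ) ^ ((j : ℕ) + 1) * a j t * y ^ (n - ((j : ℕ) + 1)) =
        ∏ i, (y - x t i)) (t0 : ℝ) (i : Fin n) (s : ℝ) (hs : s = 1 ∨ s = -1)
    (l : Filter ℝ) [l.NeBot] (hl : l ≤ 𝓝[≠] t0) (hls : ∀ᶠ t in l, 0 < s * (t - t0)) :
    ∃ r, Tendsto (fun t => (x t i - x t0 i) / (t - t0)) l (𝓝 r) := by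
  classical
  have hss : s * s = 1 := by rcases hs with rfl | rfl <;> norm_num
  set ρ := x t0 i with hρ
  obtain ⟨κ, hκ⟩ := hyp_kappa n hn a ha x hx h t0 ρ
  choose C hC0 hC using hyp_lip n hn a ha x hx h t0
  set G := Finset.univ.filter (fun i => x t0 i = ρ) with hG
  let e := G.orderEmbOfFin rfl
  have heG : ∀ k, x t0 (e k) = ρ := by
    intro k
    have := G.orderEmbOfFin_mem rfl k
    exact (Finset.mem_filter.1 this).2
  let Y : ℝ → Fin G.card → ℝ := fun t k => s * ((x t (e k) - ρ) / (t - t0))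
  have hb : ∀ᶠ t in l, ∀ k, |Y t k| ≤ ∑ j, C j := by
    filter_upwards [hl (eventually_all.2 hC), hls] with t h1 h2 k
    have ht : t - t0 ≠ 0 := by rintro h3; simp [h3] at h2
    have h3 := h1 (e k)
    rw [heG] at h3
    have h4 : |s| = 1 := by rcases hs with rfl | rfl <;> norm_num
    have h5 : |Y t k| ≤ C (e k) := by
      simp only [Y]
      rw [abs_mul, h4, one_mul, abs_div, div_le_iff₀ (abs_pos.2 ht)]
      exact h3
    exact h5.trans (Finset.single_le_sum (fun j _ => hC0 j) (Finset.mem_univ _))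
  have hmono : ∀ᶠ t in l, Monotone (Y t) := by
    filter_upwards [hls] with t h2 k k' hkk
    have ht : t - t0 ≠ 0 := by rintro h3; simp [h3] at h2
    have e1 : ∀ k, Y t k = (x t (e k) - ρ) / (s * (t - t0)) := by
      intro k
      have hs0 : s ≠ 0 := by rintro rfl; simp at hss
      simp only [Y]
      field_simp
      rw [sq, hss, one_mul]
    rw [e1, e1]
    have := hx t (e.monotone hkk)
    gcongr
  obtain ⟨z, hz, -, -⟩ := hyp_conv l Y _ hb hmono (fun μ => s ^ G.card * κ (s * μ)) (fun μ => by
    refine (((hκ (s * μ)).mono_left hl).const_mul (s ^ G.card)).congr fun t => ?_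
    have h1 : ∏ i ∈ G, (s * μ - (x t i - ρ) / (t - t0)) =
        ∏ k, (s * μ - (x t (e k) - ρ) / (t - t0)) := by
      conv_lhs => rw [← G.map_orderEmbOfFin_univ rfl]
      rw [Finset.prod_map]
      rfl
    rw [h1]
    have h2 : s ^ G.card = ∏ k : Fin G.card, s := by simp
    rw [h2, ← Finset.prod_mul_distrib]
    refine Finset.prod_congr rfl fun k _ => ?_
    simp only [Y]
    linear_combination μ * hss)
  have hi : i ∈ G := by simp [hG, hρ]
  obtain ⟨k, hk⟩ : ∃ k, e k = i := by
    have : i ∈ Set.range e := by rw [G.range_orderEmbOfFin rfl]; exact hi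
    exact this
  have h1 := ((tendsto_pi_nhds.1 hz) k).const_mul s
  refine ⟨_, h1.congr fun t => ?_⟩
  simp only [Y, hk]
  rw [← mul_assoc, hss, one_mul]

lemma hyp_main (n : ℕ) (hn : 2 ≤ n) (a : Fin n → ℝ → ℝ) (ha : ∀ j, ContDiff ℝ n (a j))
    (x : ℝ → Fin n → ℝ) (hx : ∀ t, Monotone (x t))
    (h : ∀ t y : ℝ,
      y ^ n + ∑ j : Fin n, (-1 : ℝ) ^ ((j : ℕ) + 1) * a j t * y ^ (n - ((j : ℕ) + 1)) =
        ∏ i, (y - x t i)) :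
    ∃ l r : ℝ → Fin n → ℝ,
      (∀ t i, HasDerivWithinAt (fun t => x t i) (l t i) (Iio t) t) ∧
      (∀ t i, HasDerivWithinAt (fun t => x t i) (r t i) (Ioi t) t) ∧
      ∀ t, ∃ τ : Equiv.Perm (Fin n), ∀ i, x t (τ i) = x t i ∧ r t (τ i) = l t i := by
  classical
  have hleft : ∀ t0 : ℝ, 𝓝[<] t0 ≤ 𝓝[≠] t0 := fun t0 => nhdsWithin_mono _ fun t (ht : t < t0) => ht.ne
  have hright : ∀ t0 : ℝ, 𝓝[>] t0 ≤ 𝓝[≠] t0 := fun t0 => nhdsWithin_mono _ fun t (ht : t0 < t) => ht.ne'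
  have hL : ∀ t0 i, ∃ r, Tendsto (fun t => (x t i - x t0 i) / (t - t0)) (𝓝[<] t0) (𝓝 r) := by
    intro t0 i
    refine hyp_oneside n hn a ha x hx h t0 i (-1) (Or.inr rfl) _ (hleft t0) ?_
    filter_upwards [self_mem_nhdsWithin] with t (ht : t < t0)
    linarith
  have hR : ∀ t0 i, ∃ r, Tendsto (fun t => (x t i - x t0 i) / (t - t0)) (𝓝[>] t0) (𝓝 r) := by
    intro t0 i
    refine hyp_oneside n hn a ha x hx h t0 i 1 (Or.inl rfl) _ (hright t0) ?_
    filter_upwards [self_mem_nhdsWithin] with t (ht : t0 < t)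
    linarith
  choose l hl using hL
  choose r hr using hR
  refine ⟨l, r, ?_, ?_, ?_⟩
  · intro t i
    rw [hasDerivWithinAt_iff_tendsto_slope' (by simp)]
    refine (hl t i).congr fun u => ?_
    rw [slope_def_field]
  · intro t i
    rw [hasDerivWithinAt_iff_tendsto_slope' (by simp)]
    refine (hr t i).congr fun u => ?_
    rw [slope_def_field]
  · intro t0
    have hρ : ∀ ρ : ℝ, ∃ σ : Equiv.Perm {i // x t0 i = ρ}, ∀ i, r t0 (σ i) = l t0 i := by
      intro ρ
      obtain ⟨κ, hκ⟩ := hyp_kappa n hn a ha x hx h t0 ρ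
      refine hyp_perm_of_ms (fun i : {i // x t0 i = ρ} => r t0 i) (fun i => l t0 i) ?_
      apply hyp_ms
      intro μ
      have key : ∀ (f : Filter ℝ) [f.NeBot] (d : Fin n → ℝ), f ≤ 𝓝[≠] t0 →
          (∀ i, Tendsto (fun t => (x t i - x t0 i) / (t - t0)) f (𝓝 (d i))) →
          ∏ i : {i // x t0 i = ρ}, (μ - d i) = κ μ := by
        intro f _ d hf hd
        rw [← Finset.prod_subtype (Finset.univ.filter fun i => x t0 i = ρ) (by simp)
          (fun i => μ - d i)]
        refine tendsto_nhds_unique (tendsto_finsetProd _ fun i hi => ?_) ((hκ μ).mono_left hf)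
        refine tendsto_const_nhds.sub ?_
        have hi2 := (Finset.mem_filter.1 hi).2
        rw [← hi2]
        exact hd i
      rw [key _ _ (hright t0) (hr t0), key _ _ (hleft t0) (hl t0)]
    choose σ hσ using hρ
    refine ⟨Equiv.ofFiberEquiv (f := x t0) (g := x t0) σ, fun i =>
      ⟨Equiv.ofFiberEquiv_map _ i, ?_⟩⟩
    exact hσ (x t0 i) ⟨i, rfl⟩

end Helpers

/-- (Colombini–Orrú–Pernazza) If the coefficients `a j` of a curve of monic hyperbolic
polynomials are of class `C^n`, then the roots can be parameterized by `C^1`-functions. -/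
theorem roots_C1 (n : ℕ) (hn : 1 ≤ n) (a : Fin n → ℝ → ℝ)
    (ha : ∀ j, ContDiff ℝ n (a j))
    (hhyp : ∀ t : ℝ, ∀ z : ℂ,
      z ^ n + ∑ j : Fin n, (-1 : ℂ) ^ ((j : ℕ) + 1) * (a j t : ℂ) * z ^ (n - ((j : ℕ) + 1)) = 0 →
        z.im = 0) :
    ∃ lam : Fin n → ℝ → ℝ,
      (∀ j, ContDiff ℝ 1 (lam j)) ∧
      (∀ t x : ℝ,
        x ^ n + ∑ j : Fin n, (-1 : ℝ) ^ ((j : ℕ) + 1) * a j t * x ^ (n - ((j : ℕ) + 1)) =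
          ∏ j : Fin n, (x - lam j t)) := by
  classical
  have hP : ContDiff ℝ n (fun q : ℝ × ℝ => q.2 ^ n +
      ∑ j : Fin n, (-1 : ℝ) ^ ((j : ℕ) + 1) * a j q.1 * q.2 ^ (n - ((j : ℕ) + 1))) := by
    refine (contDiff_snd.pow n).add (ContDiff.sum fun j _ => ?_)
    exact (contDiff_const.mul ((ha j).comp contDiff_fst)).mul (contDiff_snd.pow _)
  rcases Nat.lt_or_ge n 2 with h2 | h2
  · obtain rfl : n = 1 := by omega
    refine ⟨a, fun j => by exact_mod_cast ha j, fun t x => ?_⟩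
    simp
    ring
  · choose x hx h using fun t => hyp_sorted_roots n (fun j => a j t) (hhyp t)
    obtain ⟨l, r, hl, hr, hm⟩ := hyp_main n h2 a ha x hx h
    obtain ⟨σ, hσ⟩ := hyp_sel_diff n (fun i t => x t i) l r hl hr hm
    have hprod : ∀ t y : ℝ,
        y ^ n + ∑ j : Fin n, (-1 : ℝ) ^ ((j : ℕ) + 1) * a j t * y ^ (n - ((j : ℕ) + 1)) =
          ∏ j : Fin n, (y - x t (σ t j)) := by
      intro t y
      rw [h t y, Equiv.prod_comp (σ t) (fun j => y - x t j)]
    refine ⟨fun i t => x t (σ t i), fun i => ?_, hprod⟩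
    exact hyp_C1 n (fun t y => y ^ n +
      ∑ j : Fin n, (-1 : ℝ) ^ ((j : ℕ) + 1) * a j t * y ^ (n - ((j : ℕ) + 1))) hP
      (fun i t => x t (σ t i)) hσ hprod i
end
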